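/- Let α,β>−1, let M,N≥0 be integers, let L,γ₁,γ₂∈{0,1}, let W≥1 be real and 1≤p≤∞, and assume W/p+γ₁+γ₂−L−N−M ≥ 1 (with the convention W/p=0 when p=∞). Then there exists a constant C such that for all θ,φ∈(0,π) with θ≠φ: (sin θ)^{γ₁}(sin φ)^{γ₂}·‖∂_φ^L ∂_θ^N ∂_t^M H_t^{α+1,β+1}(θ,φ)‖_{L^p((0,∞),t^{W−1}dt)} ≤ C/(|θ−φ|·μ⁺_{α,β}(B(θ,|θ−φ|))). -/

import Mathlib

open MeasureTheory Real Set
open scoped ENNReal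

noncomputable section

/-- The classical Jacobi polynomial `P_n^{α,β}`. -/
def jacobiP (α β : ℝ) (n : ℕ) (x : ℝ) : ℝ :=
  ∑ m ∈ Finset.range (n + 1),
    (Real.Gamma (α + n + 1) * Real.Gamma (α + β + n + m + 1)) /
      ((m.factorial : ℝ) * ((n - m).factorial : ℝ) * Real.Gamma (α + β + n + 1) *
        Real.Gamma (α + m + 1)) * ((x - 1) / 2) ^ m

/-- `Ψ^{α,β}(θ) = |sin(θ/2)|^{α+1/2} (cos(θ/2))^{β+1/2}`. -/
def jPsi (α β θ : ℝ) : ℝ := |Real.sin (θ / 2)| ^ (α + 1 / 2) * Real.cos (θ / 2) ^ (β + 1 / 2)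

/-- The measure `μ_{α,β}` on `(−π, π)`, with density `(Ψ^{α,β})²` w.r.t. Lebesgue measure. -/
def jacobiMeasure (α β : ℝ) : Measure ℝ :=
  (volume.restrict (Ioo (-π) π)).withDensity fun θ => ENNReal.ofReal (jPsi α β θ ^ 2)

/-- The restriction `μ⁺_{α,β}` of `μ_{α,β}` to `(0, π)`. -/
def jacobiMeasurePlus (α β : ℝ) : Measure ℝ := (jacobiMeasure α β).restrict (Ioo 0 π)

/-- The normalizing constant `c_n^{α,β}` making `𝒫_n^{α,β}` have unit `L²(μ⁺)` norm. -/
def cJ (α β : ℝ) (n : ℕ) : ℝ :=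
  (∫ θ, jacobiP α β n (Real.cos θ) ^ 2 ∂(jacobiMeasurePlus α β)) ^ (-(1 / 2) : ℝ)

/-- The normalized trigonometric Jacobi polynomial `𝒫_n^{α,β}(θ)`. -/
def trigP (α β : ℝ) (n : ℕ) (θ : ℝ) : ℝ := cJ α β n * jacobiP α β n (Real.cos θ)

/-- The eigenvalue `λ_n^{α,β} = (n + (α+β+1)/2)²`. -/
def jLam (α β : ℝ) (n : ℕ) : ℝ := ((n : ℝ) + (α + β + 1) / 2) ^ 2

/-- The symmetrized system `Φ_n^{α,β}`. -/
def symPhi (α β : ℝ) (n : ℕ) (θ : ℝ) : ℝ :=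
  if Even n then (Real.sqrt 2)⁻¹ * trigP α β (n / 2) θ
  else (Real.sqrt 2)⁻¹ * (Real.sin θ / 2) * trigP (α + 1) (β + 1) ((n - 1) / 2) θ

/-- The Jacobi functions `φ_n^{α,β} = Ψ^{α,β} 𝒫_n^{α,β}`. -/
def phiFun (α β : ℝ) (n : ℕ) (θ : ℝ) : ℝ := jPsi α β θ * trigP α β n θ

/-- The symmetrized Jacobi function system `Θ_n^{α,β}`. -/
def jTheta (α β : ℝ) (n : ℕ) (θ : ℝ) : ℝ :=
  if Even n then (Real.sqrt 2)⁻¹ * phiFun α β (n / 2) θ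
  else (Real.sqrt 2)⁻¹ * Real.sign θ * phiFun (α + 1) (β + 1) ((n - 1) / 2) θ

/-- The symmetrized Jacobi–Poisson semigroup `ℍ_t^{α,β}f(θ)` (polynomial setting). -/
def symH (α β : ℝ) (f : ℝ → ℝ) (t θ : ℝ) : ℝ :=
  ∑' n : ℕ, Real.exp (-t * Real.sqrt (jLam α β ((n + 1) / 2))) *
    (∫ φ, f φ * symPhi α β n φ ∂(jacobiMeasure α β)) * symPhi α β n θ

/-- The symmetrized Jacobi–Poisson semigroup `H̄_t^{α,β}f(θ)` (function setting). -/
def symHbar (α β : ℝ) (f : ℝ → ℝ) (t θ : ℝ) : ℝ :=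
  ∑' n : ℕ, Real.exp (-t * Real.sqrt (jLam α β ((n + 1) / 2))) *
    (∫ φ in Ioo (-π) π, f φ * jTheta α β n φ) * jTheta α β n θ

/-- The non-symmetrized Jacobi–Poisson semigroup `ℋ_t^{α,β}f(θ)` (polynomial setting). -/
def jacH (α β : ℝ) (f : ℝ → ℝ) (t θ : ℝ) : ℝ :=
  ∑' n : ℕ, Real.exp (-t * Real.sqrt (jLam α β n)) *
    (∫ φ, f φ * trigP α β n φ ∂(jacobiMeasurePlus α β)) * trigP α β n θ

/-- The non-symmetrized Jacobi–Poisson semigroup `𝓗̄_t^{α,β}f(θ)` (function setting). -/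
def jacHbar (α β : ℝ) (f : ℝ → ℝ) (t θ : ℝ) : ℝ :=
  ∑' n : ℕ, Real.exp (-t * Real.sqrt (jLam α β n)) *
    (∫ φ in Ioo 0 π, f φ * phiFun α β n φ) * phiFun α β n θ

/-- The symmetrized derivative `𝔻_{α,β}`. -/
def symD (α β : ℝ) (f : ℝ → ℝ) : ℝ → ℝ := fun θ =>
  deriv f θ + (α - β + (α + β + 1) * Real.cos θ) / Real.sin θ * ((f θ - f (-θ)) / 2)

/-- The symmetrized derivative `D̄_{α,β}` (function setting). -/
def symDbar (α β : ℝ) (f : ℝ → ℝ) : ℝ → ℝ := fun θ =>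
  deriv f θ -
    ((2 * α + 1) / 4 * (Real.cos (θ / 2) / Real.sin (θ / 2)) -
      (2 * β + 1) / 4 * Real.tan (θ / 2)) * f (-θ)

/-- The derivative `D_{α,β}` (non-symmetrized function setting). -/
def jacD (α β : ℝ) (f : ℝ → ℝ) : ℝ → ℝ := fun θ =>
  deriv f θ - (2 * α + 1) / 4 * (Real.cos (θ / 2) / Real.sin (θ / 2)) * f θ +
    (2 * β + 1) / 4 * Real.tan (θ / 2) * f θ

/-- `δ*_{α,β} = −d/dθ − (α+1/2)cot(θ/2) + (β+1/2)tan(θ/2)`. -/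
def delStar (α β : ℝ) (f : ℝ → ℝ) : ℝ → ℝ := fun θ =>
  -deriv f θ - (α + 1 / 2) * (Real.cos (θ / 2) / Real.sin (θ / 2)) * f θ +
    (β + 1 / 2) * Real.tan (θ / 2) * f θ

/-- `δ_N^even`: `N` alternating factors, rightmost (first applied) one being `δ = d/dθ`. -/
def deltaEven (α β : ℝ) : ℕ → (ℝ → ℝ) → ℝ → ℝ
  | 0 => fun f => f
  | N + 1 => fun f => (if N % 2 = 0 then deriv else delStar α β) (deltaEven α β N f)

/-- `δ_N^odd`: `N` alternating factors, rightmost (first applied) one being `δ*_{α,β}`. -/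
def deltaOdd (α β : ℝ) : ℕ → (ℝ → ℝ) → ℝ → ℝ
  | 0 => fun f => f
  | N + 1 => fun f => (if N % 2 = 0 then delStar α β else deriv) (deltaOdd α β N f)

/-- The Jacobi–Poisson kernel `H_t^{α,β}(θ,φ)` (even part of the symmetrized kernel). -/
def jHker (α β t θ φ : ℝ) : ℝ :=
  (1 / 2) * ∑' n : ℕ, Real.exp (-t * Real.sqrt (jLam α β n)) * trigP α β n θ * trigP α β n φ

/-- The kernel `H̃_t^{α,β}(θ,φ)` (odd part of the symmetrized kernel). -/
def jHtil (α β t θ φ : ℝ) : ℝ :=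
  (1 / 8) * Real.sin θ * Real.sin φ *
    ∑' n : ℕ, Real.exp (-t * Real.sqrt (jLam α β (n + 1))) *
      trigP (α + 1) (β + 1) n θ * trigP (α + 1) (β + 1) n φ

/-- `μ⁺_{α,β}(B(θ,r))` where `B(θ,r) = (θ−r, θ+r) ∩ (0,π)`. -/
def ballMeasure (α β θ r : ℝ) : ℝ≥0∞ := jacobiMeasurePlus α β (Ioo (θ - r) (θ + r))

/-- The Muckenhoupt class `A_p^{α,β}` (`1 < p < ∞`) on `(−π,π)` w.r.t. `μ_{α,β}`. -/
def IsApWeight (α β p : ℝ) (w : ℝ → ℝ) : Prop :=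
  (∀ θ, 0 ≤ w θ) ∧
    ∃ C : ℝ, ∀ a b : ℝ, -π ≤ a → a ≤ b → b ≤ π →
      (∫⁻ θ in Ioo a b, ENNReal.ofReal (w θ) ∂(jacobiMeasure α β)) *
          (∫⁻ θ in Ioo a b, ENNReal.ofReal (w θ ^ (-1 / (p - 1))) ∂(jacobiMeasure α β)) ^
            (p - 1) ≤
        ENNReal.ofReal C * jacobiMeasure α β (Ioo a b) ^ p

/-- The Muckenhoupt class `A_1^{α,β}` on `(−π,π)` w.r.t. `μ_{α,β}`. -/
def IsA1Weight (α β : ℝ) (w : ℝ → ℝ) : Prop :=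
  (∀ θ, 0 ≤ w θ) ∧
    ∃ C : ℝ, ∀ a b : ℝ, -π ≤ a → a ≤ b → b ≤ π →
      ∫⁻ θ in Ioo a b, ENNReal.ofReal (w θ) ∂(jacobiMeasure α β) ≤
        ENNReal.ofReal C *
          essInf (fun θ => ENNReal.ofReal (w θ)) ((jacobiMeasure α β).restrict (Ioo a b)) *
          jacobiMeasure α β (Ioo a b)

/-- The Muckenhoupt class `(A_p^{α,β})⁺` (`1 < p < ∞`) on `(0,π)` w.r.t. `μ⁺_{α,β}`. -/
def IsApWeightPlus (α β p : ℝ) (w : ℝ → ℝ) : Prop :=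
  (∀ θ, 0 ≤ w θ) ∧
    ∃ C : ℝ, ∀ a b : ℝ, 0 ≤ a → a ≤ b → b ≤ π →
      (∫⁻ θ in Ioo a b, ENNReal.ofReal (w θ) ∂(jacobiMeasurePlus α β)) *
          (∫⁻ θ in Ioo a b, ENNReal.ofReal (w θ ^ (-1 / (p - 1))) ∂(jacobiMeasurePlus α β)) ^
            (p - 1) ≤
        ENNReal.ofReal C * jacobiMeasurePlus α β (Ioo a b) ^ p

/-- The Muckenhoupt class `(A_1^{α,β})⁺` on `(0,π)` w.r.t. `μ⁺_{α,β}`. -/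
def IsA1WeightPlus (α β : ℝ) (w : ℝ → ℝ) : Prop :=
  (∀ θ, 0 ≤ w θ) ∧
    ∃ C : ℝ, ∀ a b : ℝ, 0 ≤ a → a ≤ b → b ≤ π →
      ∫⁻ θ in Ioo a b, ENNReal.ofReal (w θ) ∂(jacobiMeasurePlus α β) ≤
        ENNReal.ofReal C *
          essInf (fun θ => ENNReal.ofReal (w θ)) ((jacobiMeasurePlus α β).restrict (Ioo a b)) *
          jacobiMeasurePlus α β (Ioo a b)

/-- The double power weight `w_{r,s}(θ) = |sin(θ/2)|^r (cos(θ/2))^s`. -/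
def wrs (r s θ : ℝ) : ℝ := |Real.sin (θ / 2)| ^ r * Real.cos (θ / 2) ^ s

/-!
Bateman's expansion writes the homogeneous parts of a double power series with positive coefficients
in `(sin (θ/2) sin (φ/2))²` and `(cos (θ/2) cos (φ/2))²` as combinations of products
`𝒫_n(θ) 𝒫_n(φ)`. Expanding `exp (-t √λ_n)` in inverse powers of `cosh (t/2)` and exchanging the
order of summation, one finds that `H_t^{a,b}(θ, φ)` is `sinh (t/2)` times that double series, its
terms divided by powers of `cosh (t/2)`. The series extends holomorphically to complex `(t, θ, φ)`,
where for `a, b > 0` positivity of the coefficients bounds it by an elementary function. Cauchy's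
estimates on polydiscs of radius comparable to `ρ = min (t + |θ - φ|) 1` then give

  `|∂_φ^L ∂_θ^N ∂_t^M H_t^{a,b}| ≲ e^{-ct} ρ^{-(M+N+L+1)} (ρ + θ)^{-(2a+1)} (ρ + π - θ)^{-(2b+1)}`.

With `a = α + 1`, `b = β + 1`, the factors `(sin θ)^γ₁ (sin φ)^γ₂` absorb the surplus powers, the
remaining ones are bounded by `(|θ - φ| μ⁺(B(θ, |θ - φ|)))⁻¹ ρ^{-W/p} (|θ - φ| / ρ)^e` for some
`e > 0`, and the last factor makes the norm in `t` finite uniformly in `|θ - φ|`.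
-/

namespace JacobiPoisson

/-! ### Jacobi polynomials in the variable `sin² (θ / 2)` -/

section Bateman

open Polynomial
open Finset (HasAntidiagonal)

variable {a b : ℝ}

/-- The Jacobi polynomial in the variable `X = sin² (θ / 2)`, scaled to be
`n! Γ(n + a + b + 1) / Γ(n + a + 1)` times `P_n^{a,b}(1 - 2X)`. -/
def jacobiPoly (a b : ℝ) (n : ℕ) : ℝ[X] :=
  ∑ m ∈ Finset.range (n + 1), monomial m
    ((-1) ^ m * (n.choose m : ℝ) * Real.Gamma (n + m + a + b + 1) / Real.Gamma (m + a + 1))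

/-- The Jacobi differential operator `X (1 - X) ∂² + (a + 1 - (a + b + 2) X) ∂`, whose eigenvectors
are the Jacobi polynomials. -/
def jacobiOp (a b : ℝ) : ℝ[X] →ₗ[ℝ] ℝ[X] :=
  LinearMap.mulLeft ℝ (X * (1 - X)) ∘ₗ derivative ∘ₗ derivative +
    LinearMap.mulLeft ℝ (C (a + 1) - C (a + b + 2) * X) ∘ₗ derivative

lemma jacobiOp_apply (a b : ℝ) (f : ℝ[X]) :
    jacobiOp a b f = X * (1 - X) * derivative (derivative f) +
      (C (a + 1) - C (a + b + 2) * X) * derivative f :=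
  rfl

lemma coeff_jacobiPoly (a b : ℝ) (n m : ℕ) :
    (jacobiPoly a b n).coeff m =
      (-1) ^ m * (n.choose m : ℝ) * Real.Gamma (n + m + a + b + 1) / Real.Gamma (m + a + 1) := by
  simp only [jacobiPoly, finsetSum_coeff, coeff_monomial, Finset.sum_ite_eq']
  split_ifs with hm
  · rfl
  · simp [Nat.choose_eq_zero_of_lt (by simpa using hm : n < m)]

lemma coeff_jacobiOp (a b : ℝ) (f : ℝ[X]) (m : ℕ) :
    (jacobiOp a b f).coeff m =
      (m + 1) * (m + 1 + a) * f.coeff (m + 1) - m * (m + a + b + 1) * f.coeff m := by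
  have expand : jacobiOp a b f = X * derivative (derivative f) -
      X * (X * derivative (derivative f)) + C (a + 1) * derivative f -
        C (a + b + 2) * (X * derivative f) := by
    rw [jacobiOp_apply]; ring
  simp only [expand, coeff_add, coeff_sub, coeff_C_mul]
  rcases m with _ | _ | m
  · simp only [mul_coeff_zero, coeff_X_zero, coeff_derivative]
    push_cast; ring
  · simp only [coeff_X_mul, mul_coeff_zero, coeff_X_zero, coeff_derivative]
    push_cast; ring
  · simp only [coeff_X_mul, coeff_derivative]
    push_cast; ring

lemma jacobiOp_mul (a b : ℝ) (f g : ℝ[X]) :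
    jacobiOp a b (f * g) = f * jacobiOp a b g + g * jacobiOp a b f +
      2 * (X * derivative f) * ((1 - X) * derivative g) := by
  simp only [jacobiOp_apply, derivative_mul, derivative_add]; ring

lemma X_mul_derivative_X_pow (i : ℕ) : (X : ℝ[X]) * derivative (X ^ i) = C (i : ℝ) * X ^ i := by
  rcases i with _ | i
  · simp
  · rw [derivative_X_pow, Nat.add_sub_cancel, pow_succ]; ring

lemma derivative_one_sub_X_pow (j : ℕ) :
    derivative ((1 - X : ℝ[X]) ^ j) = -C (j : ℝ) * (1 - X) ^ (j - 1) := by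
  simp [derivative_pow]

lemma one_sub_X_mul_derivative_pow (j : ℕ) :
    (1 - X : ℝ[X]) * derivative ((1 - X) ^ j) = -C (j : ℝ) * (1 - X) ^ j := by
  rw [derivative_one_sub_X_pow]
  rcases j with _ | j
  · simp
  · rw [Nat.add_sub_cancel, pow_succ]; ring

lemma jacobiOp_X_pow (a b : ℝ) (i : ℕ) :
    jacobiOp a b (X ^ i) =
      -C ((i : ℝ) * (i + a + b + 1)) * X ^ i + C ((i : ℝ) * (i + a)) * X ^ (i - 1) := by
  have C_two : (C (2 : ℝ)) = (2 : ℝ[X]) := rfl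
  rw [jacobiOp_apply]
  rcases i with _ | _ | i
  · simp
  all_goals
    simp only [derivative_X_pow, Nat.add_sub_cancel, Nat.cast_add, Nat.cast_one,
      C_mul, C_add, C_1, C_two]
    simp
    ring

lemma jacobiOp_one_sub_X_pow (a b : ℝ) (j : ℕ) :
    jacobiOp a b ((1 - X) ^ j) =
      -C ((j : ℝ) * (j + a + b + 1)) * (1 - X) ^ j + C ((j : ℝ) * (j + b)) * (1 - X) ^ (j - 1) := by
  have C_two : (C (2 : ℝ)) = (2 : ℝ[X]) := rfl
  rw [jacobiOp_apply, derivative_one_sub_X_pow, ← C_neg, derivative_C_mul, derivative_one_sub_X_pow]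
  rcases j with _ | _ | j
  · simp
  all_goals simp [C_two]; ring

lemma jacobiOp_X_pow_mul_one_sub_X_pow (a b : ℝ) (i j : ℕ) :
    jacobiOp a b (X ^ i * (1 - X) ^ j) =
      -C (((i + j : ℕ) : ℝ) * ((i + j : ℕ) + a + b + 1)) * (X ^ i * (1 - X) ^ j) +
        C ((i : ℝ) * (i + a)) * (X ^ (i - 1) * (1 - X) ^ j) +
        C ((j : ℝ) * (j + b)) * (X ^ i * (1 - X) ^ (j - 1)) := by
  rw [jacobiOp_mul, jacobiOp_X_pow, jacobiOp_one_sub_X_pow, X_mul_derivative_X_pow,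
    one_sub_X_mul_derivative_pow]
  simp only [C_mul, C_add, Nat.cast_add, C_1]
  ring

lemma coeff_jacobiPoly_succ (ha : 0 < a) (hb : 0 < b) (n m : ℕ) :
    ((m : ℝ) + 1) * (m + 1 + a) * (jacobiPoly a b n).coeff (m + 1) =
      ((m : ℝ) - n) * (m + n + a + b + 1) * (jacobiPoly a b n).coeff m := by
  have choose_succ : ((n.choose (m + 1) : ℕ) : ℝ) * (m + 1) = n.choose m * ((n : ℝ) - m) := by
    rcases le_or_gt m n with h | h
    · rw [← Nat.cast_sub h]
      exact_mod_cast Nat.choose_succ_right_eq n m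
    · simp [Nat.choose_eq_zero_of_lt h, Nat.choose_eq_zero_of_lt (h.trans m.lt_succ_self)]
  have := (Real.Gamma_pos_of_pos (by positivity : 0 < (m : ℝ) + a + 1)).ne'
  have hm : (m : ℝ) + a + 1 ≠ 0 := by positivity
  rw [coeff_jacobiPoly, coeff_jacobiPoly,
    show ((m + 1 : ℕ) : ℝ) + a + 1 = (m + a + 1) + 1 by push_cast; ring, Real.Gamma_add_one hm,
    show (n : ℝ) + ((m + 1 : ℕ) : ℝ) + a + b + 1 = (n + m + a + b + 1) + 1 by push_cast; ring,
    Real.Gamma_add_one (by positivity : (n : ℝ) + m + a + b + 1 ≠ 0), pow_succ]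
  field_simp
  linear_combination (-((m : ℝ) + a + 1) * (n + m + a + b + 1)) * choose_succ

lemma jacobiOp_jacobiPoly (ha : 0 < a) (hb : 0 < b) (n : ℕ) :
    jacobiOp a b (jacobiPoly a b n) = -((n : ℝ) * (n + a + b + 1)) • jacobiPoly a b n := by
  ext m
  rw [coeff_jacobiOp, coeff_jacobiPoly_succ ha hb, coeff_smul, smul_eq_mul]
  ring

lemma coeff_zero_jacobiPoly_pos (ha : 0 < a) (hb : 0 < b) (n : ℕ) :
    0 < (jacobiPoly a b n).coeff 0 := by
  have := Real.Gamma_pos_of_pos (by positivity : 0 < ((0 : ℕ) : ℝ) + a + 1)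
  have := Real.Gamma_pos_of_pos (by positivity : 0 < (n : ℝ) + (0 : ℕ) + a + b + 1)
  rw [coeff_jacobiPoly, Nat.choose_zero_right]
  positivity

lemma leadingCoeff_jacobiPoly_ne_zero (ha : 0 < a) (hb : 0 < b) (n : ℕ) :
    (jacobiPoly a b n).coeff n ≠ 0 := by
  have := (Real.Gamma_pos_of_pos (by positivity : 0 < (n : ℝ) + a + 1)).ne'
  have := (Real.Gamma_pos_of_pos (by positivity : 0 < (n : ℝ) + n + a + b + 1)).ne'
  rw [coeff_jacobiPoly, Nat.choose_self]
  simp [*]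

lemma eq_smul_jacobiPoly_of_jacobiOp_eq (ha : 0 < a) (hb : 0 < b) {n : ℕ} {f : ℝ[X]}
    (hf : jacobiOp a b f = -((n : ℝ) * (n + a + b + 1)) • f) :
    f = (f.coeff 0 / (jacobiPoly a b n).coeff 0) • jacobiPoly a b n := by
  have coeff_zero_ne := (coeff_zero_jacobiPoly_pos ha hb n).ne'
  ext m
  rw [coeff_smul, smul_eq_mul]
  induction m with
  | zero => field_simp
  | succ m ih =>
    have recurrence := congrArg (coeff · m) hf
    simp only [coeff_jacobiOp, coeff_smul, smul_eq_mul] at recurrence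
    have hm : ((m : ℝ) + 1) * (m + 1 + a) ≠ 0 := by positivity
    apply mul_left_cancel₀ hm
    rw [mul_left_comm, coeff_jacobiPoly_succ ha hb n m]
    rw [ih] at recurrence
    linear_combination recurrence

/-! ### Bateman's expansion -/

/-- The coefficients of the modified Bessel function `I_a`. -/
def besselCoeff (a : ℝ) (i : ℕ) : ℝ := 1 / ((i.factorial : ℝ) * Real.Gamma (i + a + 1))

lemma besselCoeff_pos (ha : 0 < a) (i : ℕ) : 0 < besselCoeff a i := by
  have := Real.Gamma_pos_of_pos (by positivity : 0 < (i : ℝ) + a + 1)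
  unfold besselCoeff
  positivity

lemma besselCoeff_succ (ha : 0 < a) (i : ℕ) :
    ((i : ℝ) + 1) * (i + 1 + a) * besselCoeff a (i + 1) = besselCoeff a i := by
  have := (Real.Gamma_pos_of_pos (by positivity : 0 < (i : ℝ) + a + 1)).ne'
  have hi : (i : ℝ) + a + 1 ≠ 0 := by positivity
  rw [besselCoeff, besselCoeff, show ((i + 1 : ℕ) : ℝ) + a + 1 = (i + a + 1) + 1 by push_cast; ring,
    Real.Gamma_add_one hi, Nat.factorial_succ]
  push_cast
  field_simp
  ring_nf

/-- The left-hand side of Bateman's expansion, the degree `k` part of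
`Σ besselCoeff a i * besselCoeff b j * (X y)^i * ((1 - X)(1 - y))^j`, as a polynomial in `X`. -/
def batemanPoly (a b : ℝ) (k : ℕ) (y : ℝ) : ℝ[X] :=
  ∑ q ∈ HasAntidiagonal.antidiagonal k,
    (besselCoeff a q.1 * besselCoeff b q.2 * (y ^ q.1 * (1 - y) ^ q.2)) •
      (X ^ q.1 * (1 - X) ^ q.2)

lemma jacobiOp_batemanPoly_zero (a b y : ℝ) : jacobiOp a b (batemanPoly a b 0 y) = 0 := by
  simp [batemanPoly, jacobiOp_apply]

lemma jacobiOp_batemanPoly_succ (ha : 0 < a) (hb : 0 < b) (k : ℕ) (y : ℝ) :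
    jacobiOp a b (batemanPoly a b (k + 1) y) =
      -(((k + 1 : ℕ) : ℝ) * ((k + 1 : ℕ) + a + b + 1)) • batemanPoly a b (k + 1) y +
        batemanPoly a b k y := by
  let c (q : ℕ × ℕ) : ℝ := besselCoeff a q.1 * besselCoeff b q.2 * (y ^ q.1 * (1 - y) ^ q.2)
  have jacobiOp_term : ∀ q ∈ HasAntidiagonal.antidiagonal (k + 1),
      jacobiOp a b (c q • (X ^ q.1 * (1 - X) ^ q.2)) =
        -(((k + 1 : ℕ) : ℝ) * ((k + 1 : ℕ) + a + b + 1)) • c q • (X ^ q.1 * (1 - X) ^ q.2) +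
          ((c q * (q.1 * (q.1 + a))) • (X ^ (q.1 - 1) * (1 - X) ^ q.2) +
            (c q * (q.2 * (q.2 + b))) • (X ^ q.1 * (1 - X) ^ (q.2 - 1))) := by
    intro q hq
    rw [map_smul, jacobiOp_X_pow_mul_one_sub_X_pow, HasAntidiagonal.mem_antidiagonal.mp hq]
    simp only [smul_eq_C_mul, C_mul, C_neg]
    ring
  have lower_left : ∑ q ∈ HasAntidiagonal.antidiagonal (k + 1),
      (c q * (q.1 * (q.1 + a))) • (X ^ (q.1 - 1) * (1 - X) ^ q.2 : ℝ[X]) =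
        ∑ q ∈ HasAntidiagonal.antidiagonal k, (c q * y) • (X ^ q.1 * (1 - X) ^ q.2) := by
    simp only [Finset.Nat.sum_antidiagonal_succ, Nat.cast_zero, zero_mul, mul_zero, zero_smul,
      zero_add, Nat.add_sub_cancel, c, Nat.cast_add, Nat.cast_one, pow_succ]
    refine Finset.sum_congr rfl fun q _ => ?_
    rw [← besselCoeff_succ ha q.1]
    congr 1
    ring
  have lower_right : ∑ q ∈ HasAntidiagonal.antidiagonal (k + 1),
      (c q * (q.2 * (q.2 + b))) • (X ^ q.1 * (1 - X) ^ (q.2 - 1) : ℝ[X]) =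
        ∑ q ∈ HasAntidiagonal.antidiagonal k, (c q * (1 - y)) • (X ^ q.1 * (1 - X) ^ q.2) := by
    simp only [Finset.Nat.sum_antidiagonal_succ', Nat.cast_zero, zero_mul, mul_zero, zero_smul,
      zero_add, Nat.add_sub_cancel, c, Nat.cast_add, Nat.cast_one, pow_succ]
    refine Finset.sum_congr rfl fun q _ => ?_
    rw [← besselCoeff_succ hb q.2]
    congr 1
    ring
  rw [batemanPoly, map_sum, Finset.sum_congr rfl jacobiOp_term, Finset.sum_add_distrib,
    ← Finset.smul_sum, Finset.sum_add_distrib, lower_left, lower_right, ← Finset.sum_add_distrib,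
    batemanPoly]
  congr 1
  refine Finset.sum_congr rfl fun q _ => ?_
  rw [← add_smul]
  congr 1
  ring

/-- The inverse squared norm of `θ ↦ (jacobiPoly a b n).eval (sin (θ / 2) ^ 2)` in `L²(μ⁺_{a,b})`,
see `momentFunctional_jacobiPoly_mul_self`. -/
def spectralWeight (a b : ℝ) (n : ℕ) : ℝ :=
  (2 * n + a + b + 1) * Real.Gamma (n + a + 1) /
    ((n.factorial : ℝ) * Real.Gamma (n + b + 1) * Real.Gamma (n + a + b + 1))

/-- The part of the coefficients in Bateman's expansion that depends on both indices. It is only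
meaningful for `n ≤ k`. -/
def batemanCoeff (a b : ℝ) (k n : ℕ) : ℝ :=
  1 / (((k - n).factorial : ℝ) * Real.Gamma (k + n + a + b + 2))

lemma batemanCoeff_succ (ha : 0 < a) (hb : 0 < b) {k n : ℕ} (hnk : n ≤ k) :
    (((k + 1 : ℕ) : ℝ) * ((k + 1 : ℕ) + a + b + 1) - n * (n + a + b + 1)) *
      batemanCoeff a b (k + 1) n = batemanCoeff a b k n := by
  have := (Real.Gamma_pos_of_pos (by positivity : 0 < (k : ℝ) + n + a + b + 2)).ne'
  have hkn : (k : ℝ) + n + a + b + 2 ≠ 0 := by positivity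
  have sub_pos : (0 : ℝ) < (k : ℝ) - n + 1 := by
    have : (n : ℝ) ≤ k := by exact_mod_cast hnk
    linarith
  rw [batemanCoeff, batemanCoeff, Nat.succ_sub hnk, Nat.factorial_succ,
    show ((k + 1 : ℕ) : ℝ) + n + a + b + 2 = (k + n + a + b + 2) + 1 by push_cast; ring,
    Real.Gamma_add_one hkn]
  push_cast [Nat.cast_sub hnk]
  field_simp
  ring

/-- The difference of the two sides of Bateman's expansion. -/
def batemanRemainder (a b : ℝ) (k : ℕ) (y : ℝ) : ℝ[X] :=
  batemanPoly a b k y - ∑ n ∈ Finset.range (k + 1),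
    (spectralWeight a b n * batemanCoeff a b k n * (jacobiPoly a b n).eval y) • jacobiPoly a b n

lemma jacobiOp_batemanRemainder_zero (ha : 0 < a) (hb : 0 < b) (y : ℝ) :
    jacobiOp a b (batemanRemainder a b 0 y) = 0 := by
  rw [batemanRemainder, map_sub, jacobiOp_batemanPoly_zero, zero_add, Finset.sum_range_one,
    map_smul, jacobiOp_jacobiPoly ha hb]
  simp

lemma jacobiOp_batemanRemainder_succ (ha : 0 < a) (hb : 0 < b) {k : ℕ} {y : ℝ}
    (hk : batemanRemainder a b k y = 0) :
    jacobiOp a b (batemanRemainder a b (k + 1) y) =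
      -(((k + 1 : ℕ) : ℝ) * ((k + 1 : ℕ) + a + b + 1)) • batemanRemainder a b (k + 1) y := by
  rw [batemanRemainder, map_sub, jacobiOp_batemanPoly_succ ha hb, map_sum, smul_sub, add_sub_assoc,
    sub_eq_add_neg (_ • _), add_right_inj, sub_eq_iff_eq_add, neg_add_eq_sub, eq_sub_iff_add_eq,
    sub_eq_zero.mp hk, Finset.sum_range_succ _ (k + 1), Finset.sum_range_succ _ (k + 1), smul_add,
    ← add_assoc, Finset.smul_sum, ← Finset.sum_add_distrib]
  congr 1
  · refine Finset.sum_congr rfl fun n hn => ?_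
    rw [map_smul, jacobiOp_jacobiPoly ha hb,
      ← batemanCoeff_succ ha hb (Finset.mem_range_succ_iff.mp hn)]
    simp only [smul_smul, ← add_smul]
    congr 1
    ring
  · rw [map_smul, jacobiOp_jacobiPoly ha hb, smul_comm]

lemma eval_batemanPoly (a b : ℝ) (k : ℕ) (x y : ℝ) :
    (batemanPoly a b k y).eval x = ∑ q ∈ HasAntidiagonal.antidiagonal k,
      besselCoeff a q.1 * besselCoeff b q.2 * ((x * y) ^ q.1 * ((1 - x) * (1 - y)) ^ q.2) := by
  rw [batemanPoly, eval_finsetSum]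
  refine Finset.sum_congr rfl fun q _ => ?_
  simp only [eval_smul, eval_mul, eval_pow, eval_X, eval_sub, eval_one, smul_eq_mul, mul_pow]
  ring

lemma eval_batemanRemainder_comm (a b : ℝ) (k : ℕ) (x y : ℝ) :
    (batemanRemainder a b k y).eval x = (batemanRemainder a b k x).eval y := by
  simp only [batemanRemainder, eval_sub, eval_batemanPoly, eval_finsetSum, eval_smul, smul_eq_mul]
  congr 1 <;> refine Finset.sum_congr rfl fun q _ => by ring

lemma coeff_one_sub_X_pow_self (k : ℕ) : ((1 - X : ℝ[X]) ^ k).coeff k = (-1) ^ k := by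
  have monic : ((X - C (1 : ℝ)) ^ k).Monic := (monic_X_sub_C 1).pow k
  have natDegree_eq : ((X - C (1 : ℝ)) ^ k).natDegree = k := by
    rw [(monic_X_sub_C (1 : ℝ)).natDegree_pow, natDegree_X_sub_C, mul_one]
  have coeff_eq : ((X - C (1 : ℝ)) ^ k).coeff k = 1 := by
    simpa only [natDegree_eq] using monic.coeff_natDegree
  rw [show (1 - X : ℝ[X]) = -(X - C 1) by simp, neg_pow, ← C_1, ← C_neg, ← C_pow, coeff_C_mul,
    coeff_eq, mul_one]

lemma batemanPoly_zero_right (a b : ℝ) (k : ℕ) :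
    batemanPoly a b k 0 = (besselCoeff a 0 * besselCoeff b k) • (1 - X) ^ k := by
  rw [batemanPoly, Finset.sum_eq_single (0, k)]
  · simp
  · rintro ⟨i, j⟩ hij hne
    have hi : i ≠ 0 := by
      rintro rfl
      exact hne (by simpa using hij)
    simp [hi]
  · simp

lemma coeff_batemanRemainder_zero_right (ha : 0 < a) (hb : 0 < b) (k : ℕ) :
    (batemanRemainder a b k 0).coeff k = 0 := by
  have lower_terms : ∀ n ∈ Finset.range k, ((spectralWeight a b n * batemanCoeff a b k n *
      (jacobiPoly a b n).eval 0) • jacobiPoly a b n).coeff k = 0 := by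
    intro n hn
    simp [coeff_jacobiPoly, Nat.choose_eq_zero_of_lt (Finset.mem_range.mp hn)]
  rw [batemanRemainder, coeff_sub, batemanPoly_zero_right, coeff_smul, coeff_one_sub_X_pow_self,
    finsetSum_coeff, Finset.sum_range_succ, Finset.sum_eq_zero lower_terms, zero_add, coeff_smul,
    ← coeff_zero_eq_eval_zero, coeff_jacobiPoly, coeff_jacobiPoly, besselCoeff, besselCoeff,
    spectralWeight, batemanCoeff]
  have := (Real.Gamma_pos_of_pos (by positivity : 0 < (k : ℝ) + k + a + b + 1)).ne'
  have := (Real.Gamma_pos_of_pos (by positivity : 0 < (k : ℝ) + a + b + 1)).ne'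
  have := (Real.Gamma_pos_of_pos (by positivity : 0 < (k : ℝ) + a + 1)).ne'
  have := (Real.Gamma_pos_of_pos (by positivity : 0 < (k : ℝ) + b + 1)).ne'
  have := (Real.Gamma_pos_of_pos (by positivity : 0 < a + 1)).ne'
  have hk : (k : ℝ) + k + a + b + 1 ≠ 0 := by positivity
  rw [show (k : ℝ) + k + a + b + 2 = (k + k + a + b + 1) + 1 by ring, Real.Gamma_add_one hk]
  simp only [Nat.factorial_zero, Nat.cast_one, Nat.cast_zero, zero_add, one_mul, add_zero,
    Nat.choose_zero_right, Nat.choose_self, pow_zero, mul_one, Nat.sub_self, smul_eq_mul]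
  field_simp
  ring

lemma batemanRemainder_eq_zero_of_jacobiOp_eq (ha : 0 < a) (hb : 0 < b) {k : ℕ}
    (heigen : ∀ y, jacobiOp a b (batemanRemainder a b k y) =
      -((k : ℝ) * (k + a + b + 1)) • batemanRemainder a b k y) (y : ℝ) :
    batemanRemainder a b k y = 0 := by
  have multiple (y : ℝ) := eq_smul_jacobiPoly_of_jacobiOp_eq ha hb (heigen y)
  have at_zero : batemanRemainder a b k 0 = 0 := by
    have hcoeff := coeff_batemanRemainder_zero_right ha hb k
    rw [multiple 0, coeff_smul, smul_eq_mul] at hcoeff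
    have hscalar := (mul_eq_zero.mp hcoeff).resolve_right (leadingCoeff_jacobiPoly_ne_zero ha hb k)
    rw [multiple 0, hscalar, zero_smul]
  rw [multiple y, coeff_zero_eq_eval_zero, eval_batemanRemainder_comm, at_zero, eval_zero, zero_div,
    zero_smul]

-- The remainder of degree `k` is an eigenvector of `jacobiOp` once the previous one vanishes, hence
-- a multiple of `jacobiPoly a b k`; symmetry in `x` and `y` reduces the multiple to `y = 0`, where
-- it is read off the leading coefficient.
lemma batemanRemainder_eq_zero (ha : 0 < a) (hb : 0 < b) (k : ℕ) (y : ℝ) :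
    batemanRemainder a b k y = 0 := by
  induction k generalizing y with
  | zero =>
    refine batemanRemainder_eq_zero_of_jacobiOp_eq ha hb (fun y => ?_) y
    rw [jacobiOp_batemanRemainder_zero ha hb]
    simp
  | succ k ih =>
    exact batemanRemainder_eq_zero_of_jacobiOp_eq ha hb
      (fun y => jacobiOp_batemanRemainder_succ ha hb (ih y)) y

theorem bateman_expansion (ha : 0 < a) (hb : 0 < b) (k : ℕ) (x y : ℝ) :
    ∑ q ∈ HasAntidiagonal.antidiagonal k,
      besselCoeff a q.1 * besselCoeff b q.2 * ((x * y) ^ q.1 * ((1 - x) * (1 - y)) ^ q.2) =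
    ∑ n ∈ Finset.range (k + 1), spectralWeight a b n * batemanCoeff a b k n *
      ((jacobiPoly a b n).eval x * (jacobiPoly a b n).eval y) := by
  rw [← eval_batemanPoly, sub_eq_zero.mp (batemanRemainder_eq_zero ha hb k y), eval_finsetSum]
  refine Finset.sum_congr rfl fun n _ => ?_
  rw [eval_smul, smul_eq_mul]
  ring

end Bateman

/-! ### Normalization of the Jacobi polynomials -/

section Normalization

open Polynomial

lemma sin_half_pos {θ : ℝ} (hθ : θ ∈ Ioo 0 π) : 0 < Real.sin (θ / 2) :=
  Real.sin_pos_of_pos_of_lt_pi (by linarith [hθ.1]) (by linarith [hθ.1, hθ.2])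

lemma cos_half_pos {θ : ℝ} (hθ : θ ∈ Ioo 0 π) : 0 < Real.cos (θ / 2) :=
  Real.cos_pos_of_mem_Ioo ⟨by linarith [hθ.1, hθ.2], by linarith [hθ.2]⟩

lemma integral_comp_sin_sq_half (g : ℝ → ℝ) :
    ∫ θ in (0 : ℝ)..π, g (Real.sin (θ / 2) ^ 2) * (Real.sin (θ / 2) * Real.cos (θ / 2)) =
      ∫ x in (0 : ℝ)..1, g x := by
  have deriv_sin_sq (θ : ℝ) : HasDerivAt (fun θ : ℝ => Real.sin (θ / 2) ^ 2)
      (Real.sin (θ / 2) * Real.cos (θ / 2)) θ := by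
    refine (((hasDerivAt_id θ).div_const 2).sin.pow 2).congr_deriv ?_
    simp only [id]; ring
  have cos_mul_sin_nonneg : ∀ θ ∈ Ioo (min 0 π) (max 0 π),
      0 ≤ Real.sin (θ / 2) * Real.cos (θ / 2) := by
    intro θ hθ
    rw [min_eq_left Real.pi_pos.le, max_eq_right Real.pi_pos.le] at hθ
    exact (mul_pos (sin_half_pos hθ) (cos_half_pos hθ)).le
  have substitution := intervalIntegral.integral_comp_mul_deriv_of_deriv_nonneg (g := g)
    (f := fun θ : ℝ => Real.sin (θ / 2) ^ 2) (by fun_prop) (fun θ _ => deriv_sin_sq θ)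
    cos_mul_sin_nonneg
  simpa using substitution

lemma sin_half_rpow_mul_cos_half_rpow {θ : ℝ} (hθ : θ ∈ Ioo 0 π) (p q : ℝ) :
    Real.sin (θ / 2) ^ (2 * p + 1) * Real.cos (θ / 2) ^ (2 * q + 1) =
      (Real.sin (θ / 2) ^ 2) ^ p * (1 - Real.sin (θ / 2) ^ 2) ^ q *
        (Real.sin (θ / 2) * Real.cos (θ / 2)) := by
  have hsin := sin_half_pos hθ
  have hcos := cos_half_pos hθ
  rw [← Real.cos_sq', ← Real.rpow_natCast_mul hsin.le, ← Real.rpow_natCast_mul hcos.le,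
    Real.rpow_add hsin, Real.rpow_add hcos]
  push_cast
  simp only [Real.rpow_one]
  ring

lemma integral_rpow_mul_one_sub_rpow {u v : ℝ} (hu : 0 < u) (hv : 0 < v) :
    ∫ x in (0 : ℝ)..1, x ^ (u - 1) * (1 - x) ^ (v - 1) =
      Real.Gamma u * Real.Gamma v / Real.Gamma (u + v) := by
  apply Complex.ofReal_injective
  rw [← intervalIntegral.integral_ofReal, Complex.ofReal_div, Complex.ofReal_mul,
    ← Complex.Gamma_ofReal, ← Complex.Gamma_ofReal, ← Complex.Gamma_ofReal, Complex.ofReal_add,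
    ← Complex.betaIntegral_eq_Gamma_mul_div u v (by simpa) (by simpa), Complex.betaIntegral]
  refine intervalIntegral.integral_congr fun x hx => ?_
  rw [uIcc_of_le zero_le_one] at hx
  rw [Complex.ofReal_mul, Complex.ofReal_cpow hx.1, Complex.ofReal_cpow (by linarith [hx.2])]
  push_cast
  rfl

lemma integral_sin_half_rpow_mul_cos_half_rpow {p q : ℝ} (hp : -1 < p) (hq : -1 < q) :
    ∫ θ in (0 : ℝ)..π, Real.sin (θ / 2) ^ p * Real.cos (θ / 2) ^ q =
      Real.Gamma ((p + 1) / 2) * Real.Gamma ((q + 1) / 2) /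
        Real.Gamma ((p + 1) / 2 + (q + 1) / 2) := by
  rw [← integral_rpow_mul_one_sub_rpow (by linarith) (by linarith), ← integral_comp_sin_sq_half,
    intervalIntegral.integral_of_le Real.pi_pos.le, intervalIntegral.integral_of_le Real.pi_pos.le,
    integral_Ioc_eq_integral_Ioo, integral_Ioc_eq_integral_Ioo]
  refine setIntegral_congr_fun measurableSet_Ioo fun θ hθ => ?_
  rw [← sin_half_rpow_mul_cos_half_rpow hθ]
  congr 2 <;> ring

lemma jPsi_sq {θ : ℝ} (hθ : θ ∈ Ioo 0 π) (a b : ℝ) :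
    jPsi a b θ ^ 2 = Real.sin (θ / 2) ^ (2 * a + 1) * Real.cos (θ / 2) ^ (2 * b + 1) := by
  have hsin := (sin_half_pos hθ).le
  have hcos := (cos_half_pos hθ).le
  rw [jPsi, abs_of_nonneg hsin, mul_pow, ← Real.rpow_mul_natCast hsin, ← Real.rpow_mul_natCast hcos]
  congr 2 <;> push_cast <;> ring

lemma jacobiMeasurePlus_eq_withDensity (a b : ℝ) :
    jacobiMeasurePlus a b =
      (volume.restrict (Ioo 0 π)).withDensity fun θ => ENNReal.ofReal (jPsi a b θ ^ 2) := by
  have subset : Ioo 0 π ⊆ Ioo (-π) π := Ioo_subset_Ioo_left (by linarith [Real.pi_pos])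
  rw [jacobiMeasurePlus, jacobiMeasure, restrict_withDensity measurableSet_Ioo,
    Measure.restrict_restrict measurableSet_Ioo, inter_eq_left.mpr subset]

lemma measurable_jPsi (a b : ℝ) : Measurable (jPsi a b) := by
  unfold jPsi
  fun_prop

lemma integral_jacobiMeasurePlus_comp_sin_sq_half (a b : ℝ) (g : ℝ → ℝ) :
    ∫ θ, g (Real.sin (θ / 2) ^ 2) ∂(jacobiMeasurePlus a b) =
      ∫ x in (0 : ℝ)..1, x ^ a * (1 - x) ^ b * g x := by
  have measurable_density : Measurable fun θ => ENNReal.ofReal (jPsi a b θ ^ 2) :=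
    ((measurable_jPsi a b).pow_const 2).ennreal_ofReal
  rw [jacobiMeasurePlus_eq_withDensity,
    integral_withDensity_eq_integral_toReal_smul measurable_density (by simp),
    ← integral_comp_sin_sq_half, intervalIntegral.integral_of_le Real.pi_pos.le,
    integral_Ioc_eq_integral_Ioo]
  refine setIntegral_congr_fun measurableSet_Ioo fun θ hθ => ?_
  rw [ENNReal.toReal_ofReal (sq_nonneg _), jPsi_sq hθ, sin_half_rpow_mul_cos_half_rpow hθ,
    smul_eq_mul]
  ring

variable {a b : ℝ}

/-- Integration of polynomials in `x = sin (θ / 2) ^ 2` against `μ⁺_{a,b}`, written in the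
variable `x`. -/
def momentFunctional (a b : ℝ) (f : ℝ[X]) : ℝ :=
  ∫ x in (0 : ℝ)..1, x ^ a * (1 - x) ^ b * f.eval x

lemma momentFunctional_sum_smul (ha : 0 ≤ a) (hb : 0 ≤ b) {ι : Type*} (s : Finset ι) (c : ι → ℝ)
    (f : ι → ℝ[X]) :
    momentFunctional a b (∑ i ∈ s, c i • f i) = ∑ i ∈ s, c i * momentFunctional a b (f i) := by
  have continuous_weight : Continuous fun x : ℝ => x ^ a * (1 - x) ^ b :=
    (continuous_id.rpow_const fun _ => Or.inr ha).mul
      ((continuous_const.sub continuous_id).rpow_const fun _ => Or.inr hb)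
  have integrable (i : ι) : IntervalIntegrable
      (fun x : ℝ => c i * (x ^ a * (1 - x) ^ b * (f i).eval x)) volume 0 1 :=
    (continuous_const.mul (continuous_weight.mul (f i).continuous)).intervalIntegrable _ _
  simp only [momentFunctional, ← intervalIntegral.integral_const_mul]
  rw [← intervalIntegral.integral_finsetSum fun i _ => integrable i]
  refine intervalIntegral.integral_congr fun x _ => ?_
  simp only [eval_finsetSum, eval_smul, smul_eq_mul, Finset.mul_sum]
  exact Finset.sum_congr rfl fun i _ => by ring

lemma momentFunctional_X_pow_mul_one_sub_X_pow (ha : 0 < a) (hb : 0 < b) (i j : ℕ) :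
    momentFunctional a b (X ^ i * (1 - X) ^ j) =
      Real.Gamma (i + a + 1) * Real.Gamma (j + b + 1) / Real.Gamma (i + j + a + b + 2) := by
  rw [show (i : ℝ) + j + a + b + 2 = (i + a + 1) + (j + b + 1) by ring,
    ← integral_rpow_mul_one_sub_rpow (by positivity) (by positivity), momentFunctional]
  refine intervalIntegral.integral_congr fun x hx => ?_
  rw [uIcc_of_le zero_le_one] at hx
  have one_sub_nonneg : 0 ≤ 1 - x := by linarith [hx.2]
  simp only [eval_mul, eval_pow, eval_X, eval_sub, eval_one, add_sub_cancel_right]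
  rw [Real.rpow_add' hx.1 (by positivity), Real.rpow_add' one_sub_nonneg (by positivity),
    Real.rpow_natCast, Real.rpow_natCast]
  ring

lemma sum_neg_one_pow_mul_choose_succ (f : ℕ → ℝ) (n : ℕ) :
    ∑ m ∈ Finset.range (n + 2), (-1 : ℝ) ^ m * ((n + 1).choose m : ℝ) * f m =
      ∑ m ∈ Finset.range (n + 1), (-1 : ℝ) ^ m * (n.choose m : ℝ) * f m -
        ∑ m ∈ Finset.range (n + 1), (-1 : ℝ) ^ m * (n.choose m : ℝ) * f (m + 1) := by
  have pascal (m : ℕ) : (-1 : ℝ) ^ (m + 1) * ((n + 1).choose (m + 1) : ℝ) * f (m + 1) =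
      (-1 : ℝ) ^ (m + 1) * (n.choose (m + 1) : ℝ) * f (m + 1) -
        (-1 : ℝ) ^ m * (n.choose m : ℝ) * f (m + 1) := by
    rw [Nat.choose_succ_succ]; push_cast; ring
  have shift := Finset.sum_range_succ' (fun m => (-1 : ℝ) ^ m * (n.choose m : ℝ) * f m) (n + 1)
  rw [Finset.sum_range_succ, Nat.choose_succ_self] at shift
  rw [Finset.sum_range_succ', Finset.sum_congr rfl fun m _ => pascal m, Finset.sum_sub_distrib]
  simp only [Nat.choose_zero_right, Nat.cast_zero] at shift ⊢
  linear_combination -shift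

-- The Chu–Vandermonde identity.
lemma sum_neg_one_pow_mul_choose_mul_Gamma_div_Gamma {z w : ℝ} (hz : 0 < z) (hw : 0 < w) (n : ℕ) :
    ∑ m ∈ Finset.range (n + 1), (-1 : ℝ) ^ m * (n.choose m : ℝ) *
      (Real.Gamma (z + m) / Real.Gamma (w + m)) =
    Real.Gamma z / Real.Gamma (w + n) * (ascPochhammer ℝ n).eval (w - z) := by
  induction n generalizing z w with
  | zero => simp
  | succ n ih =>
    have shift (u : ℝ) (m : ℕ) : u + ((m + 1 : ℕ) : ℝ) = u + 1 + m := by push_cast; ring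
    have := (Real.Gamma_pos_of_pos (by positivity : 0 < w + n)).ne'
    have hwn : w + n ≠ 0 := by positivity
    rw [sum_neg_one_pow_mul_choose_succ (fun m => Real.Gamma (z + m) / Real.Gamma (w + m)),
      ih hz hw]
    simp only [shift]
    rw [ih (by linarith) (by linarith), Real.Gamma_add_one hz.ne', ascPochhammer_succ_eval,
      show w + 1 + (n : ℝ) = (w + n) + 1 by ring, Real.Gamma_add_one hwn, add_sub_add_right_eq_sub]
    field_simp
    ring

lemma momentFunctional_jacobiPoly_mul_one_sub_X_pow (ha : 0 < a) (hb : 0 < b) (n k : ℕ) :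
    momentFunctional a b (jacobiPoly a b n * (1 - X) ^ k) =
      Real.Gamma (k + b + 1) * (Real.Gamma (n + a + b + 1) / Real.Gamma (k + a + b + 2 + n) *
        (ascPochhammer ℝ n).eval ((k : ℝ) + 1 - n)) := by
  have chu_vandermonde := sum_neg_one_pow_mul_choose_mul_Gamma_div_Gamma
    (by positivity : 0 < (n : ℝ) + a + b + 1) (by positivity : 0 < (k : ℝ) + a + b + 2) n
  rw [show (k : ℝ) + 1 - n = k + a + b + 2 - (n + a + b + 1) by ring, ← chu_vandermonde,
    jacobiPoly, Finset.sum_mul, Finset.mul_sum]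
  simp only [← C_mul_X_pow_eq_monomial, ← smul_eq_C_mul, smul_mul_assoc]
  rw [momentFunctional_sum_smul ha.le hb.le]
  refine Finset.sum_congr rfl fun m _ => ?_
  have := (Real.Gamma_pos_of_pos (by positivity : 0 < (m : ℝ) + a + 1)).ne'
  rw [momentFunctional_X_pow_mul_one_sub_X_pow ha hb,
    show (m : ℝ) + k + a + b + 2 = k + a + b + 2 + m by ring,
    show (n : ℝ) + m + a + b + 1 = n + a + b + 1 + m by ring]
  field_simp

lemma momentFunctional_jacobiPoly_mul_one_sub_X_pow_of_lt (ha : 0 < a) (hb : 0 < b) {n k : ℕ}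
    (hk : k < n) : momentFunctional a b (jacobiPoly a b n * (1 - X) ^ k) = 0 := by
  have neg_natCast : (k : ℝ) + 1 - n = -((n - 1 - k : ℕ) : ℝ) := by
    rw [Nat.sub_sub, Nat.cast_sub (by omega)]; push_cast; ring
  rw [momentFunctional_jacobiPoly_mul_one_sub_X_pow ha hb, neg_natCast,
    ascPochhammer_eval_neg_coe_nat_of_lt (by omega), mul_zero, mul_zero]

lemma natDegree_jacobiPoly (ha : 0 < a) (hb : 0 < b) (n : ℕ) :
    (jacobiPoly a b n).natDegree = n := by
  refine le_antisymm (natDegree_le_iff_coeff_eq_zero.mpr fun m hm => ?_)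
    (le_natDegree_of_ne_zero (leadingCoeff_jacobiPoly_ne_zero ha hb n))
  simp [coeff_jacobiPoly, Nat.choose_eq_zero_of_lt hm]

lemma eq_sum_taylor_smul_one_sub_X_pow (f : ℝ[X]) :
    f = ∑ i ∈ Finset.range (f.natDegree + 1), ((taylor 1 f).coeff i * (-1) ^ i) • (1 - X) ^ i := by
  conv_lhs => rw [← sum_taylor_eq f 1, sum_over_range _ (by simp), natDegree_taylor]
  refine Finset.sum_congr rfl fun i _ => ?_
  rw [smul_eq_C_mul, C_mul, C_pow, C_neg, C_1, mul_assoc, ← mul_pow]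
  congr 2
  ring

lemma momentFunctional_jacobiPoly_mul_self (ha : 0 < a) (hb : 0 < b) (n : ℕ) :
    momentFunctional a b (jacobiPoly a b n * jacobiPoly a b n) = (spectralWeight a b n)⁻¹ := by
  have leading := coeff_taylor_natDegree (r := (1 : ℝ)) (f := jacobiPoly a b n)
  have expansion := eq_sum_taylor_smul_one_sub_X_pow (jacobiPoly a b n)
  rw [natDegree_jacobiPoly ha hb] at leading expansion
  rw [leadingCoeff, natDegree_jacobiPoly ha hb, coeff_jacobiPoly] at leading
  have square_eq : jacobiPoly a b n * jacobiPoly a b n = ∑ i ∈ Finset.range (n + 1),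
      ((taylor 1 (jacobiPoly a b n)).coeff i * (-1) ^ i) • (jacobiPoly a b n * (1 - X) ^ i) := by
    conv_lhs => arg 2; rw [expansion]
    simp only [Finset.mul_sum, mul_smul_comm]
  rw [square_eq, momentFunctional_sum_smul ha.le hb.le, Finset.sum_range_succ, Finset.sum_eq_zero,
    zero_add, momentFunctional_jacobiPoly_mul_one_sub_X_pow ha hb, leading, add_sub_cancel_left,
    ascPochhammer_eval_one, Nat.choose_self, spectralWeight]
  · have := (Real.Gamma_pos_of_pos (by positivity : 0 < (n : ℝ) + n + a + b + 1)).ne'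
    have := (Real.Gamma_pos_of_pos (by positivity : 0 < (n : ℝ) + a + b + 1)).ne'
    have := (Real.Gamma_pos_of_pos (by positivity : 0 < (n : ℝ) + a + 1)).ne'
    have := (Real.Gamma_pos_of_pos (by positivity : 0 < (n : ℝ) + b + 1)).ne'
    have hn : (n : ℝ) + n + a + b + 1 ≠ 0 := by positivity
    have : 2 * (n : ℝ) + a + b + 1 ≠ 0 := by positivity
    have sign : ((-1 : ℝ) ^ n) ^ 2 = 1 := by rw [← pow_mul, mul_comm, pow_mul]; simp
    rw [show (n : ℝ) + a + b + 2 + n = (n + n + a + b + 1) + 1 by ring, Real.Gamma_add_one hn]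
    field_simp
    push_cast
    linear_combination (2 * (n : ℝ) + a + b + 1) * sign
  · intro k hk
    rw [momentFunctional_jacobiPoly_mul_one_sub_X_pow_of_lt ha hb (Finset.mem_range.mp hk),
      mul_zero]

lemma jacobiP_cos (ha : 0 < a) (hb : 0 < b) (n : ℕ) (θ : ℝ) :
    jacobiP a b n (Real.cos θ) =
      Real.Gamma (a + n + 1) / ((n.factorial : ℝ) * Real.Gamma (a + b + n + 1)) *
        (jacobiPoly a b n).eval (Real.sin (θ / 2) ^ 2) := by
  have half_angle : (Real.cos θ - 1) / 2 = -Real.sin (θ / 2) ^ 2 := by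
    rw [Real.sin_sq_eq_half_sub, mul_div_cancel₀ _ two_ne_zero]; ring
  rw [jacobiP, jacobiPoly, eval_finsetSum, Finset.mul_sum]
  refine Finset.sum_congr rfl fun m hm => ?_
  have := (Real.Gamma_pos_of_pos (by positivity : 0 < a + b + n + 1)).ne'
  have := (Real.Gamma_pos_of_pos (by positivity : 0 < a + m + 1)).ne'
  rw [half_angle, neg_pow, Nat.cast_choose ℝ (Finset.mem_range_succ_iff.mp hm), eval_monomial,
    show (n : ℝ) + m + a + b + 1 = a + b + n + m + 1 by ring,
    show (m : ℝ) + a + 1 = a + m + 1 by ring]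
  field_simp

lemma spectralWeight_pos (ha : 0 < a) (hb : 0 < b) (n : ℕ) : 0 < spectralWeight a b n := by
  have := Real.Gamma_pos_of_pos (by positivity : 0 < (n : ℝ) + a + b + 1)
  have := Real.Gamma_pos_of_pos (by positivity : 0 < (n : ℝ) + a + 1)
  have := Real.Gamma_pos_of_pos (by positivity : 0 < (n : ℝ) + b + 1)
  unfold spectralWeight
  positivity

theorem trigP_mul_trigP (ha : 0 < a) (hb : 0 < b) (n : ℕ) (θ φ : ℝ) :
    trigP a b n θ * trigP a b n φ = spectralWeight a b n *
      ((jacobiPoly a b n).eval (Real.sin (θ / 2) ^ 2) *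
        (jacobiPoly a b n).eval (Real.sin (φ / 2) ^ 2)) := by
  set κ : ℝ := Real.Gamma (a + n + 1) / ((n.factorial : ℝ) * Real.Gamma (a + b + n + 1)) with hκ
  have κ_pos : 0 < κ := by
    have := Real.Gamma_pos_of_pos (by positivity : 0 < a + b + n + 1)
    have := Real.Gamma_pos_of_pos (by positivity : 0 < a + n + 1)
    positivity
  have weight_pos := spectralWeight_pos ha hb n
  have norm_sq : ∫ θ, jacobiP a b n (Real.cos θ) ^ 2 ∂(jacobiMeasurePlus a b) =
      κ ^ 2 * (spectralWeight a b n)⁻¹ := by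
    simp only [jacobiP_cos ha hb, ← hκ, mul_pow]
    rw [integral_const_mul, integral_jacobiMeasurePlus_comp_sin_sq_half a b
      (fun x => (jacobiPoly a b n).eval x ^ 2), ← momentFunctional_jacobiPoly_mul_self ha hb]
    simp only [momentFunctional, eval_mul, sq]
  have cJ_mul_self : cJ a b n * cJ a b n = (κ ^ 2 * (spectralWeight a b n)⁻¹)⁻¹ := by
    rw [cJ, norm_sq, ← Real.rpow_add (by positivity), ← Real.rpow_neg_one (_ * _)]
    norm_num
  rw [trigP, trigP, jacobiP_cos ha hb, jacobiP_cos ha hb, ← hκ, mul_mul_mul_comm, cJ_mul_self]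
  field_simp

end Normalization

/-! ### The generating function of the generalised central binomial coefficients -/

section GeneratingFunction

open Polynomial
open Finset (HasAntidiagonal)

lemma Gamma_add_natCast {x : ℝ} (hx : 0 < x) (n : ℕ) :
    Real.Gamma (x + n) = Real.Gamma x * (ascPochhammer ℝ n).eval x := by
  induction n with
  | zero => simp
  | succ n ih =>
    rw [Nat.cast_succ, ← add_assoc, Real.Gamma_add_one (by positivity), ih,
      ascPochhammer_succ_eval]
    ring

lemma hasSum_Gamma_add_div_factorial_mul_pow {c x : ℝ} (hc : 0 < c) (hx : |x| < 1) :
    HasSum (fun j : ℕ => Real.Gamma (c + j) / j.factorial * x ^ j)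
      (Real.Gamma c * (1 - x) ^ (-c)) := by
  have hx_mem : x ∈ Metric.eball (0 : ℝ) 1 := by
    simpa [Metric.mem_eball, edist_dist, Real.dist_eq] using hx
  have binomial :=
    (Real.one_div_one_sub_rpow_hasFPowerSeriesOnBall_zero c).hasSum hx_mem
  have base_nonneg : 0 ≤ 1 - x := by linarith [(abs_lt.1 hx).2]
  rw [zero_add, one_div, ← Real.rpow_neg base_nonneg] at binomial
  refine (binomial.mul_left (Real.Gamma c)).congr_fun fun j => ?_
  have choose_eq : (j.factorial : ℝ) * Ring.choose (c + j - 1) j = (ascPochhammer ℝ j).eval c := by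
    rw [← Ring.multichoose_eq, ← nsmul_eq_mul, Ring.factorial_nsmul_multichoose_eq_ascPochhammer,
      ascPochhammer_smeval_eq_eval]
  rw [FormalMultilinearSeries.ofScalars_apply_eq, smul_eq_mul, Gamma_add_natCast hc, ← choose_eq]
  field_simp

/-- The generalised binomial coefficient `(s + 2m choose m)` for real `s`. -/
def genCentralBinom (s : ℝ) (m : ℕ) : ℝ := Real.Gamma (s + 2 * m + 1) * besselCoeff s m

variable {s : ℝ}

lemma genCentralBinom_pos (hs : 0 < s) (m : ℕ) : 0 < genCentralBinom s m :=
  mul_pos (Real.Gamma_pos_of_pos (by positivity)) (besselCoeff_pos hs m)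

-- A single term of the binomial series of `(1 - 1/2) ^ (-(m + s + 1))` is at most its sum.
lemma genCentralBinom_le (hs : 0 < s) (m : ℕ) : genCentralBinom s m ≤ 2 ^ (s + 1) * 4 ^ m := by
  have := Real.Gamma_pos_of_pos (by positivity : 0 < (m : ℝ) + s + 1)
  have series := hasSum_Gamma_add_div_factorial_mul_pow (c := m + s + 1) (x := 1 / 2)
    (by positivity) (by norm_num [abs_of_pos])
  have term_le := le_hasSum series m fun j _ =>
    mul_nonneg (div_nonneg (Real.Gamma_pos_of_pos (by positivity)).le (by positivity))
      (by positivity)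
  have pow_eq : (1 - 1 / 2 : ℝ) ^ (-((m : ℝ) + s + 1)) = 2 ^ m * 2 ^ (s + 1) := by
    rw [show (1 - 1 / 2 : ℝ) = 2⁻¹ by norm_num, Real.inv_rpow zero_le_two,
      Real.rpow_neg zero_le_two, inv_inv, add_assoc, Real.rpow_add zero_lt_two, Real.rpow_natCast]
  rw [pow_eq, show (m : ℝ) + s + 1 + m = s + 2 * m + 1 by ring, one_div, inv_pow,
    ← div_eq_mul_inv, div_le_iff₀ (by positivity), div_le_iff₀ (by positivity)] at term_le
  rw [genCentralBinom, besselCoeff, mul_one_div, div_le_iff₀ (by positivity)]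
  calc Real.Gamma (s + 2 * m + 1)
      ≤ Real.Gamma (m + s + 1) * (2 ^ m * 2 ^ (s + 1)) * 2 ^ m * m.factorial := term_le
    _ = 2 ^ (s + 1) * 4 ^ m * (m.factorial * Real.Gamma (m + s + 1)) := by
      rw [show (4 : ℝ) = 2 * 2 by norm_num, mul_pow]; ring

lemma summable_genCentralBinom_mul_pow (hs : 0 < s) {x : ℝ} (hx : |x| < 1 / 4) :
    Summable fun m => genCentralBinom s m * x ^ m := by
  have geometric := (summable_geometric_of_lt_one (r := 4 * |x|) (by positivity)
    (by linarith)).mul_left (2 ^ (s + 1))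
  refine Summable.of_norm_bounded geometric fun m => ?_
  rw [norm_mul, norm_pow, Real.norm_of_nonneg (genCentralBinom_pos hs m).le, mul_pow, ← mul_assoc,
    Real.norm_eq_abs]
  gcongr
  exact genCentralBinom_le hs m

-- Up to sign this is the `k`-th forward difference of the monic polynomial `(X)_k` of degree `k`.
lemma sum_antidiagonal_neg_one_pow_mul_Gamma (hs : 0 < s) (k : ℕ) :
    ∑ p ∈ HasAntidiagonal.antidiagonal k,
      (-1) ^ p.2 * (Real.Gamma (s + 2 * p.1 + 1 + p.2) / p.2.factorial * besselCoeff s p.1) =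
        1 := by
  have difference := congrFun ((ascPochhammer ℝ k).fwdDiff_iter_degree_eq_factorial) (s + 1)
  rw [ascPochhammer_natDegree, (monic_ascPochhammer ℝ k).leadingCoeff, one_smul,
    fwdDiff_iter_eq_sum_shift] at difference
  rw [Finset.Nat.sum_antidiagonal_eq_sum_range_succ_mk,
    ← mul_right_inj' (Nat.cast_ne_zero.2 k.factorial_ne_zero : (k.factorial : ℝ) ≠ 0), mul_one,
    Finset.mul_sum]
  refine (Finset.sum_congr rfl fun m hm => ?_).trans difference
  have hmk : m ≤ k := Nat.lt_succ_iff.1 (Finset.mem_range.1 hm)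
  have := (Real.Gamma_pos_of_pos (by positivity : 0 < (m : ℝ) + s + 1)).ne'
  have Gamma_eq : Real.Gamma (s + 2 * m + 1 + (k - m : ℕ)) =
      Real.Gamma (m + s + 1) * (ascPochhammer ℝ k).eval (s + 1 + m) := by
    rw [show s + 1 + (m : ℝ) = m + s + 1 by ring, ← Gamma_add_natCast (by positivity),
      Nat.cast_sub hmk]
    congr 1; ring
  rw [Gamma_eq, besselCoeff, nsmul_one, zsmul_eq_mul]
  push_cast [Nat.cast_choose ℝ hmk]
  field_simp

lemma rpow_neg_add_two_mul_natCast {c : ℝ} (hc : 0 < c) (r : ℝ) (m : ℕ) :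
    c ^ (-(r + 2 * m)) = c ^ (-r) * ((c ^ 2)⁻¹) ^ m := by
  rw [neg_add, Real.rpow_add hc, Real.rpow_neg hc.le (2 * m), inv_pow, ← pow_mul,
    ← Real.rpow_natCast c (2 * m)]
  push_cast; rfl

lemma hasSum_Gamma_mul_besselCoeff_row (hs : 0 < s) (x : ℝ) {y : ℝ} (hy : |y| < 1) (m : ℕ) :
    HasSum (fun j : ℕ => Real.Gamma (s + 2 * m + 1 + j) / j.factorial * besselCoeff s m *
      (x ^ m * y ^ j)) ((1 - y) ^ (-(s + 1)) * (genCentralBinom s m * (x / (1 - y) ^ 2) ^ m)) := by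
  have row := (hasSum_Gamma_add_div_factorial_mul_pow (c := s + 2 * m + 1) (by positivity)
    hy).mul_left (besselCoeff s m * x ^ m)
  have value_eq : (1 - y) ^ (-(s + 1)) * (genCentralBinom s m * (x / (1 - y) ^ 2) ^ m) =
      besselCoeff s m * x ^ m * (Real.Gamma (s + 2 * m + 1) * (1 - y) ^ (-(s + 2 * m + 1))) := by
    rw [add_right_comm s, rpow_neg_add_two_mul_natCast (by linarith [(abs_lt.1 hy).2]),
      genCentralBinom, div_eq_mul_inv, mul_pow, add_right_comm s]
    ring
  rw [value_eq]
  exact row.congr_fun fun j => by ring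

lemma summable_Gamma_mul_besselCoeff (hs : 0 < s) {u : ℝ} (hu : 0 < u) (hu' : u < 1 / 8) :
    Summable fun p : ℕ × ℕ => Real.Gamma (s + 2 * p.1 + 1 + p.2) / p.2.factorial *
      besselCoeff s p.1 * (u ^ p.1 * (-u) ^ p.2) := by
  have terms_nonneg (p : ℕ × ℕ) : 0 ≤ Real.Gamma (s + 2 * p.1 + 1 + p.2) / p.2.factorial *
      besselCoeff s p.1 := mul_nonneg (div_nonneg (Real.Gamma_pos_of_pos (by positivity)).le
        (by positivity)) (besselCoeff_pos hs _).le
  have rows := hasSum_Gamma_mul_besselCoeff_row hs u (by rw [abs_of_pos hu]; linarith : |u| < 1)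
  have ratio_lt : |u / (1 - u) ^ 2| < 1 / 4 := by
    rw [abs_of_nonneg (by positivity), div_lt_iff₀ (by nlinarith)]
    nlinarith
  have abs_summable : Summable fun p : ℕ × ℕ => Real.Gamma (s + 2 * p.1 + 1 + p.2) /
      p.2.factorial * besselCoeff s p.1 * (u ^ p.1 * u ^ p.2) := by
    refine (summable_prod_of_nonneg fun p => mul_nonneg (terms_nonneg p) (by positivity)).2
      ⟨fun m => (rows m).summable, ?_⟩
    simpa only [(rows _).tsum_eq] using (summable_genCentralBinom_mul_pow hs ratio_lt).mul_left _
  refine Summable.of_norm_bounded abs_summable fun p => ?_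
  rw [norm_mul, Real.norm_of_nonneg (terms_nonneg p), norm_mul, norm_pow, norm_pow, norm_neg,
    Real.norm_of_nonneg hu.le]

-- Rows of the double series sum to the left-hand side, antidiagonals to the geometric series.
lemma hasSum_genCentralBinom_of_small (hs : 0 < s) {u : ℝ} (hu : 0 < u) (hu' : u < 1 / 8) :
    HasSum (fun m => genCentralBinom s m * (u / (1 + u) ^ 2) ^ m)
      ((1 + u) ^ (s + 1) / (1 - u)) := by
  have double := summable_Gamma_mul_besselCoeff hs hu hu'
  have antidiagonals : HasSum (fun k : ℕ => u ^ k) (∑' p : ℕ × ℕ,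
      Real.Gamma (s + 2 * p.1 + 1 + p.2) / p.2.factorial * besselCoeff s p.1 *
        (u ^ p.1 * (-u) ^ p.2)) := by
    refine ((HasAntidiagonal.sigmaAntidiagonalEquivProd.hasSum_iff.2 double.hasSum).sigma fun k =>
      hasSum_fintype _).congr_fun fun k => ?_
    refine (mul_one _).symm.trans
      ((congrArg _ (sum_antidiagonal_neg_one_pow_mul_Gamma hs k)).symm.trans ?_)
    rw [Finset.mul_sum, ← Finset.sum_coe_sort]
    refine Finset.sum_congr rfl fun p _ => ?_
    have pow_eq : u ^ k = u ^ p.1.1 * u ^ p.1.2 := by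
      rw [← pow_add, HasAntidiagonal.mem_antidiagonal.1 p.2]
    rw [pow_eq, Function.comp_apply, HasAntidiagonal.sigmaAntidiagonalEquivProd_apply, neg_pow u]
    ring
  have rows := double.hasSum.prod_fiberwise fun m =>
    hasSum_Gamma_mul_besselCoeff_row hs u (by rw [abs_neg, abs_of_pos hu]; linarith) m
  have base_pos : 0 < 1 + u := by positivity
  rw [antidiagonals.unique (hasSum_geometric_of_lt_one hu.le (by linarith)), sub_neg_eq_add,
    Real.rpow_neg base_pos.le] at rows
  rw [div_eq_mul_inv]
  exact (rows.mul_left ((1 + u) ^ (s + 1))).congr_fun fun m =>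
    (mul_inv_cancel_left₀ (by positivity) _).symm

lemma analyticOnNhd_tsum_genCentralBinom (hs : 0 < s) :
    AnalyticOnNhd ℝ (fun x => ∑' m, genCentralBinom s m * x ^ m) (Metric.ball 0 (1 / 4)) := by
  set p := FormalMultilinearSeries.ofScalars ℝ (genCentralBinom s) with hp
  have radius_ge : ((1 / 4 : NNReal) : ℝ≥0∞) ≤ p.radius := by
    refine p.le_radius_of_bound (2 ^ (s + 1)) fun m => ?_
    rw [hp, FormalMultilinearSeries.ofScalars_norm,
      Real.norm_of_nonneg (genCentralBinom_pos hs m).le, NNReal.coe_div, div_pow]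
    simp only [NNReal.coe_one, one_pow, NNReal.coe_ofNat, mul_one_div]
    exact div_le_of_le_mul₀ (by positivity) (by positivity) (genCentralBinom_le hs m)
  have series := (p.hasFPowerSeriesOnBall (lt_of_lt_of_le (by norm_num) radius_ge)).analyticOnNhd
  refine (series.mono fun x hx => ?_).congr Metric.isOpen_ball fun x _ => tsum_congr fun m => ?_
  · refine Metric.eball_subset_eball radius_ge ?_
    rwa [Metric.eball_coe, NNReal.coe_div, NNReal.coe_one, NNReal.coe_ofNat]
  · rw [hp, FormalMultilinearSeries.ofScalars_apply_eq, smul_eq_mul]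

lemma div_one_add_sq_mem_ball {u : ℝ} (hu : u ∈ Ioo (0 : ℝ) 1) :
    u / (1 + u) ^ 2 ∈ Metric.ball (0 : ℝ) (1 / 4) := by
  have := hu.1
  rw [mem_ball_zero_iff, Real.norm_of_nonneg (by positivity), div_lt_iff₀ (by positivity)]
  nlinarith [mul_pos (sub_pos.2 hu.2) (sub_pos.2 hu.2)]

lemma tsum_genCentralBinom_div_one_add_sq (hs : 0 < s) {u : ℝ} (hu : u ∈ Ioo (0 : ℝ) 1) :
    ∑' m, genCentralBinom s m * (u / (1 + u) ^ 2) ^ m = (1 + u) ^ (s + 1) / (1 - u) := by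
  have inner_analytic : AnalyticOnNhd ℝ (fun u : ℝ => u / (1 + u) ^ 2) (Ioo 0 1) := fun v hv =>
    analyticAt_id.div ((analyticAt_const.add analyticAt_id).pow 2)
      (pow_ne_zero 2 (add_pos one_pos hv.1).ne')
  have lhs_analytic := (analyticOnNhd_tsum_genCentralBinom hs).comp inner_analytic
    fun v hv => div_one_add_sq_mem_ball hv
  have rhs_analytic : AnalyticOnNhd ℝ (fun u : ℝ => (1 + u) ^ (s + 1) / (1 - u)) (Ioo 0 1) :=
    fun v hv => ((contDiffAt_const.add contDiffAt_id).rpow_const_of_ne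
      (add_pos one_pos hv.1).ne').analyticAt.div
      (analyticAt_const.sub analyticAt_id) (sub_ne_zero.2 hv.2.ne')
  refine lhs_analytic.eqOn_of_preconnected_of_eventuallyEq rhs_analytic isPreconnected_Ioo
    (z₀ := 1 / 16) ⟨by norm_num, by norm_num⟩ ?_ hu
  filter_upwards [Ioo_mem_nhds (b := 1 / 8) (by norm_num : (0 : ℝ) < 1 / 16) (by norm_num)]
    with v hv using (hasSum_genCentralBinom_of_small hs hv.1 hv.2).tsum_eq

lemma hasSum_genCentralBinom_mul_cosh (hs : 0 < s) {t : ℝ} (ht : 0 < t) :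
    HasSum (fun m : ℕ => genCentralBinom s m / 4 ^ m * (Real.sinh (t / 2) *
      (Real.cosh (t / 2) ^ (-(s + 1)) * ((Real.cosh (t / 2) ^ 2)⁻¹) ^ m)))
      (2 ^ s * Real.exp (-(s / 2 * t))) := by
  set e := Real.exp (-(t / 2)) with he
  have e_pos : 0 < e := Real.exp_pos _
  have e_lt : e < 1 := Real.exp_lt_one_iff.2 (by linarith)
  have cosh_eq : Real.cosh (t / 2) = (1 + e ^ 2) / (2 * e) := by
    rw [Real.cosh_eq, ← he, ← inv_inv (Real.exp (t / 2)), ← Real.exp_neg, ← he]; field_simp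
  have sinh_eq : Real.sinh (t / 2) = (1 - e ^ 2) / (2 * e) := by
    rw [Real.sinh_eq, ← he, ← inv_inv (Real.exp (t / 2)), ← Real.exp_neg, ← he]; field_simp
  have hu : e ^ 2 ∈ Ioo (0 : ℝ) 1 := ⟨by positivity, by nlinarith⟩
  have one_sub_ne : 1 - e ^ 2 ≠ 0 := (sub_pos.2 hu.2).ne'
  have series := (summable_genCentralBinom_mul_pow hs
    (mem_ball_zero_iff.1 (div_one_add_sq_mem_ball hu))).hasSum
  rw [tsum_genCentralBinom_div_one_add_sq hs hu] at series
  have value_eq : 2 ^ s * Real.exp (-(s / 2 * t)) = Real.sinh (t / 2) *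
      Real.cosh (t / 2) ^ (-(s + 1)) * ((1 + e ^ 2) ^ (s + 1) / (1 - e ^ 2)) := by
    rw [cosh_eq, sinh_eq, Real.rpow_neg (by positivity),
      Real.div_rpow (by positivity) (by positivity), Real.mul_rpow zero_le_two e_pos.le,
      Real.rpow_add_one two_ne_zero, Real.rpow_add_one e_pos.ne',
      show -(s / 2 * t) = -(t / 2) * s by ring, Real.exp_mul, ← he]
    field_simp
  rw [value_eq]
  refine (series.mul_left _).congr_fun fun m => ?_
  have inv_cosh_sq : (Real.cosh (t / 2) ^ 2)⁻¹ = 4 * (e ^ 2 / (1 + e ^ 2) ^ 2) := by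
    rw [cosh_eq]; field_simp; ring
  rw [inv_cosh_sq, mul_pow]
  field_simp

end GeneratingFunction

/-! ### Growth of the Bessel series and of the Poisson double series -/

section PoissonBound

variable {a b κ μ s x y z : ℝ}

lemma continuous_sin_half_rpow (ha : 0 ≤ a) : Continuous fun θ : ℝ => Real.sin (θ / 2) ^ a :=
  (Real.continuous_sin.comp (continuous_id.div_const 2)).rpow_const fun _ => Or.inr ha

lemma besselCoeff_mul_factorial_eq_integral (ha : 0 < a) (i : ℕ) :
    besselCoeff a i * ((2 * i).factorial / 4 ^ i) = (√π * Real.Gamma (a + 1 / 2))⁻¹ *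
      ∫ θ in (0 : ℝ)..π, Real.sin (θ / 2) ^ (2 * a) * Real.cos (θ / 2) ^ (2 * i) := by
  have beta := integral_sin_half_rpow_mul_cos_half_rpow (p := 2 * a) (q := (2 * i : ℕ))
    (by linarith) (by push_cast; linarith [(Nat.cast_nonneg i : (0 : ℝ) ≤ i)])
  simp only [Real.rpow_natCast] at beta
  have duplication := Real.Gamma_mul_Gamma_add_half ((i : ℝ) + 1 / 2)
  have two_mul_eq : 2 * ((i : ℝ) + 1 / 2) = ((2 * i : ℕ) : ℝ) + 1 := by push_cast; ring
  have two_rpow_eq : (2 : ℝ) ^ (1 - (((2 * i : ℕ) : ℝ) + 1)) = (4 ^ i)⁻¹ := by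
    rw [sub_add_cancel_right, Real.rpow_neg two_pos.le, Real.rpow_natCast, pow_mul]
    norm_num
  rw [add_assoc, add_halves, Real.Gamma_nat_eq_factorial, two_mul_eq, Real.Gamma_nat_eq_factorial,
    two_rpow_eq] at duplication
  have first_arg : (2 * a + 1) / 2 = a + 1 / 2 := by ring
  have second_arg : (((2 * i : ℕ) : ℝ) + 1) / 2 = (i : ℝ) + 1 / 2 := by push_cast; ring
  have sum_arg : a + 1 / 2 + ((i : ℝ) + 1 / 2) = i + a + 1 := by ring
  have := Real.Gamma_pos_of_pos (s := a + 1 / 2) (by positivity)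
  have := Real.Gamma_pos_of_pos (s := i + a + 1) (by positivity)
  rw [beta, first_arg, second_arg, sum_arg, besselCoeff]
  field_simp at duplication ⊢
  linear_combination -duplication

lemma sin_half_rpow_mul_exp_cos_half_le (ha : 0 ≤ a) (hz : 0 ≤ z) {θ : ℝ} (hθ : θ ∈ Ioc 0 π) :
    Real.sin (θ / 2) ^ a * Real.exp (z * Real.cos (θ / 2)) ≤ Real.exp (z + 1) *
      (θ ^ a * Real.exp (-(1 / (2 * π ^ 2) * (1 + z)) * θ ^ (2 : ℝ))) := by
  obtain ⟨θ_pos, θ_le⟩ := hθ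
  have sin_nonneg : 0 ≤ Real.sin (θ / 2) :=
    Real.sin_nonneg_of_nonneg_of_le_pi (by positivity) (by linarith)
  have sin_le : Real.sin (θ / 2) ≤ θ := by linarith [Real.sin_le (x := θ / 2) (by positivity)]
  have cos_le : Real.cos (θ / 2) ≤ 1 - 1 / (2 * π ^ 2) * θ ^ 2 := by
    have := Real.cos_le_one_sub_mul_cos_sq (x := θ / 2)
      (by rw [abs_of_pos (by positivity)]; linarith)
    have coeff_eq : 2 / π ^ 2 * (θ / 2) ^ 2 = 1 / (2 * π ^ 2) * θ ^ 2 := by field_simp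
    linarith
  have exponent_le : z * Real.cos (θ / 2) ≤
      z + 1 + -(1 / (2 * π ^ 2) * (1 + z)) * θ ^ (2 : ℝ) := by
    have sq_le : 1 / (2 * π ^ 2) * θ ^ 2 ≤ 1 := by
      rw [div_mul_eq_mul_div, one_mul, div_le_one (by positivity)]
      nlinarith
    rw [Real.rpow_two]
    linarith [mul_le_mul_of_nonneg_left cos_le hz]
  calc _ ≤ θ ^ a * Real.exp (z + 1 + -(1 / (2 * π ^ 2) * (1 + z)) * θ ^ (2 : ℝ)) := by gcongr
    _ = _ := by rw [Real.exp_add (z + 1)]; ring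

lemma exists_integral_sin_half_rpow_mul_exp_le (ha : 0 ≤ a) : ∃ K > 0, ∀ z, 0 ≤ z →
    ∫ θ in (0 : ℝ)..π, Real.sin (θ / 2) ^ (2 * a) * Real.exp (z * Real.cos (θ / 2)) ≤
      K * (Real.exp z * (1 + z) ^ (-(a + 1 / 2))) := by
  set c : ℝ := 1 / (2 * π ^ 2)
  have c_pos : 0 < c := by positivity
  have := Real.Gamma_pos_of_pos (s := a + 1 / 2) (by positivity)
  refine ⟨Real.exp 1 * (c ^ (-(a + 1 / 2)) * (1 / 2) * Real.Gamma (a + 1 / 2)), by positivity,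
    fun z hz => ?_⟩
  have rate_pos : 0 < c * (1 + z) := by positivity
  have gaussian_integrable : IntegrableOn (fun θ : ℝ => Real.exp (z + 1) *
      (θ ^ (2 * a) * Real.exp (-(c * (1 + z)) * θ ^ (2 : ℝ)))) (Ioi 0) :=
    (integrableOn_rpow_mul_exp_neg_mul_rpow (by linarith) two_pos rate_pos).const_mul _
  calc _ ≤ ∫ θ in Ioc 0 π,
          Real.exp (z + 1) * (θ ^ (2 * a) * Real.exp (-(c * (1 + z)) * θ ^ (2 : ℝ))) := by
        rw [intervalIntegral.integral_of_le Real.pi_pos.le]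
        refine setIntegral_mono_on (Continuous.integrableOn_Ioc ?_)
          (gaussian_integrable.mono_set Ioc_subset_Ioi_self) measurableSet_Ioc fun θ hθ =>
          sin_half_rpow_mul_exp_cos_half_le (by positivity) hz hθ
        exact (continuous_sin_half_rpow (by positivity)).mul (by fun_prop)
    _ ≤ ∫ θ in Ioi 0,
          Real.exp (z + 1) * (θ ^ (2 * a) * Real.exp (-(c * (1 + z)) * θ ^ (2 : ℝ))) := by
        refine setIntegral_mono_set gaussian_integrable ?_
          (Ioc_subset_Ioi_self).eventuallyLE
        filter_upwards [self_mem_ae_restrict measurableSet_Ioi] with θ hθ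
        have : 0 ≤ θ ^ (2 * a) := Real.rpow_nonneg (le_of_lt hθ) _
        exact mul_nonneg (Real.exp_nonneg _) (mul_nonneg this (Real.exp_nonneg _))
    _ = _ := by
        rw [integral_const_mul, integral_rpow_mul_exp_neg_mul_rpow two_pos (by linarith) rate_pos,
          Real.exp_add, show -(2 * a + 1) / 2 = -(a + 1 / 2) by ring,
          show (2 * a + 1) / 2 = a + 1 / 2 by ring, Real.mul_rpow c_pos.le (by linarith)]
        ring

/-- Partial sums of the series of `(z/2)^(-a) I_a(z)`, where `I_a` is the modified Bessel
function of the first kind. -/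
def besselPartialSum (a : ℝ) (n : ℕ) (z : ℝ) : ℝ :=
  ∑ i ∈ Finset.range n, besselCoeff a i / 4 ^ i * z ^ (2 * i)

lemma besselPartialSum_nonneg (ha : 0 < a) (n : ℕ) (z : ℝ) : 0 ≤ besselPartialSum a n z :=
  Finset.sum_nonneg fun i _ => by
    have := besselCoeff_pos ha i
    rw [pow_mul]
    positivity

lemma besselPartialSum_eq_integral (ha : 0 < a) (n : ℕ) (z : ℝ) :
    besselPartialSum a n z = (√π * Real.Gamma (a + 1 / 2))⁻¹ *
      ∫ θ in (0 : ℝ)..π, Real.sin (θ / 2) ^ (2 * a) *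
        ∑ i ∈ Finset.range n, (z * Real.cos (θ / 2)) ^ (2 * i) / (2 * i).factorial := by
  have term_integrable (i : ℕ) : IntervalIntegrable (fun θ => Real.sin (θ / 2) ^ (2 * a) *
      ((z * Real.cos (θ / 2)) ^ (2 * i) / (2 * i).factorial)) volume 0 π :=
    ((continuous_sin_half_rpow (by positivity)).mul (by fun_prop)).intervalIntegrable _ _
  simp only [Finset.mul_sum]
  rw [intervalIntegral.integral_finsetSum fun i _ => term_integrable i, Finset.mul_sum]
  refine Finset.sum_congr rfl fun i _ => ?_
  have integrand_eq (θ : ℝ) : Real.sin (θ / 2) ^ (2 * a) *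
      ((z * Real.cos (θ / 2)) ^ (2 * i) / (2 * i).factorial) =
      Real.sin (θ / 2) ^ (2 * a) * Real.cos (θ / 2) ^ (2 * i) *
        (z ^ (2 * i) / (2 * i).factorial) := by
    rw [mul_pow]
    ring
  simp only [integrand_eq]
  rw [intervalIntegral.integral_mul_const, ← mul_assoc,
    ← besselCoeff_mul_factorial_eq_integral ha]
  field_simp

lemma sum_pow_two_mul_div_factorial_le_exp (hz : 0 ≤ z) (n : ℕ) :
    ∑ i ∈ Finset.range n, z ^ (2 * i) / (2 * i).factorial ≤ Real.exp z := by
  have cosh_series := Real.hasSum_cosh z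
  calc _ ≤ Real.cosh z := sum_le_hasSum _ (fun i _ => by positivity) cosh_series
    _ ≤ Real.exp z := by linarith [Real.cosh_add_sinh z, Real.sinh_nonneg_iff.2 hz]

lemma exists_besselPartialSum_le (ha : 0 < a) : ∃ K > 0, ∀ z, 0 ≤ z → ∀ n,
    besselPartialSum a n z ≤ K * (Real.exp z * (1 + z) ^ (-(a + 1 / 2))) := by
  obtain ⟨K, K_pos, integral_le⟩ := exists_integral_sin_half_rpow_mul_exp_le ha.le
  have := Real.Gamma_pos_of_pos (s := a + 1 / 2) (by positivity)
  refine ⟨(√π * Real.Gamma (a + 1 / 2))⁻¹ * K, by positivity, fun z hz n => ?_⟩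
  rw [besselPartialSum_eq_integral ha, mul_assoc]
  refine mul_le_mul_of_nonneg_left ((intervalIntegral.integral_mono_on Real.pi_pos.le
    (Continuous.intervalIntegrable ?_ _ _) (Continuous.intervalIntegrable ?_ _ _)
    fun θ hθ => ?_).trans (integral_le z hz)) (by positivity)
  · exact (continuous_sin_half_rpow (by positivity)).mul (by fun_prop)
  · exact (continuous_sin_half_rpow (by positivity)).mul (by fun_prop)
  · have sin_nonneg : 0 ≤ Real.sin (θ / 2) :=
      Real.sin_nonneg_of_nonneg_of_le_pi (by linarith [hθ.1]) (by linarith [hθ.2, Real.pi_pos])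
    have cos_nonneg : 0 ≤ Real.cos (θ / 2) :=
      Real.cos_nonneg_of_mem_Icc ⟨by linarith [hθ.1, Real.pi_pos], by linarith [hθ.2]⟩
    exact mul_le_mul_of_nonneg_left
      (sum_pow_two_mul_div_factorial_le_exp (mul_nonneg hz cos_nonneg) n)
      (Real.rpow_nonneg sin_nonneg _)

/-- The coefficients of the Poisson double series
`∑ q, poissonCoeff a b q * (x ^ (2 * q.1) * y ^ (2 * q.2))`, a product of two Bessel series
integrated termwise against `exp (-s) * s ^ (a + b + 1)`. -/
def poissonCoeff (a b : ℝ) (q : ℕ × ℕ) : ℝ :=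
  Real.Gamma (2 * ((q.1 + q.2 : ℕ) : ℝ) + (a + b + 1) + 1) / 4 ^ (q.1 + q.2) *
    besselCoeff a q.1 * besselCoeff b q.2

lemma poissonCoeff_pos (ha : 0 < a) (hb : 0 < b) (q : ℕ × ℕ) : 0 < poissonCoeff a b q := by
  have := Real.Gamma_pos_of_pos (s := 2 * ((q.1 + q.2 : ℕ) : ℝ) + (a + b + 1) + 1) (by positivity)
  have := besselCoeff_pos ha q.1
  have := besselCoeff_pos hb q.2
  rw [poissonCoeff]
  positivity

lemma integrableOn_exp_neg_mul_rpow (hs : 0 ≤ s) :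
    IntegrableOn (fun u : ℝ => Real.exp (-u) * u ^ s) (Ioi 0) := by
  simpa only [add_sub_cancel_right] using
    Real.GammaIntegral_convergent (s := s + 1) (by positivity)

lemma integral_exp_neg_mul_rpow (hs : 0 ≤ s) :
    ∫ u in Ioi (0 : ℝ), Real.exp (-u) * u ^ s = Real.Gamma (s + 1) := by
  simp only [Real.Gamma_eq_integral (by positivity : 0 < s + 1), add_sub_cancel_right]

lemma sum_poissonCoeff_eq_integral (ha : 0 < a) (hb : 0 < b) (x y : ℝ) (n : ℕ) :
    IntegrableOn (fun s : ℝ => Real.exp (-s) * s ^ (a + b + 1) *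
        (besselPartialSum a n (s * x) * besselPartialSum b n (s * y))) (Ioi 0) ∧
    ∑ q ∈ Finset.range n ×ˢ Finset.range n,
        poissonCoeff a b q * (x ^ (2 * q.1) * y ^ (2 * q.2)) =
      ∫ s in Ioi (0 : ℝ), Real.exp (-s) * s ^ (a + b + 1) *
        (besselPartialSum a n (s * x) * besselPartialSum b n (s * y)) := by
  have expand : EqOn (fun s : ℝ => ∑ q ∈ Finset.range n ×ˢ Finset.range n,
        Real.exp (-s) * s ^ (2 * ((q.1 + q.2 : ℕ) : ℝ) + (a + b + 1)) *
          (1 / 4 ^ (q.1 + q.2) * besselCoeff a q.1 * besselCoeff b q.2 *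
            (x ^ (2 * q.1) * y ^ (2 * q.2))))
      (fun s => Real.exp (-s) * s ^ (a + b + 1) *
        (besselPartialSum a n (s * x) * besselPartialSum b n (s * y))) (Ioi 0) := by
    intro s s_pos
    simp only [besselPartialSum]
    rw [Finset.sum_mul_sum, ← Finset.sum_product', Finset.mul_sum]
    refine Finset.sum_congr rfl fun q _ => ?_
    have exponent_eq : 2 * ((q.1 + q.2 : ℕ) : ℝ) = ((2 * q.1 + 2 * q.2 : ℕ) : ℝ) := by
      push_cast; ring
    rw [Real.rpow_add s_pos, exponent_eq, Real.rpow_natCast, pow_add, pow_add, mul_pow, mul_pow]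
    field_simp
  have term_integrable (q : ℕ × ℕ) :=
    (integrableOn_exp_neg_mul_rpow
      (by positivity : 0 ≤ 2 * ((q.1 + q.2 : ℕ) : ℝ) + (a + b + 1))).mul_const
      (1 / 4 ^ (q.1 + q.2) * besselCoeff a q.1 * besselCoeff b q.2 *
        (x ^ (2 * q.1) * y ^ (2 * q.2)))
  refine ⟨IntegrableOn.congr_fun (integrable_finsetSum _ fun q _ => term_integrable q) expand
    measurableSet_Ioi, ?_⟩
  rw [← setIntegral_congr_fun measurableSet_Ioi expand,
    integral_finsetSum _ fun q _ => term_integrable q]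
  refine Finset.sum_congr rfl fun q _ => ?_
  rw [integral_mul_const, integral_exp_neg_mul_rpow (by positivity), poissonCoeff]
  ring

lemma rpow_mul_one_add_mul_rpow_neg_le {δ : ℝ} (hs : 0 < s) (hδ : 0 < δ) (hx : 0 ≤ x)
    (hκ : 0 ≤ κ) :
    s ^ κ * (1 + s * x) ^ (-κ) ≤ max (δ * s) 1 ^ κ * (δ + x) ^ (-κ) := by
  have one_add_pos : 0 < 1 + s * x := by positivity
  have add_pos : 0 < δ + x := by positivity
  rw [Real.rpow_neg one_add_pos.le, Real.rpow_neg add_pos.le, ← div_eq_mul_inv, ← div_eq_mul_inv,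
    ← Real.div_rpow hs.le one_add_pos.le, ← Real.div_rpow (by positivity) add_pos.le]
  refine Real.rpow_le_rpow (by positivity) ?_ hκ
  rw [div_le_div_iff₀ one_add_pos add_pos]
  nlinarith [le_max_left (δ * s) 1, le_max_right (δ * s) 1, mul_nonneg hs.le hx]

lemma max_rpow_le_rpow_add_one (hs : 0 ≤ s) : max s 1 ^ κ ≤ s ^ κ + 1 := by
  rcases le_total s 1 with h | h
  · rw [max_eq_right h, Real.one_rpow]
    linarith [Real.rpow_nonneg hs κ]
  · rw [max_eq_left h]
    linarith

lemma exp_neg_mul_rpow_mul_bessel_majorants_le (hκ : 0 ≤ κ) (hμ : 0 ≤ μ) (hs : 0 < s)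
    (hx : 0 ≤ x) (hy : 0 ≤ y) (hxy : x + y < 1) :
    Real.exp (-s) * s ^ (κ + μ) * ((Real.exp (s * x) * (1 + s * x) ^ (-κ)) *
        (Real.exp (s * y) * (1 + s * y) ^ (-μ))) ≤
      (1 - y) ^ (-κ) * (1 - x) ^ (-μ) *
        (Real.exp (-((1 - x - y) * s)) * (((1 - x - y) * s) ^ (κ + μ) + 1)) := by
  have δ_pos : 0 < 1 - x - y := by linarith
  have x_factor := rpow_mul_one_add_mul_rpow_neg_le hs δ_pos hx hκ
  have y_factor := rpow_mul_one_add_mul_rpow_neg_le hs δ_pos hy hμ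
  rw [show 1 - x - y + x = 1 - y by ring] at x_factor
  rw [sub_add_cancel] at y_factor
  have one_sub_x_pos : 0 < 1 - x := by linarith
  have one_sub_y_pos : 0 < 1 - y := by linarith
  have exp_eq : Real.exp (-((1 - x - y) * s)) =
      Real.exp (-s) * (Real.exp (s * x) * Real.exp (s * y)) := by
    rw [← Real.exp_add, ← Real.exp_add]
    congr 1
    ring
  calc _ = Real.exp (-((1 - x - y) * s)) *
          (s ^ κ * (1 + s * x) ^ (-κ) * (s ^ μ * (1 + s * y) ^ (-μ))) := by
        rw [exp_eq, Real.rpow_add hs]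
        ring
    _ ≤ Real.exp (-((1 - x - y) * s)) * (max ((1 - x - y) * s) 1 ^ κ * (1 - y) ^ (-κ) *
          (max ((1 - x - y) * s) 1 ^ μ * (1 - x) ^ (-μ))) := by
        gcongr
    _ = (1 - y) ^ (-κ) * (1 - x) ^ (-μ) *
          (Real.exp (-((1 - x - y) * s)) * max ((1 - x - y) * s) 1 ^ (κ + μ)) := by
        rw [Real.rpow_add (by positivity)]
        ring
    _ ≤ _ := by
        gcongr
        exact max_rpow_le_rpow_add_one (by positivity)

lemma integral_exp_neg_mul_mul_rpow_add_one {δ : ℝ} (hδ : 0 < δ) (hκ : 0 ≤ κ) :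
    IntegrableOn (fun s => Real.exp (-(δ * s)) * ((δ * s) ^ κ + 1)) (Ioi 0) ∧
    ∫ s in Ioi (0 : ℝ), Real.exp (-(δ * s)) * ((δ * s) ^ κ + 1) =
      δ⁻¹ * (Real.Gamma (κ + 1) + 1) := by
  have split : (fun u : ℝ => Real.exp (-u) * (u ^ κ + 1)) =
      fun u => Real.exp (-u) * u ^ κ + Real.exp (-u) * u ^ (0 : ℝ) := by
    funext u
    rw [Real.rpow_zero, mul_add]
  have power_integrable := integrableOn_exp_neg_mul_rpow hκ
  have exp_integrable := integrableOn_exp_neg_mul_rpow le_rfl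
  constructor
  · rw [integrableOn_Ioi_comp_mul_left_iff (fun u : ℝ => Real.exp (-u) * (u ^ κ + 1)) 0 hδ,
      mul_zero, split]
    exact power_integrable.add exp_integrable
  · rw [integral_comp_mul_left_Ioi (fun u : ℝ => Real.exp (-u) * (u ^ κ + 1)) 0 hδ, mul_zero,
      split, integral_add power_integrable exp_integrable, integral_exp_neg_mul_rpow hκ,
      integral_exp_neg_mul_rpow le_rfl, zero_add, Real.Gamma_one, smul_eq_mul]

lemma exists_sum_poissonCoeff_le (ha : 0 < a) (hb : 0 < b) : ∃ K > 0, ∀ x y, 0 ≤ x → 0 ≤ y →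
    x + y < 1 → ∀ n, ∑ q ∈ Finset.range n ×ˢ Finset.range n,
        poissonCoeff a b q * (x ^ (2 * q.1) * y ^ (2 * q.2)) ≤
      K * ((1 - x - y)⁻¹ * ((1 - y) ^ (-(a + 1 / 2)) * (1 - x) ^ (-(b + 1 / 2)))) := by
  obtain ⟨K₁, K₁_pos, bessel_le₁⟩ := exists_besselPartialSum_le ha
  obtain ⟨K₂, K₂_pos, bessel_le₂⟩ := exists_besselPartialSum_le hb
  have := Real.Gamma_pos_of_pos (s := a + 1 / 2 + (b + 1 / 2) + 1) (by positivity)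
  refine ⟨K₁ * K₂ * (Real.Gamma (a + 1 / 2 + (b + 1 / 2) + 1) + 1), by positivity,
    fun x y hx hy hxy n => ?_⟩
  obtain ⟨integrable, sum_eq⟩ := sum_poissonCoeff_eq_integral ha hb x y n
  obtain ⟨majorant_integrable, majorant_integral⟩ :=
    integral_exp_neg_mul_mul_rpow_add_one (δ := 1 - x - y) (κ := a + 1 / 2 + (b + 1 / 2))
      (by linarith) (by positivity)
  have exponent_eq : a + b + 1 = a + 1 / 2 + (b + 1 / 2) := by ring
  rw [sum_eq]
  calc _ ≤ ∫ s in Ioi (0 : ℝ), K₁ * K₂ * ((1 - y) ^ (-(a + 1 / 2)) * (1 - x) ^ (-(b + 1 / 2))) *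
          (Real.exp (-((1 - x - y) * s)) *
            (((1 - x - y) * s) ^ (a + 1 / 2 + (b + 1 / 2)) + 1)) := by
        refine setIntegral_mono_on integrable (majorant_integrable.const_mul _)
          measurableSet_Ioi fun s (s_pos : 0 < s) => ?_
        calc _ ≤ Real.exp (-s) * s ^ (a + b + 1) *
                (K₁ * (Real.exp (s * x) * (1 + s * x) ^ (-(a + 1 / 2))) *
                  (K₂ * (Real.exp (s * y) * (1 + s * y) ^ (-(b + 1 / 2))))) := by
              gcongr
              · exact besselPartialSum_nonneg hb n _
              · exact bessel_le₁ _ (by positivity) n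
              · exact bessel_le₂ _ (by positivity) n
          _ = K₁ * K₂ * (Real.exp (-s) * s ^ (a + 1 / 2 + (b + 1 / 2)) *
                (Real.exp (s * x) * (1 + s * x) ^ (-(a + 1 / 2)) *
                  (Real.exp (s * y) * (1 + s * y) ^ (-(b + 1 / 2))))) := by
              rw [exponent_eq]
              ring
          _ ≤ _ := by
              rw [mul_assoc (K₁ * K₂)]
              exact mul_le_mul_of_nonneg_left (exp_neg_mul_rpow_mul_bessel_majorants_le
                (by positivity) (by positivity) s_pos hx hy hxy) (by positivity)
    _ = _ := by
        rw [integral_const_mul, majorant_integral]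
        ring

theorem exists_tsum_poissonCoeff_le (ha : 0 < a) (hb : 0 < b) : ∃ K > 0, ∀ x y, 0 ≤ x → 0 ≤ y →
    x + y < 1 → Summable (fun q => poissonCoeff a b q * (x ^ (2 * q.1) * y ^ (2 * q.2))) ∧
    ∑' q, poissonCoeff a b q * (x ^ (2 * q.1) * y ^ (2 * q.2)) ≤
      K * ((1 - x - y)⁻¹ * ((1 - y) ^ (-(a + 1 / 2)) * (1 - x) ^ (-(b + 1 / 2)))) := by
  obtain ⟨K, K_pos, square_le⟩ := exists_sum_poissonCoeff_le ha hb
  refine ⟨K, K_pos, fun x y hx hy hxy => ?_⟩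
  have terms_nonneg (q : ℕ × ℕ) : 0 ≤ poissonCoeff a b q * (x ^ (2 * q.1) * y ^ (2 * q.2)) := by
    have := poissonCoeff_pos ha hb q
    positivity
  have sum_le (u : Finset (ℕ × ℕ)) :
      ∑ q ∈ u, poissonCoeff a b q * (x ^ (2 * q.1) * y ^ (2 * q.2)) ≤
        K * ((1 - x - y)⁻¹ * ((1 - y) ^ (-(a + 1 / 2)) * (1 - x) ^ (-(b + 1 / 2)))) := by
    have u_subset : u ⊆ Finset.range (u.sup (fun q => q.1 + q.2) + 1) ×ˢ
        Finset.range (u.sup (fun q => q.1 + q.2) + 1) := fun q hq => by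
      have := Finset.le_sup (f := fun q : ℕ × ℕ => q.1 + q.2) hq
      simp only [Finset.mem_product, Finset.mem_range]
      lia
    exact (Finset.sum_le_sum_of_subset_of_nonneg u_subset fun q _ _ => terms_nonneg q).trans
      (square_le x y hx hy hxy _)
  exact ⟨summable_of_sum_le terms_nonneg sum_le, Real.tsum_le_of_sum_le terms_nonneg sum_le⟩

end PoissonBound

/-! ### The Jacobi–Poisson kernel as a double series -/

section KernelSeries

open Polynomial
open Finset (HasAntidiagonal)

variable {a b t X Y : ℝ}

lemma hasSum_sum_antidiagonal {f : ℕ × ℕ → ℝ} (hf : Summable f) :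
    HasSum (fun k => ∑ q ∈ HasAntidiagonal.antidiagonal k, f q) (∑' q, f q) :=
  ((HasAntidiagonal.sigmaAntidiagonalEquivProd.hasSum_iff.2 hf.hasSum).sigma fun _ =>
    hasSum_fintype _).congr_fun fun _ => (Finset.sum_coe_sort _ f).symm

lemma summable_of_summable_sum_antidiagonal {f : ℕ × ℕ → ℝ} (hf : ∀ q, 0 ≤ f q)
    (h : Summable fun k => ∑ q ∈ HasAntidiagonal.antidiagonal k, f q) : Summable f := by
  rw [← HasAntidiagonal.sigmaAntidiagonalEquivProd.summable_iff]
  refine (summable_sigma_of_nonneg fun _ => hf _).2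
    ⟨fun k => Summable.of_finite, h.congr fun k => ?_⟩
  rw [tsum_fintype]
  exact (Finset.sum_coe_sort _ f).symm

/-- The factor `sinh (t/2) / cosh (t/2) ^ (s + 1 + 2k)` carrying the time dependence of the
terms of degree `k` of the double series of the kernel. -/
def timeFactor (s t : ℝ) (k : ℕ) : ℝ :=
  Real.sinh (t / 2) * (Real.cosh (t / 2) ^ (-(s + 1)) * ((Real.cosh (t / 2) ^ 2)⁻¹) ^ k)

lemma timeFactor_pos (s : ℝ) (ht : 0 < t) (k : ℕ) : 0 < timeFactor s t k := by
  have := Real.cosh_pos (t / 2)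
  have : 0 < Real.sinh (t / 2) := Real.sinh_pos_iff.2 (by linarith)
  rw [timeFactor]
  positivity

/-- The terms of the double series of the kernel in the variables `X = sin² (θ/2)` and
`Y = sin² (φ/2)`. -/
def productTerm (a b t X Y : ℝ) (q : ℕ × ℕ) : ℝ :=
  poissonCoeff a b q * timeFactor (a + b + 1) t (q.1 + q.2) *
    ((X * Y) ^ q.1 * ((1 - X) * (1 - Y)) ^ q.2)

/-- The terms of the double series obtained from the spectral series of the kernel by expanding
each exponential `exp (-t √λₙ)` in the functions `timeFactor`; the index is `q = (n, m)`. -/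
def spectralTerm (a b t X Y : ℝ) (q : ℕ × ℕ) : ℝ :=
  Real.Gamma (2 * ((q.1 + q.2 : ℕ) : ℝ) + (a + b + 1) + 1) / 4 ^ (q.1 + q.2) *
    timeFactor (a + b + 1) t (q.1 + q.2) *
    (spectralWeight a b q.1 * batemanCoeff a b (q.1 + q.2) q.1) *
    ((jacobiPoly a b q.1).eval X * (jacobiPoly a b q.1).eval Y)

lemma spectralTerm_weight_pos (ha : 0 < a) (hb : 0 < b) (ht : 0 < t) (q : ℕ × ℕ) :
    0 < Real.Gamma (2 * ((q.1 + q.2 : ℕ) : ℝ) + (a + b + 1) + 1) / 4 ^ (q.1 + q.2) *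
      timeFactor (a + b + 1) t (q.1 + q.2) *
      (spectralWeight a b q.1 * batemanCoeff a b (q.1 + q.2) q.1) := by
  have := Real.Gamma_pos_of_pos (s := 2 * ((q.1 + q.2 : ℕ) : ℝ) + (a + b + 1) + 1) (by positivity)
  have := timeFactor_pos (a + b + 1) ht (q.1 + q.2)
  have := spectralWeight_pos ha hb q.1
  have := Real.Gamma_pos_of_pos (s := ((q.1 + q.2 : ℕ) : ℝ) + q.1 + a + b + 2) (by positivity)
  rw [batemanCoeff]
  positivity

lemma sum_antidiagonal_productTerm (ha : 0 < a) (hb : 0 < b) (t X Y : ℝ) (k : ℕ) :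
    ∑ q ∈ HasAntidiagonal.antidiagonal k, productTerm a b t X Y q =
      ∑ q ∈ HasAntidiagonal.antidiagonal k, spectralTerm a b t X Y q := by
  calc _ = Real.Gamma (2 * (k : ℝ) + (a + b + 1) + 1) / 4 ^ k * timeFactor (a + b + 1) t k *
          ∑ q ∈ HasAntidiagonal.antidiagonal k, besselCoeff a q.1 * besselCoeff b q.2 *
            ((X * Y) ^ q.1 * ((1 - X) * (1 - Y)) ^ q.2) := by
        rw [Finset.mul_sum]
        refine Finset.sum_congr rfl fun q hq => ?_
        rw [productTerm, poissonCoeff, HasAntidiagonal.mem_antidiagonal.1 hq]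
        ring
    _ = _ := by
        rw [bateman_expansion ha hb, Finset.mul_sum,
          Finset.Nat.sum_antidiagonal_eq_sum_range_succ_mk]
        refine Finset.sum_congr rfl fun n hn => ?_
        simp only [spectralTerm, Nat.add_sub_cancel' (Nat.lt_succ_iff.1 (Finset.mem_range.1 hn))]
        ring

lemma sqrt_mul_add_sqrt_one_sub_mul_le_one (hX : X ∈ Icc 0 1) (hY : Y ∈ Icc 0 1) :
    √(X * Y) + √((1 - X) * (1 - Y)) ≤ 1 := by
  have geom_le_arith {u v : ℝ} (hu : 0 ≤ u) (hv : 0 ≤ v) : √(u * v) ≤ (u + v) / 2 :=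
    Real.sqrt_le_iff.2 ⟨by positivity, by nlinarith [sq_nonneg (u - v)]⟩
  linarith [geom_le_arith hX.1 hY.1, geom_le_arith (sub_nonneg.2 hX.2) (sub_nonneg.2 hY.2)]

lemma summable_productTerm (ha : 0 < a) (hb : 0 < b) (ht : 0 < t) (hX : X ∈ Icc 0 1)
    (hY : Y ∈ Icc 0 1) : Summable (productTerm a b t X Y) := by
  obtain ⟨_, -, summable_and_le⟩ := exists_tsum_poissonCoeff_le ha hb
  set c := Real.cosh (t / 2) with hc
  have one_lt_c : 1 < c := Real.one_lt_cosh.2 (by positivity)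
  have c_pos : 0 < c := by positivity
  have sq_sqrt_mul : √(X * Y) ^ 2 = X * Y := Real.sq_sqrt (mul_nonneg hX.1 hY.1)
  have sq_sqrt_one_sub : √((1 - X) * (1 - Y)) ^ 2 = (1 - X) * (1 - Y) :=
    Real.sq_sqrt (mul_nonneg (sub_nonneg.2 hX.2) (sub_nonneg.2 hY.2))
  have series := (summable_and_le (√(X * Y) / c) (√((1 - X) * (1 - Y)) / c) (by positivity)
    (by positivity) (by
      rw [← add_div, div_lt_one c_pos]
      linarith [sqrt_mul_add_sqrt_one_sub_mul_le_one hX hY])).1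
  refine (series.mul_left (Real.sinh (t / 2) * c ^ (-(a + b + 1 + 1)))).congr fun q => ?_
  rw [productTerm, timeFactor, div_pow, div_pow, pow_mul √(X * Y) 2,
    pow_mul √((1 - X) * (1 - Y)) 2, pow_mul c 2 q.1, pow_mul c 2 q.2, sq_sqrt_mul,
    sq_sqrt_one_sub, pow_add, ← hc, inv_pow, inv_pow]
  field_simp

lemma summable_spectralTerm_self (ha : 0 < a) (hb : 0 < b) (ht : 0 < t) (hX : X ∈ Icc 0 1) :
    Summable (spectralTerm a b t X X) := by
  refine summable_of_summable_sum_antidiagonal (fun q => ?_)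
    ((hasSum_sum_antidiagonal (summable_productTerm ha hb ht hX hX)).summable.congr fun k =>
      sum_antidiagonal_productTerm ha hb t X X k)
  exact mul_nonneg (spectralTerm_weight_pos ha hb ht q).le (mul_self_nonneg _)

lemma summable_spectralTerm (ha : 0 < a) (hb : 0 < b) (ht : 0 < t) (hX : X ∈ Icc 0 1)
    (hY : Y ∈ Icc 0 1) : Summable (spectralTerm a b t X Y) := by
  refine Summable.of_norm_bounded ((summable_spectralTerm_self ha hb ht hX).add
    (summable_spectralTerm_self ha hb ht hY)) fun q => ?_
  have weight_pos := spectralTerm_weight_pos ha hb ht q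
  simp only [spectralTerm]
  rw [norm_mul, Real.norm_of_nonneg weight_pos.le, ← mul_add]
  refine mul_le_mul_of_nonneg_left (abs_le.2 ⟨?_, ?_⟩) weight_pos.le <;>
  nlinarith [sq_nonneg ((jacobiPoly a b q.1).eval X - (jacobiPoly a b q.1).eval Y),
    sq_nonneg ((jacobiPoly a b q.1).eval X + (jacobiPoly a b q.1).eval Y)]

lemma tsum_spectralTerm (ha : 0 < a) (hb : 0 < b) (ht : 0 < t) (X Y : ℝ) (n : ℕ) :
    ∑' m, spectralTerm a b t X Y (n, m) =
      2 ^ (a + b + 1) * Real.exp (-(t * (n + (a + b + 1) / 2))) *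
        (spectralWeight a b n * ((jacobiPoly a b n).eval X * (jacobiPoly a b n).eval Y)) := by
  have exponential_series :=
    hasSum_genCentralBinom_mul_cosh (s := 2 * n + (a + b + 1)) (by positivity) ht
  have two_rpow_eq : (2 : ℝ) ^ (2 * (n : ℝ) + (a + b + 1)) = 4 ^ n * 2 ^ (a + b + 1) := by
    rw [Real.rpow_add two_pos, Real.rpow_mul two_pos.le, Real.rpow_natCast]
    norm_num
  have exponent_eq : (2 * (n : ℝ) + (a + b + 1)) / 2 * t = t * (n + (a + b + 1) / 2) := by ring
  rw [two_rpow_eq, exponent_eq] at exponential_series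
  have value_eq : 2 ^ (a + b + 1) * Real.exp (-(t * (n + (a + b + 1) / 2))) *
      (spectralWeight a b n * ((jacobiPoly a b n).eval X * (jacobiPoly a b n).eval Y)) =
      spectralWeight a b n * ((jacobiPoly a b n).eval X * (jacobiPoly a b n).eval Y) / 4 ^ n *
        (4 ^ n * 2 ^ (a + b + 1) * Real.exp (-(t * (n + (a + b + 1) / 2)))) := by
    field_simp
  rw [value_eq, ← (exponential_series.mul_left _).tsum_eq]
  refine tsum_congr fun m => ?_
  have cosh_rpow_eq : Real.cosh (t / 2) ^ (-(2 * (n : ℝ) + (a + b + 1) + 1)) =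
      Real.cosh (t / 2) ^ (-(a + b + 1 + 1)) * ((Real.cosh (t / 2) ^ 2)⁻¹) ^ n := by
    rw [← rpow_neg_add_two_mul_natCast (Real.cosh_pos _)]
    congr 1
    ring
  have Gamma_arg₁ : 2 * ((n + m : ℕ) : ℝ) + (a + b + 1) + 1 =
      2 * n + (a + b + 1) + 2 * m + 1 := by push_cast; ring
  have Gamma_arg₂ : ((n + m : ℕ) : ℝ) + n + a + b + 2 = m + (2 * n + (a + b + 1)) + 1 := by
    push_cast; ring
  simp only [spectralTerm, batemanCoeff, timeFactor, genCentralBinom, besselCoeff,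
    Nat.add_sub_cancel_left]
  rw [cosh_rpow_eq, pow_add, pow_add, Gamma_arg₁, Gamma_arg₂]
  have := Real.Gamma_pos_of_pos (s := (m : ℝ) + (2 * n + (a + b + 1)) + 1) (by positivity)
  field_simp

-- Regroup the double series along antidiagonals, apply Bateman's expansion on each of them, and
-- sum the resulting spectral double series over the degree `m` first.
theorem jHker_eq_tsum_productTerm (ha : 0 < a) (hb : 0 < b) (ht : 0 < t) (θ φ : ℝ) :
    jHker a b t θ φ = (2 * 2 ^ (a + b + 1))⁻¹ *
      ∑' q, productTerm a b t (Real.sin (θ / 2) ^ 2) (Real.sin (φ / 2) ^ 2) q := by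
  have hX : Real.sin (θ / 2) ^ 2 ∈ Icc 0 1 := ⟨sq_nonneg _, Real.sin_sq_le_one _⟩
  have hY : Real.sin (φ / 2) ^ 2 ∈ Icc 0 1 := ⟨sq_nonneg _, Real.sin_sq_le_one _⟩
  have spectral_summable := summable_spectralTerm ha hb ht hX hY
  rw [← (hasSum_sum_antidiagonal (summable_productTerm ha hb ht hX hY)).tsum_eq]
  simp only [sum_antidiagonal_productTerm ha hb]
  rw [(hasSum_sum_antidiagonal spectral_summable).tsum_eq, spectral_summable.tsum_prod, jHker,
    ← tsum_mul_left, ← tsum_mul_left]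
  refine tsum_congr fun n => ?_
  rw [tsum_spectralTerm ha hb ht, mul_assoc (Real.exp _), trigP_mul_trigP ha hb, jLam,
    Real.sqrt_sq (by positivity), neg_mul]
  field_simp

end KernelSeries

/-! ### Locally normally convergent series of products -/

section ProductSeries

open Metric

variable {ι : Type*} {Ω : ℂ → ℂ → ℂ → Prop} {f g h : ι → ℂ → ℂ} {τ z w : ℂ} {r B : ℝ}

/-- The series `∑ i, f i τ * g i z * h i w` of products of functions in separate variables. -/
def prodSeries (f g h : ι → ℂ → ℂ) (τ z w : ℂ) : ℂ := ∑' i, f i τ * g i z * h i w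

/-- The terms of `prodSeries f g h` are holomorphic and their series converges normally near each
point of the domain `Ω`, which is given as a predicate on triples of points. -/
def LocallyNormal (Ω : ℂ → ℂ → ℂ → Prop) (f g h : ι → ℂ → ℂ) : Prop :=
  ∀ τ z w, Ω τ z w → ∃ ε > 0, ∃ u : ι → ℝ, Summable u ∧
    (∀ i, DifferentiableOn ℂ (f i) (ball τ ε)) ∧
    (∀ i, DifferentiableOn ℂ (g i) (ball z ε)) ∧
    (∀ i, DifferentiableOn ℂ (h i) (ball w ε)) ∧
    ∀ τ' ∈ ball τ ε, ∀ z' ∈ ball z ε, ∀ w' ∈ ball w ε, ∀ i, ‖f i τ' * g i z' * h i w'‖ ≤ u i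

/-- The family of `n`-th derivatives of a family of functions. -/
def termwiseDeriv (n : ℕ) (f : ι → ℂ → ℂ) : ι → ℂ → ℂ := fun i => iteratedDeriv n (f i)

lemma termwiseDeriv_zero (f : ι → ℂ → ℂ) : termwiseDeriv 0 f = f :=
  funext fun _ => iteratedDeriv_zero

lemma termwiseDeriv_succ (n : ℕ) (f : ι → ℂ → ℂ) :
    termwiseDeriv (n + 1) f = fun i => deriv (termwiseDeriv n f i) :=
  funext fun _ => iteratedDeriv_succ

lemma prodSeries_rotate (f g h : ι → ℂ → ℂ) (τ z w : ℂ) :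
    prodSeries g h f z w τ = prodSeries f g h τ z w :=
  tsum_congr fun _ => by ring

namespace LocallyNormal

lemma rotate (H : LocallyNormal Ω f g h) : LocallyNormal (fun z w τ => Ω τ z w) g h f := by
  intro z w τ hΩ
  obtain ⟨ε, hε, u, hu, hf, hg, hh, norm_le⟩ := H τ z w hΩ
  refine ⟨ε, hε, u, hu, hg, hh, hf, fun z' hz w' hw τ' hτ i => ?_⟩
  rw [mul_comm, ← mul_assoc]
  exact norm_le τ' hτ z' hz w' hw i

lemma deriv (H : LocallyNormal Ω f g h) : LocallyNormal Ω (fun i => deriv (f i)) g h := by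
  intro τ z w hΩ
  obtain ⟨ε, hε, u, hu, hf, hg, hh, norm_le⟩ := H τ z w hΩ
  have ball_half_subset (x : ℂ) : ball x (ε / 2) ⊆ ball x ε := ball_subset_ball (by linarith)
  refine ⟨ε / 2, by positivity, fun i => u i / (ε / 4), hu.div_const _,
    fun i => ((hf i).deriv isOpen_ball).mono (ball_half_subset τ),
    fun i => (hg i).mono (ball_half_subset z), fun i => (hh i).mono (ball_half_subset w),
    fun τ' hτ z' hz w' hw i => ?_⟩
  have closedBall_subset : closedBall τ' (ε / 4) ⊆ ball τ ε := by
    intro x hx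
    rw [mem_closedBall] at hx
    rw [mem_ball] at hτ ⊢
    linarith [dist_triangle x τ' τ]
  have term_diffContOnCl :
      DiffContOnCl ℂ (fun x => f i x * g i z' * h i w') (ball τ' (ε / 4)) := by
    refine DifferentiableOn.diffContOnCl ?_
    rw [closure_ball _ (by positivity)]
    exact (((hf i).mono closedBall_subset).mul_const _).mul_const _
  have hf' : DifferentiableAt ℂ (f i) τ' :=
    (hf i).differentiableAt (isOpen_ball.mem_nhds (ball_half_subset τ hτ))
  rw [← ((hf'.hasDerivAt.mul_const (g i z')).mul_const (h i w')).deriv]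
  exact Complex.norm_deriv_le_of_forall_mem_sphere_norm_le (by positivity) term_diffContOnCl
    fun x hx => norm_le x (closedBall_subset (sphere_subset_closedBall hx)) z'
      (ball_half_subset z hz) w' (ball_half_subset w hw) i

lemma hasDerivAt (H : LocallyNormal Ω f g h) (hΩ : Ω τ z w) :
    HasDerivAt (fun x => prodSeries f g h x z w)
      (prodSeries (fun i => _root_.deriv (f i)) g h τ z w) τ := by
  obtain ⟨ε, hε, u, hu, hf, -, -, norm_le⟩ := H τ z w hΩ
  have ball_mem_nhds : ball τ ε ∈ nhds τ := ball_mem_nhds τ hε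
  have term_differentiable (i : ι) :
      DifferentiableOn ℂ (fun x => f i x * g i z * h i w) (ball τ ε) :=
    ((hf i).mul_const _).mul_const _
  have term_norm_le (i : ι) (x : ℂ) (hx : x ∈ ball τ ε) : ‖f i x * g i z * h i w‖ ≤ u i :=
    norm_le x hx z (mem_ball_self hε) w (mem_ball_self hε) i
  have series_differentiable := Complex.differentiableOn_tsum_of_summable_norm hu
    term_differentiable isOpen_ball term_norm_le
  have deriv_hasSum := Complex.hasSum_deriv_of_summable_norm hu term_differentiable isOpen_ball
    term_norm_le (mem_ball_self hε)
  refine (series_differentiable.differentiableAt ball_mem_nhds).hasDerivAt.congr_deriv ?_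
  rw [← deriv_hasSum.tsum_eq]
  exact tsum_congr fun i =>
    (((((hf i).differentiableAt ball_mem_nhds).hasDerivAt).mul_const _).mul_const _).deriv

lemma termwiseDeriv (H : LocallyNormal Ω f g h) (n : ℕ) :
    LocallyNormal Ω (termwiseDeriv n f) g h := by
  induction n with
  | zero => rwa [termwiseDeriv_zero]
  | succ n ih => rw [termwiseDeriv_succ]; exact ih.deriv

lemma hasDerivAt_termwiseDeriv (H : LocallyNormal Ω f g h) (n : ℕ) (hΩ : Ω τ z w) :
    HasDerivAt (fun x => prodSeries (JacobiPoisson.termwiseDeriv n f) g h x z w)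
      (prodSeries (JacobiPoisson.termwiseDeriv (n + 1) f) g h τ z w) τ := by
  rw [termwiseDeriv_succ]
  exact (H.termwiseDeriv n).hasDerivAt hΩ

lemma iteratedDeriv_eq (H : LocallyNormal Ω f g h) (n : ℕ) {U : Set ℂ} (hU : IsOpen U)
    (hΩ : ∀ x ∈ U, Ω x z w) (hτ : τ ∈ U) :
    iteratedDeriv n (fun x => prodSeries f g h x z w) τ =
      prodSeries (JacobiPoisson.termwiseDeriv n f) g h τ z w := by
  induction n generalizing τ with
  | zero => rw [iteratedDeriv_zero, termwiseDeriv_zero]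
  | succ n ih =>
    rw [iteratedDeriv_succ,
      (Filter.eventuallyEq_of_mem (hU.mem_nhds hτ) fun x hx => ih hx).deriv_eq]
    exact (H.hasDerivAt_termwiseDeriv n (hΩ τ hτ)).deriv

lemma norm_prodSeries_termwiseDeriv_le (H : LocallyNormal Ω f g h) (n : ℕ) (hr : 0 < r)
    (hΩ : ∀ x ∈ closedBall τ r, Ω x z w)
    (hB : ∀ x ∈ closedBall τ r, ‖prodSeries f g h x z w‖ ≤ B) :
    ‖prodSeries (JacobiPoisson.termwiseDeriv n f) g h τ z w‖ ≤ n.factorial * B / r ^ n := by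
  rw [← H.iteratedDeriv_eq n isOpen_ball (fun x hx => hΩ x (ball_subset_closedBall hx))
    (mem_ball_self hr)]
  refine Complex.norm_iteratedDeriv_le_of_forall_mem_sphere_norm_le n hr ?_
    fun x hx => hB x (sphere_subset_closedBall hx)
  refine DifferentiableOn.diffContOnCl ?_
  rw [closure_ball _ hr.ne']
  exact fun x hx => (H.hasDerivAt (hΩ x hx)).differentiableAt.differentiableWithinAt

theorem norm_prodSeries_termwiseDeriv₃_le (H : LocallyNormal Ω f g h) (l m n : ℕ) (hr : 0 < r)
    (hΩ : ∀ τ' ∈ closedBall τ r, ∀ z' ∈ closedBall z r, ∀ w' ∈ closedBall w r, Ω τ' z' w')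
    (hB : ∀ τ' ∈ closedBall τ r, ∀ z' ∈ closedBall z r, ∀ w' ∈ closedBall w r,
      ‖prodSeries f g h τ' z' w'‖ ≤ B) :
    ‖prodSeries (JacobiPoisson.termwiseDeriv l f) (JacobiPoisson.termwiseDeriv m g)
        (JacobiPoisson.termwiseDeriv n h) τ z w‖ ≤
      n.factorial * (m.factorial * (l.factorial * B / r ^ l) / r ^ m) / r ^ n := by
  have self_mem (x : ℂ) : x ∈ closedBall x r := mem_closedBall_self hr.le
  rw [← prodSeries_rotate, ← prodSeries_rotate]
  refine ((H.termwiseDeriv l).rotate.termwiseDeriv m).rotate.norm_prodSeries_termwiseDeriv_le n hr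
    (fun w' hw => hΩ τ (self_mem τ) z (self_mem z) w' hw) fun w' hw => ?_
  rw [prodSeries_rotate]
  refine (H.termwiseDeriv l).rotate.norm_prodSeries_termwiseDeriv_le m hr
    (fun z' hz => hΩ τ (self_mem τ) z' hz w' hw) fun z' hz => ?_
  rw [prodSeries_rotate]
  exact H.norm_prodSeries_termwiseDeriv_le l hr (fun τ' hτ => hΩ τ' hτ z' hz w' hw)
    fun τ' hτ => hB τ' hτ z' hz w' hw

end LocallyNormal

end ProductSeries

/-! ### Holomorphic extension of the kernel -/

section ComplexKernel

open Metric

variable {a b t A S C m : ℝ} {τ z w : ℂ}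

/-- The holomorphic extension to complex time of the factor of index `q` carrying the time
dependence in the double series of the kernel. -/
def complexTimeFactor (a b : ℝ) (q : ℕ × ℕ) (τ : ℂ) : ℂ :=
  poissonCoeff a b q * (Complex.sinh (τ / 2) *
    (Complex.cosh (τ / 2) ^ ((-(a + b + 1 + 1) : ℝ) : ℂ) *
      ((Complex.cosh (τ / 2) ^ 2)⁻¹) ^ (q.1 + q.2)))

/-- The factor of index `q` carrying the dependence on one of the two angles in the double series
of the kernel. -/
def angularFactor (q : ℕ × ℕ) (z : ℂ) : ℂ :=
  (Complex.sin (z / 2) ^ 2) ^ q.1 * (Complex.cos (z / 2) ^ 2) ^ q.2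

/-- The quantity `|sin (z/2) sin (w/2)|`. -/
def sinProd (z w : ℂ) : ℝ := ‖Complex.sin (z / 2)‖ * ‖Complex.sin (w / 2)‖

/-- The quantity `|cos (z/2) cos (w/2)|`. -/
def cosProd (z w : ℂ) : ℝ := ‖Complex.cos (z / 2)‖ * ‖Complex.cos (w / 2)‖

/-- The domain of convergence of the complexified double series of the kernel; positivity of the
real part keeps `cosh (τ/2)` off the branch cut of the complex power. -/
def PoissonDomain (τ z w : ℂ) : Prop :=
  0 < (Complex.cosh (τ / 2)).re ∧ sinProd z w + cosProd z w < ‖Complex.cosh (τ / 2)‖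

lemma sinProd_nonneg (z w : ℂ) : 0 ≤ sinProd z w := by unfold sinProd; positivity

lemma cosProd_nonneg (z w : ℂ) : 0 ≤ cosProd z w := by unfold cosProd; positivity

lemma norm_complexTimeFactor_mul (ha : 0 < a) (hb : 0 < b) (hτ : 0 < (Complex.cosh (τ / 2)).re)
    (z w : ℂ) (q : ℕ × ℕ) :
    ‖complexTimeFactor a b q τ * angularFactor q z * angularFactor q w‖ =
      ‖Complex.sinh (τ / 2)‖ * ‖Complex.cosh (τ / 2)‖ ^ (-(a + b + 1 + 1)) *
        (poissonCoeff a b q * ((sinProd z w / ‖Complex.cosh (τ / 2)‖) ^ (2 * q.1) *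
          (cosProd z w / ‖Complex.cosh (τ / 2)‖) ^ (2 * q.2))) := by
  have : 0 < ‖Complex.cosh (τ / 2)‖ := hτ.trans_le (Complex.re_le_norm _)
  simp only [complexTimeFactor, angularFactor, sinProd, cosProd, norm_mul, norm_pow, norm_inv,
    Complex.norm_real, Complex.norm_cpow_real, Real.norm_of_nonneg (poissonCoeff_pos ha hb q).le,
    div_pow, mul_pow, pow_mul, pow_add, inv_pow]
  field_simp

lemma norm_complexTimeFactor_mul_le (ha : 0 < a) (hb : 0 < b)
    (hτ : 0 < (Complex.cosh (τ / 2)).re) (hA : ‖Complex.sinh (τ / 2)‖ ≤ A) (hm₀ : 0 < m)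
    (hm : m ≤ ‖Complex.cosh (τ / 2)‖) (hS : sinProd z w ≤ S) (hC : cosProd z w ≤ C)
    (q : ℕ × ℕ) :
    ‖complexTimeFactor a b q τ * angularFactor q z * angularFactor q w‖ ≤
      A * m ^ (-(a + b + 1 + 1)) *
        (poissonCoeff a b q * ((S / m) ^ (2 * q.1) * (C / m) ^ (2 * q.2))) := by
  have := poissonCoeff_pos ha hb q
  have rpow_le : ‖Complex.cosh (τ / 2)‖ ^ (-(a + b + 1 + 1)) ≤ m ^ (-(a + b + 1 + 1)) :=
    Real.rpow_le_rpow_of_nonpos hm₀ hm (by linarith)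
  have sin_nonneg := sinProd_nonneg z w
  have cos_nonneg := cosProd_nonneg z w
  have A_nonneg := (norm_nonneg _).trans hA
  have S_nonneg := sin_nonneg.trans hS
  have C_nonneg := cos_nonneg.trans hC
  rw [norm_complexTimeFactor_mul ha hb hτ]
  gcongr

lemma differentiable_angularFactor (q : ℕ × ℕ) : Differentiable ℂ (angularFactor q) := by
  unfold angularFactor
  fun_prop

lemma differentiableAt_complexTimeFactor (a b : ℝ) (q : ℕ × ℕ)
    (hτ : 0 < (Complex.cosh (τ / 2)).re) : DifferentiableAt ℂ (complexTimeFactor a b q) τ := by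
  have cosh_ne_zero : Complex.cosh (τ / 2) ≠ 0 := fun h => by simp [h] at hτ
  have cosh_diff : DifferentiableAt ℂ (fun τ : ℂ => Complex.cosh (τ / 2)) τ := by fun_prop
  have sinh_diff : DifferentiableAt ℂ (fun τ : ℂ => Complex.sinh (τ / 2)) τ := by fun_prop
  exact (sinh_diff.mul ((cosh_diff.cpow (differentiableAt_const _) (Or.inl hτ)).mul
    (((cosh_diff.pow 2).inv (pow_ne_zero 2 cosh_ne_zero)).pow _))).const_mul _

lemma PoissonDomain.exists_ball (h : PoissonDomain τ z w) : ∃ ε > 0, ∃ A S C m : ℝ,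
    0 ≤ S ∧ 0 ≤ C ∧ 0 < m ∧ S + C < m ∧
    ∀ τ' ∈ ball τ ε, ∀ z' ∈ ball z ε, ∀ w' ∈ ball w ε,
      0 < (Complex.cosh (τ' / 2)).re ∧ ‖Complex.sinh (τ' / 2)‖ ≤ A ∧
      m ≤ ‖Complex.cosh (τ' / 2)‖ ∧ sinProd z' w' ≤ S ∧ cosProd z' w' ≤ C := by
  obtain ⟨re_pos, add_lt⟩ := h
  set δ := (‖Complex.cosh (τ / 2)‖ - sinProd z w - cosProd z w) / 4 with δ_def
  have δ_pos : 0 < δ := by linarith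
  have sin_nonneg := sinProd_nonneg z w
  have cos_nonneg := cosProd_nonneg z w
  have near : ∀ᶠ x in nhds (τ, z, w), 0 < (Complex.cosh (x.1 / 2)).re ∧
      ‖Complex.sinh (x.1 / 2)‖ < ‖Complex.sinh (τ / 2)‖ + δ ∧
      ‖Complex.cosh (τ / 2)‖ - δ < ‖Complex.cosh (x.1 / 2)‖ ∧
      sinProd x.2.1 x.2.2 < sinProd z w + δ ∧ cosProd x.2.1 x.2.2 < cosProd z w + δ := by
    simp only [Filter.eventually_and, sinProd, cosProd]
    refine ⟨?_, ?_, ?_, ?_, ?_⟩ <;> refine ContinuousAt.eventually_lt (by fun_prop) (by fun_prop) ?_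
    all_goals linarith
  obtain ⟨ε, ε_pos, near_ball⟩ := Metric.eventually_nhds_iff_ball.1 near
  refine ⟨ε, ε_pos, ‖Complex.sinh (τ / 2)‖ + δ, sinProd z w + δ, cosProd z w + δ,
    ‖Complex.cosh (τ / 2)‖ - δ, by positivity, by positivity, by linarith, by linarith,
    fun τ' hτ z' hz w' hw => ?_⟩
  obtain ⟨re_pos', sinh_lt, cosh_gt, sin_lt, cos_lt⟩ := near_ball (τ', z', w') (by
    rw [← ball_prod_same, ← ball_prod_same]
    exact ⟨hτ, hz, hw⟩)
  exact ⟨re_pos', sinh_lt.le, cosh_gt.le, sin_lt.le, cos_lt.le⟩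

theorem locallyNormal_complexTimeFactor (ha : 0 < a) (hb : 0 < b) :
    LocallyNormal PoissonDomain (complexTimeFactor a b) angularFactor angularFactor := by
  intro τ z w h
  obtain ⟨ε, ε_pos, A, S, C, m, hS, hC, hm, add_lt, near⟩ := h.exists_ball
  obtain ⟨_, -, summable_and_le⟩ := exists_tsum_poissonCoeff_le ha hb
  have series := (summable_and_le (S / m) (C / m) (by positivity) (by positivity)
    (by rwa [← add_div, div_lt_one hm])).1
  refine ⟨ε, ε_pos, _, series.mul_left (A * m ^ (-(a + b + 1 + 1))), fun q τ' hτ => ?_,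
    fun q => (differentiable_angularFactor q).differentiableOn,
    fun q => (differentiable_angularFactor q).differentiableOn, fun τ' hτ z' hz w' hw q => ?_⟩
  · exact (differentiableAt_complexTimeFactor a b q
      (near τ' hτ z (mem_ball_self ε_pos) w (mem_ball_self ε_pos)).1).differentiableWithinAt
  · obtain ⟨re_pos, sinh_le, le_cosh, sin_le, cos_le⟩ := near τ' hτ z' hz w' hw
    exact norm_complexTimeFactor_mul_le ha hb re_pos sinh_le hm le_cosh sin_le cos_le q

/-- The complexified double series of the kernel. -/
def kernelSeries (a b : ℝ) : ℂ → ℂ → ℂ → ℂ :=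
  prodSeries (complexTimeFactor a b) angularFactor angularFactor

lemma rpow_mul_inv_one_sub_div_mul (a b : ℝ) (hS : 0 ≤ S) (hC : 0 ≤ C) (h : S + C < m) :
    m ^ (-(a + b + 1 + 1)) * ((1 - S / m - C / m)⁻¹ *
        ((1 - C / m) ^ (-(a + 1 / 2)) * (1 - S / m) ^ (-(b + 1 / 2)))) =
      (m - S - C)⁻¹ * ((m - C) ^ (-(a + 1 / 2)) * (m - S) ^ (-(b + 1 / 2))) := by
  have hm : 0 < m := by linarith
  have one_sub_div (x : ℝ) : 1 - x / m = (m - x) / m := by field_simp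
  have exponent_eq : -(a + b + 1 + 1) = -1 + -(a + 1 / 2) + -(b + 1 / 2) := by ring
  rw [exponent_eq, Real.rpow_add hm, Real.rpow_add hm, Real.rpow_neg_one, one_sub_div, one_sub_div,
    Real.div_rpow (by linarith) hm.le, Real.div_rpow (by linarith) hm.le]
  field_simp

theorem exists_norm_kernelSeries_le (ha : 0 < a) (hb : 0 < b) :
    ∃ K > 0, ∀ τ z w, PoissonDomain τ z w →
      ‖kernelSeries a b τ z w‖ ≤ K * (‖Complex.sinh (τ / 2)‖ *
        ((‖Complex.cosh (τ / 2)‖ - sinProd z w - cosProd z w)⁻¹ *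
          ((‖Complex.cosh (τ / 2)‖ - cosProd z w) ^ (-(a + 1 / 2)) *
            (‖Complex.cosh (τ / 2)‖ - sinProd z w) ^ (-(b + 1 / 2))))) := by
  obtain ⟨K, K_pos, summable_and_le⟩ := exists_tsum_poissonCoeff_le ha hb
  refine ⟨K, K_pos, fun τ z w h => ?_⟩
  set m := ‖Complex.cosh (τ / 2)‖
  have m_pos : 0 < m := h.1.trans_le (Complex.re_le_norm _)
  have sin_nonneg := sinProd_nonneg z w
  have cos_nonneg := cosProd_nonneg z w
  obtain ⟨series, series_le⟩ := summable_and_le (sinProd z w / m) (cosProd z w / m)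
    (by positivity) (by positivity) (by rw [← add_div, div_lt_one m_pos]; exact h.2)
  rw [← rpow_mul_inv_one_sub_div_mul a b sin_nonneg cos_nonneg h.2]
  calc ‖kernelSeries a b τ z w‖
      ≤ ∑' q : ℕ × ℕ, ‖Complex.sinh (τ / 2)‖ * m ^ (-(a + b + 1 + 1)) * (poissonCoeff a b q *
          ((sinProd z w / m) ^ (2 * q.1) * (cosProd z w / m) ^ (2 * q.2))) :=
        tsum_of_norm_bounded (series.mul_left _).hasSum fun q =>
          (norm_complexTimeFactor_mul ha hb h.1 z w q).le
    _ ≤ ‖Complex.sinh (τ / 2)‖ * m ^ (-(a + b + 1 + 1)) * (K * _) := by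
        rw [tsum_mul_left]
        gcongr
    _ = _ := by ring

lemma poissonDomain_ofReal (ht : 0 < t) (θ φ : ℝ) : PoissonDomain t θ φ := by
  have one_lt_cosh : 1 < Real.cosh (t / 2) := Real.one_lt_cosh.2 (by positivity)
  have half (x : ℝ) : (x : ℂ) / 2 = ((x / 2 : ℝ) : ℂ) := by push_cast; rfl
  simp only [PoissonDomain, sinProd, cosProd, half, ← Complex.ofReal_cosh, ← Complex.ofReal_sin,
    ← Complex.ofReal_cos, Complex.ofReal_re, Complex.norm_real, Real.norm_eq_abs,
    abs_of_pos (Real.cosh_pos _)]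
  refine ⟨by linarith, ?_⟩
  nlinarith [sq_nonneg (|Real.sin (θ / 2)| - |Real.sin (φ / 2)|),
    sq_nonneg (|Real.cos (θ / 2)| - |Real.cos (φ / 2)|), sq_abs (Real.sin (θ / 2)),
    sq_abs (Real.sin (φ / 2)), sq_abs (Real.cos (θ / 2)), sq_abs (Real.cos (φ / 2)),
    Real.sin_sq_add_cos_sq (θ / 2), Real.sin_sq_add_cos_sq (φ / 2)]

theorem jHker_eq_re_kernelSeries (ha : 0 < a) (hb : 0 < b) (ht : 0 < t) (θ φ : ℝ) :
    jHker a b t θ φ = (2 * 2 ^ (a + b + 1))⁻¹ * (kernelSeries a b t θ φ).re := by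
  suffices kernelSeries a b t θ φ =
      ((∑' q, productTerm a b t (Real.sin (θ / 2) ^ 2) (Real.sin (φ / 2) ^ 2) q : ℝ) : ℂ) by
    rw [jHker_eq_tsum_productTerm ha hb ht, this, Complex.ofReal_re]
  rw [Complex.ofReal_tsum, kernelSeries, prodSeries]
  refine tsum_congr fun q => ?_
  have cosh_eq : Complex.cosh ((t : ℂ) / 2) = ((Real.cosh (t / 2) : ℝ) : ℂ) := by push_cast; rfl
  rw [productTerm, timeFactor, complexTimeFactor, angularFactor, angularFactor, cosh_eq,
    ← Complex.ofReal_cpow (Real.cosh_pos _).le, ← Real.cos_sq', ← Real.cos_sq', mul_pow, mul_pow]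
  push_cast
  ring

lemma iterate_deriv_eq_re {F : ℕ → ℂ → ℂ} {U : Set ℝ} (hU : IsOpen U)
    (hF : ∀ n, ∀ x ∈ U, HasDerivAt (F n) (F (n + 1) x) (x : ℂ)) (c : ℝ) {u : ℝ → ℝ}
    (hu : ∀ x ∈ U, u x = c * (F 0 x).re) (n : ℕ) {x : ℝ} (hx : x ∈ U) :
    deriv^[n] u x = c * (F n x).re := by
  induction n generalizing x with
  | zero => exact hu x hx
  | succ n ih =>
    rw [Function.iterate_succ_apply',
      (Filter.eventuallyEq_of_mem (hU.mem_nhds hx) fun y hy => ih hy).deriv_eq]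
    exact ((hF n x hx).real_of_complex.const_mul c).deriv

theorem iterate_deriv_jHker (ha : 0 < a) (hb : 0 < b) (M N L : ℕ) (ht : 0 < t) (θ φ : ℝ) :
    deriv^[L] (fun φ' => deriv^[N] (fun θ' => deriv^[M] (fun s => jHker a b s θ' φ') t) θ) φ =
      (2 * 2 ^ (a + b + 1))⁻¹ * (prodSeries (termwiseDeriv M (complexTimeFactor a b))
        (termwiseDeriv N angularFactor) (termwiseDeriv L angularFactor) t θ φ).re := by
  have normal := locallyNormal_complexTimeFactor ha hb
  have time_deriv (θ' φ' : ℝ) : deriv^[M] (fun s => jHker a b s θ' φ') t =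
      (2 * 2 ^ (a + b + 1))⁻¹ * (prodSeries (termwiseDeriv M (complexTimeFactor a b))
        angularFactor angularFactor t θ' φ').re :=
    iterate_deriv_eq_re
      (F := fun n x => prodSeries (termwiseDeriv n (complexTimeFactor a b)) angularFactor
        angularFactor x θ' φ') isOpen_Ioi
      (fun n x hx => normal.hasDerivAt_termwiseDeriv n (poissonDomain_ofReal hx θ' φ')) _
      (fun x hx => by
        rw [jHker_eq_re_kernelSeries ha hb hx, termwiseDeriv_zero, kernelSeries]) M ht
  have first_angle_deriv (φ' : ℝ) :
      deriv^[N] (fun θ' => deriv^[M] (fun s => jHker a b s θ' φ') t) θ =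
        (2 * 2 ^ (a + b + 1))⁻¹ * (prodSeries (termwiseDeriv N angularFactor) angularFactor
          (termwiseDeriv M (complexTimeFactor a b)) θ φ' t).re :=
    iterate_deriv_eq_re
      (F := fun n x => prodSeries (termwiseDeriv n angularFactor) angularFactor
        (termwiseDeriv M (complexTimeFactor a b)) x φ' t) isOpen_univ
      (fun n x _ => (normal.termwiseDeriv M).rotate.hasDerivAt_termwiseDeriv n
        (poissonDomain_ofReal ht x φ')) _
      (fun x _ => by rw [time_deriv, termwiseDeriv_zero, ← prodSeries_rotate]) N (mem_univ θ)
  rw [← prodSeries_rotate, ← prodSeries_rotate]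
  exact iterate_deriv_eq_re
    (F := fun n x => prodSeries (termwiseDeriv n angularFactor)
      (termwiseDeriv M (complexTimeFactor a b)) (termwiseDeriv N angularFactor) x t θ) isOpen_univ
    (fun n x _ => ((normal.termwiseDeriv M).rotate.termwiseDeriv N).rotate.hasDerivAt_termwiseDeriv
      n (poissonDomain_ofReal ht θ x)) _
    (fun x _ => by
      rw [first_angle_deriv, termwiseDeriv_zero, prodSeries_rotate, prodSeries_rotate])
    L (mem_univ φ)

end ComplexKernel

/-! ### Hyperbolic and trigonometric estimates near the real axis -/

section NearRealAxis

variable {x x' y y' r θ φ : ℝ} {z w ζ : ℂ}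

lemma one_add_sq_div_two_le_cosh (x : ℝ) : 1 + x ^ 2 / 2 ≤ Real.cosh x := by
  have cosh_eq : Real.cosh x = 1 + 2 * Real.sinh (x / 2) ^ 2 := by
    have cosh_two_mul := Real.cosh_two_mul (x / 2)
    rw [mul_div_cancel₀ x two_ne_zero, Real.cosh_sq] at cosh_two_mul
    linarith
  have sq_le : (x / 2) ^ 2 ≤ Real.sinh (x / 2) ^ 2 := by
    rw [sq_le_sq, Real.abs_sinh]
    exact Real.self_le_sinh_iff.2 (abs_nonneg _)
  linarith

lemma cosh_le_one_add_sq (hy : |y| ≤ 1) : Real.cosh y ≤ 1 + y ^ 2 := by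
  have half_sq_nonneg : 0 ≤ y ^ 2 / 2 := by positivity
  have half_sq_le : y ^ 2 / 2 ≤ 1 := by linarith [(sq_le_one_iff_abs_le_one y).2 hy]
  have exp_le := Real.abs_exp_sub_one_le ((abs_of_nonneg half_sq_nonneg).trans_le half_sq_le)
  rw [abs_of_nonneg half_sq_nonneg] at exp_le
  linarith [Real.cosh_le_exp_half_sq y, le_abs_self (Real.exp (y ^ 2 / 2) - 1)]

lemma abs_sinh_le_cosh (x : ℝ) : |Real.sinh x| ≤ Real.cosh x :=
  abs_le_of_sq_le_sq (by linarith [Real.cosh_sq x]) (Real.cosh_pos x).le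

lemma abs_sinh_le_abs_mul_cosh (x : ℝ) : |Real.sinh x| ≤ |x| * Real.cosh x := by
  rw [Real.abs_sinh, ← Real.cosh_abs x]
  have sinh_le := (convex_Icc 0 |x|).image_sub_le_mul_sub_of_deriv_le (f := Real.sinh)
    (C := Real.cosh |x|) Real.continuous_sinh.continuousOn
    Real.differentiable_sinh.differentiableOn (fun y hy => by
      rw [interior_Icc] at hy
      rw [Real.deriv_sinh, Real.cosh_le_cosh, abs_abs, abs_of_pos hy.1]
      exact hy.2.le) 0 ⟨le_rfl, abs_nonneg x⟩ |x| ⟨abs_nonneg x, le_rfl⟩ (abs_nonneg x)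
  simpa [mul_comm] using sinh_le

lemma re_cosh_eq (ζ : ℂ) : (Complex.cosh ζ).re = Real.cosh ζ.re * Real.cos ζ.im := by
  conv_lhs => rw [← Complex.re_add_im ζ, Complex.cosh_add, Complex.cosh_mul_I, Complex.sinh_mul_I]
  simp [← Complex.ofReal_cosh, ← Complex.ofReal_cos, ← Complex.ofReal_sinh, ← Complex.ofReal_sin]

lemma cosh_mul_one_sub_le_re_cosh (ζ : ℂ) :
    Real.cosh ζ.re * (1 - ζ.im ^ 2 / 2) ≤ (Complex.cosh ζ).re := by
  rw [re_cosh_eq]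
  exact mul_le_mul_of_nonneg_left Real.one_sub_sq_div_two_le_cos (Real.cosh_pos _).le

lemma norm_cosh_le (ζ : ℂ) : ‖Complex.cosh ζ‖ ≤ Real.cosh ζ.re := by
  have norm_add_le := norm_add_le (Complex.exp ζ) (Complex.exp (-ζ))
  rw [Complex.norm_exp, Complex.norm_exp, Complex.neg_re] at norm_add_le
  rw [Complex.cosh, norm_div, Complex.norm_two, Real.cosh_eq]
  gcongr

lemma norm_sinh_le (ζ : ℂ) :
    ‖Complex.sinh ζ‖ ≤ |Real.sinh ζ.re| + Real.cosh ζ.re * |ζ.im| := by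
  conv_lhs => rw [← Complex.re_add_im ζ, Complex.sinh_add, Complex.cosh_mul_I, Complex.sinh_mul_I]
  refine (norm_add_le _ _).trans ?_
  rw [← Complex.ofReal_cosh, ← Complex.ofReal_cos, ← Complex.ofReal_sinh, ← Complex.ofReal_sin]
  simp only [norm_mul, Complex.norm_I, mul_one, Complex.norm_real, Real.norm_eq_abs,
    abs_of_pos (Real.cosh_pos ζ.re)]
  exact add_le_add (mul_le_of_le_one_right (abs_nonneg _) (Real.abs_cos_le_one _))
    (mul_le_mul_of_nonneg_left Real.abs_sin_le_abs (Real.cosh_pos _).le)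

lemma norm_sin_sq_add_norm_cos_sq (z : ℂ) :
    ‖Complex.sin z‖ ^ 2 + ‖Complex.cos z‖ ^ 2 = Real.cosh (2 * z.im) := by
  rw [← Complex.normSq_eq_norm_sq, ← Complex.normSq_eq_norm_sq, Complex.sin_eq z, Complex.cos_eq z,
    ← Complex.ofReal_sin, ← Complex.ofReal_cos, ← Complex.ofReal_sinh, ← Complex.ofReal_cosh,
    sub_eq_add_neg, ← neg_mul]
  simp only [← Complex.ofReal_mul, ← Complex.ofReal_neg, Complex.normSq_add_mul_I]
  rw [Real.cosh_two_mul]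
  linear_combination
    (Real.cosh z.im ^ 2 + Real.sinh z.im ^ 2) * Real.sin_sq_add_cos_sq z.re

lemma norm_sin_le_two_mul (h : ‖ζ‖ ≤ 1) : ‖Complex.sin ζ‖ ≤ 2 * ‖ζ‖ := by
  have exp_le := Complex.norm_exp_sub_one_le (x := ζ * Complex.I) (by simpa using h)
  have exp_neg_le := Complex.norm_exp_sub_one_le (x := -ζ * Complex.I) (by simpa using h)
  have sin_eq : Complex.sin ζ = ((Complex.exp (-ζ * Complex.I) - 1) -
      (Complex.exp (ζ * Complex.I) - 1)) * (Complex.I / 2) := by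
    rw [Complex.sin]
    ring
  have norm_sub_le := norm_sub_le
    (Complex.exp (-ζ * Complex.I) - 1) (Complex.exp (ζ * Complex.I) - 1)
  simp only [norm_mul, norm_neg, Complex.norm_I, mul_one] at exp_le exp_neg_le
  rw [sin_eq, norm_mul, norm_div, Complex.norm_I, Complex.norm_two]
  linarith

lemma norm_cos_sub_one_le_two_mul (h : ‖ζ‖ ≤ 1) : ‖Complex.cos ζ - 1‖ ≤ 2 * ‖ζ‖ := by
  have exp_le := Complex.norm_exp_sub_one_le (x := ζ * Complex.I) (by simpa using h)
  have exp_neg_le := Complex.norm_exp_sub_one_le (x := -ζ * Complex.I) (by simpa using h)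
  have cos_eq : Complex.cos ζ - 1 = ((Complex.exp (-ζ * Complex.I) - 1) +
      (Complex.exp (ζ * Complex.I) - 1)) / 2 := by
    rw [Complex.cos]
    ring
  have norm_add_le := norm_add_le
    (Complex.exp (-ζ * Complex.I) - 1) (Complex.exp (ζ * Complex.I) - 1)
  simp only [norm_mul, norm_neg, Complex.norm_I, mul_one] at exp_le exp_neg_le
  rw [cos_eq, norm_div, Complex.norm_two]
  linarith

lemma norm_sin_sub_sin_ofReal_le (h : ‖z - x‖ ≤ 1) :
    ‖Complex.sin z - Complex.sin x‖ ≤ 4 * ‖z - x‖ := by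
  have sub_eq : Complex.sin z - Complex.sin x =
      Complex.sin x * (Complex.cos (z - x) - 1) + Complex.cos x * Complex.sin (z - x) := by
    conv_lhs => rw [← add_sub_cancel (x : ℂ) z, Complex.sin_add]
    ring
  have sin_le : ‖Complex.sin x‖ ≤ 1 := by
    rw [← Complex.ofReal_sin, Complex.norm_real]
    exact Real.abs_sin_le_one x
  have cos_le : ‖Complex.cos x‖ ≤ 1 := by
    rw [← Complex.ofReal_cos, Complex.norm_real]
    exact Real.abs_cos_le_one x
  calc ‖Complex.sin z - Complex.sin x‖
      ≤ ‖Complex.sin x‖ * ‖Complex.cos (z - x) - 1‖ + ‖Complex.cos x‖ * ‖Complex.sin (z - x)‖ := by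
        rw [sub_eq, ← norm_mul, ← norm_mul]
        exact norm_add_le _ _
    _ ≤ 1 * (2 * ‖z - x‖) + 1 * (2 * ‖z - x‖) := by
        gcongr
        exacts [norm_cos_sub_one_le_two_mul h, norm_sin_le_two_mul h]
    _ = 4 * ‖z - x‖ := by ring

lemma abs_norm_sin_half_sub_le (hr : r ≤ 1) (hz : ‖z - θ‖ ≤ r) (hθ : θ ∈ Ioo 0 π) :
    |‖Complex.sin (z / 2)‖ - Real.sin (θ / 2)| ≤ 2 * r := by
  have norm_half_eq : ‖z / 2 - (θ / 2 : ℝ)‖ = ‖z - θ‖ / 2 := by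
    rw [Complex.ofReal_div, Complex.ofReal_ofNat, ← sub_div, norm_div, Complex.norm_two]
  have sin_eq : Real.sin (θ / 2) = ‖Complex.sin (θ / 2 : ℝ)‖ := by
    rw [← Complex.ofReal_sin, Complex.norm_real, Real.norm_of_nonneg (sin_half_pos hθ).le]
  calc |‖Complex.sin (z / 2)‖ - Real.sin (θ / 2)|
      ≤ ‖Complex.sin (z / 2) - Complex.sin (θ / 2 : ℝ)‖ := by
        rw [sin_eq]
        exact abs_norm_sub_norm_le _ _
    _ ≤ 4 * ‖z / 2 - (θ / 2 : ℝ)‖ := norm_sin_sub_sin_ofReal_le (by linarith)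
    _ ≤ 2 * r := by linarith

lemma norm_sin_half_pi_sub (z : ℂ) : ‖Complex.sin ((π - z) / 2)‖ = ‖Complex.cos (z / 2)‖ := by
  rw [sub_div, Complex.sin_pi_div_two_sub]

lemma pi_sub_mem_Ioo (hθ : θ ∈ Ioo 0 π) : π - θ ∈ Ioo 0 π :=
  ⟨by linarith [hθ.2], by linarith [hθ.1]⟩

lemma norm_pi_sub_sub_pi_sub (z : ℂ) (θ : ℝ) : ‖(π - z) - (π - θ : ℝ)‖ = ‖z - θ‖ := by
  rw [Complex.ofReal_sub, sub_sub_sub_cancel_left, norm_sub_rev]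

lemma abs_norm_cos_half_sub_le (hr : r ≤ 1) (hz : ‖z - θ‖ ≤ r) (hθ : θ ∈ Ioo 0 π) :
    |‖Complex.cos (z / 2)‖ - Real.cos (θ / 2)| ≤ 2 * r := by
  rw [← norm_sin_half_pi_sub, ← Real.sin_pi_div_two_sub, ← sub_div]
  exact abs_norm_sin_half_sub_le hr ((norm_pi_sub_sub_pi_sub z θ).trans_le hz) (pi_sub_mem_Ioo hθ)

lemma sq_div_ten_le_chord_sq (hθ : θ ∈ Ioo 0 π) (hφ : φ ∈ Ioo 0 π) :
    |θ - φ| ^ 2 / 10 ≤ (Real.sin (θ / 2) - Real.sin (φ / 2)) ^ 2 +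
      (Real.cos (θ / 2) - Real.cos (φ / 2)) ^ 2 := by
  have chord_eq : (Real.sin (θ / 2) - Real.sin (φ / 2)) ^ 2 +
      (Real.cos (θ / 2) - Real.cos (φ / 2)) ^ 2 = 4 * |Real.sin ((θ - φ) / 4)| ^ 2 := by
    have cos_sub := Real.cos_sub (θ / 2) (φ / 2)
    rw [show θ / 2 - φ / 2 = 2 * ((θ - φ) / 4) by ring, Real.cos_two_mul, Real.cos_sq'] at cos_sub
    rw [sq_abs]
    linear_combination Real.sin_sq_add_cos_sq (θ / 2) + Real.sin_sq_add_cos_sq (φ / 2) +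
      2 * cos_sub
  have abs_le_pi : |θ - φ| ≤ π :=
    abs_sub_le_iff.2 ⟨by linarith [hθ.2, hφ.1], by linarith [hφ.2, hθ.1]⟩
  have abs_quarter : |(θ - φ) / 4| = |θ - φ| / 4 := by rw [abs_div, abs_of_pos (four_pos (α := ℝ))]
  have jordan : 2 / π * (|θ - φ| / 4) ≤ |Real.sin ((θ - φ) / 4)| := by
    rw [← abs_quarter]
    refine Real.mul_abs_le_abs_sin ?_
    rw [abs_quarter]
    linarith [Real.pi_pos]
  have pi_sq_le : π ^ 2 ≤ 10 := by nlinarith [Real.pi_lt_d2, Real.pi_pos]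
  calc |θ - φ| ^ 2 / 10 ≤ |θ - φ| ^ 2 / π ^ 2 := by gcongr
    _ = 4 * (2 / π * (|θ - φ| / 4)) ^ 2 := by ring
    _ ≤ 4 * |Real.sin ((θ - φ) / 4)| ^ 2 := by gcongr
    _ = _ := chord_eq.symm

lemma sq_sub_div_two_sub_le_sq_sub (hx : |x - y| ≤ r) (hx' : |x' - y'| ≤ r) :
    (y - y') ^ 2 / 2 - 4 * r ^ 2 ≤ (x - x') ^ 2 := by
  have abs_le : |(y - y') - (x - x')| ≤ 2 * r := by
    rw [show (y - y') - (x - x') = (x' - y') - (x - y) by ring]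
    linarith [abs_sub (x' - y') (x - y)]
  have sq_le : ((y - y') - (x - x')) ^ 2 ≤ (2 * r) ^ 2 := sq_le_sq.2 (abs_le.trans (le_abs_self _))
  nlinarith [sq_nonneg ((y - y') - 2 * (x - x'))]

lemma cosh_im_le_one_add_sq (hr : r ≤ 1) (hz : ‖z - θ‖ ≤ r) : Real.cosh z.im ≤ 1 + r ^ 2 := by
  have im_le : |z.im| ≤ r := by simpa using (Complex.abs_im_le_norm (z - θ)).trans hz
  have sq_le : z.im ^ 2 ≤ r ^ 2 := sq_le_sq.2 (im_le.trans (le_abs_self _))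
  linarith [cosh_le_one_add_sq (im_le.trans hr)]

lemma sinProd_add_cosProd_le (hr : r ≤ 1) (hz : ‖z - θ‖ ≤ r) (hw : ‖w - φ‖ ≤ r)
    (hθ : θ ∈ Ioo 0 π) (hφ : φ ∈ Ioo 0 π) :
    sinProd z w + cosProd z w ≤ 1 + 17 * r ^ 2 - |θ - φ| ^ 2 / 40 := by
  have norm_sq (ζ : ℂ) : ‖Complex.sin (ζ / 2)‖ ^ 2 + ‖Complex.cos (ζ / 2)‖ ^ 2 =
      Real.cosh ζ.im := by
    rw [norm_sin_sq_add_norm_cos_sq, Complex.div_ofNat_im, mul_div_cancel₀ _ two_ne_zero]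
  have sin_sub := sq_sub_div_two_sub_le_sq_sub (abs_norm_sin_half_sub_le hr hz hθ)
    (abs_norm_sin_half_sub_le hr hw hφ)
  have cos_sub := sq_sub_div_two_sub_le_sq_sub (abs_norm_cos_half_sub_le hr hz hθ)
    (abs_norm_cos_half_sub_le hr hw hφ)
  unfold sinProd cosProd
  linarith [norm_sq z, norm_sq w, cosh_im_le_one_add_sq hr hz, cosh_im_le_one_add_sq hr hw,
    sq_div_ten_le_chord_sq hθ hφ]

end NearRealAxis

/-! ### Pointwise estimates of the kernel and its derivatives -/

section PointwiseEstimate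

open Metric

variable {a b t θ φ : ℝ} {τ z w : ℂ}

lemma div_pi_le_sin_half (hθ : θ ∈ Ioo 0 π) : θ / π ≤ Real.sin (θ / 2) := by
  have jordan := Real.mul_le_sin (x := θ / 2) (by linarith [hθ.1]) (by linarith [hθ.2])
  exact (by ring : θ / π = 2 / π * (θ / 2)).trans_le jordan

/-- The distance from `(t, θ, φ)` to the singular set `t = 0, θ = φ` of the kernel, capped at `1`.
It is comparable to the radius of the largest polydisc around `(t, θ, φ)` on which the holomorphic
extension is under control. -/
def kernelScale (t θ φ : ℝ) : ℝ := min (t + |θ - φ|) 1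

lemma kernelScale_pos (ht : 0 < t) (θ φ : ℝ) : 0 < kernelScale t θ φ :=
  lt_min (by positivity) one_pos

lemma kernelScale_le_one (t θ φ : ℝ) : kernelScale t θ φ ≤ 1 := min_le_right _ _

lemma kernelScale_le_add (t θ φ : ℝ) : kernelScale t θ φ ≤ t + |θ - φ| := min_le_left _ _

lemma kernelScale_eq_of_lt_one (h : kernelScale t θ φ < 1) : kernelScale t θ φ = t + |θ - φ| :=
  min_eq_left (by simpa using (min_lt_iff.1 h).resolve_right (lt_irrefl 1) |>.le)

lemma kernelScale_pi_sub (t θ φ : ℝ) : kernelScale t (π - θ) (π - φ) = kernelScale t θ φ := by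
  rw [kernelScale, kernelScale, sub_sub_sub_cancel_left, abs_sub_comm]

/-- `(τ, z, w)` belongs to the closed polydisc of radius `kernelScale t θ φ / 80` around the
interior real point `(t, θ, φ)`. -/
structure NearReal (t θ φ : ℝ) (τ z w : ℂ) : Prop where
  time_pos : 0 < t
  left_mem : θ ∈ Ioo 0 π
  right_mem : φ ∈ Ioo 0 π
  norm_time_sub_le : ‖τ - t‖ ≤ kernelScale t θ φ / 80
  norm_left_sub_le : ‖z - θ‖ ≤ kernelScale t θ φ / 80
  norm_right_sub_le : ‖w - φ‖ ≤ kernelScale t θ φ / 80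

namespace NearReal

lemma pi_sub (h : NearReal t θ φ τ z w) : NearReal t (π - θ) (π - φ) τ (π - z) (π - w) where
  time_pos := h.time_pos
  left_mem := pi_sub_mem_Ioo h.left_mem
  right_mem := pi_sub_mem_Ioo h.right_mem
  norm_time_sub_le := by simpa only [kernelScale_pi_sub] using h.norm_time_sub_le
  norm_left_sub_le := by
    simpa only [kernelScale_pi_sub, norm_pi_sub_sub_pi_sub] using h.norm_left_sub_le
  norm_right_sub_le := by
    simpa only [kernelScale_pi_sub, norm_pi_sub_sub_pi_sub] using h.norm_right_sub_le

lemma abs_re_half_sub_le (h : NearReal t θ φ τ z w) :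
    |(τ / 2).re - t / 2| ≤ kernelScale t θ φ / 160 := by
  have re_le := (Complex.abs_re_le_norm (τ - t)).trans h.norm_time_sub_le
  rw [Complex.sub_re, Complex.ofReal_re] at re_le
  rw [Complex.div_ofNat_re, ← sub_div, abs_div, abs_two]
  linarith

lemma abs_im_half_le (h : NearReal t θ φ τ z w) : |(τ / 2).im| ≤ kernelScale t θ φ / 160 := by
  have im_le := (Complex.abs_im_le_norm (τ - t)).trans h.norm_time_sub_le
  rw [Complex.sub_im, Complex.ofReal_im, sub_zero] at im_le
  rw [Complex.div_ofNat_im, abs_div, abs_two]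
  linarith

lemma abs_re_half_le (h : NearReal t θ φ τ z w) :
    |(τ / 2).re| ≤ t / 2 + kernelScale t θ φ / 160 := by
  have abs_le := abs_sub_abs_le_abs_sub (τ / 2).re (t / 2)
  rw [abs_of_pos (half_pos h.time_pos)] at abs_le
  linarith [h.abs_re_half_sub_le]

lemma cosh_re_mul_one_sub_le (h : NearReal t θ φ τ z w) :
    Real.cosh (τ / 2).re * (1 - (kernelScale t θ φ / 160) ^ 2 / 2) ≤
      (Complex.cosh (τ / 2)).re := by
  have im_sq_le : (τ / 2).im ^ 2 ≤ (kernelScale t θ φ / 160) ^ 2 :=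
    sq_le_sq.2 (h.abs_im_half_le.trans (le_abs_self _))
  refine le_trans ?_ (cosh_mul_one_sub_le_re_cosh (τ / 2))
  have := Real.cosh_pos (τ / 2).re
  gcongr

lemma cosh_re_div_two_le (h : NearReal t θ φ τ z w) :
    Real.cosh (τ / 2).re / 2 ≤ (Complex.cosh (τ / 2)).re := by
  have scale_sq_le := pow_le_one₀ (n := 2) (kernelScale_pos h.time_pos θ φ).le
    (kernelScale_le_one t θ φ)
  nlinarith [h.cosh_re_mul_one_sub_le, Real.cosh_pos (τ / 2).re]

lemma norm_cosh_pos (h : NearReal t θ φ τ z w) : 0 < ‖Complex.cosh (τ / 2)‖ := by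
  linarith [Real.cosh_pos (τ / 2).re, h.cosh_re_div_two_le,
    Complex.re_le_norm (Complex.cosh (τ / 2))]

lemma sinProd_add_cosProd_le (h : NearReal t θ φ τ z w) :
    sinProd z w + cosProd z w ≤ (1 - kernelScale t θ φ ^ 2 / 160) * ‖Complex.cosh (τ / 2)‖ := by
  have scale_pos := kernelScale_pos h.time_pos θ φ
  have scale_le_one := kernelScale_le_one t θ φ
  have scale_le_add := kernelScale_le_add t θ φ
  have prod_le := JacobiPoisson.sinProd_add_cosProd_le (by linarith) h.norm_left_sub_le
    h.norm_right_sub_le h.left_mem h.right_mem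
  have re_sub_le := h.abs_re_half_sub_le
  have le_norm := h.cosh_re_mul_one_sub_le.trans (Complex.re_le_norm _)
  have norm_le := norm_cosh_le (τ / 2)
  have le_cosh := one_add_sq_div_two_le_cosh (τ / 2).re
  generalize kernelScale t θ φ = ρ at *
  generalize (τ / 2).re = u at *
  have u_sq : t ^ 2 / 8 - (ρ / 160) ^ 2 ≤ u ^ 2 := by
    have : (u - t / 2) ^ 2 ≤ (ρ / 160) ^ 2 := sq_le_sq.2 (re_sub_le.trans (le_abs_self _))
    nlinarith [sq_nonneg (2 * u - t / 2)]
  have scale_sq : ρ ^ 2 ≤ 2 * (t ^ 2 + |θ - φ| ^ 2) := by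
    nlinarith [sq_nonneg (t - |θ - φ|), pow_le_pow_left₀ scale_pos.le scale_le_add 2]
  have scale_sq_le_one : ρ ^ 2 ≤ 1 := pow_le_one₀ scale_pos.le scale_le_one
  have cosh_mul : (1 + u ^ 2 / 2) * (1 - (ρ / 160) ^ 2 / 2 - ρ ^ 2 / 160) ≤
      Real.cosh u * (1 - (ρ / 160) ^ 2 / 2 - ρ ^ 2 / 160) :=
    mul_le_mul_of_nonneg_right le_cosh (by linarith)
  have scale_mul : ρ ^ 2 / 160 * ‖Complex.cosh (τ / 2)‖ ≤ ρ ^ 2 / 160 * Real.cosh u := by gcongr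
  nlinarith [mul_nonneg (sq_nonneg u) (sq_nonneg ρ), sq_nonneg u]

lemma scale_sq_mul_le_sub (h : NearReal t θ φ τ z w) :
    kernelScale t θ φ ^ 2 / 160 * ‖Complex.cosh (τ / 2)‖ ≤
      ‖Complex.cosh (τ / 2)‖ - sinProd z w - cosProd z w := by
  linarith [h.sinProd_add_cosProd_le]

lemma poissonDomain (h : NearReal t θ φ τ z w) : PoissonDomain τ z w := by
  refine ⟨by linarith [Real.cosh_pos (τ / 2).re, h.cosh_re_div_two_le], ?_⟩
  have := h.norm_cosh_pos
  have := kernelScale_pos h.time_pos θ φ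
  have : 0 < kernelScale t θ φ ^ 2 / 160 * ‖Complex.cosh (τ / 2)‖ := by positivity
  linarith [h.scale_sq_mul_le_sub]

lemma norm_cosh_le_two (h : NearReal t θ φ τ z w) (hρ : kernelScale t θ φ < 1) :
    ‖Complex.cosh (τ / 2)‖ ≤ 2 := by
  have re_le_one : |(τ / 2).re| ≤ 1 := by
    linarith [h.abs_re_half_le, kernelScale_eq_of_lt_one hρ, abs_nonneg (θ - φ)]
  linarith [norm_cosh_le (τ / 2), cosh_le_one_add_sq re_le_one,
    (sq_le_one_iff_abs_le_one _).2 re_le_one]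

lemma norm_sinh_le (h : NearReal t θ φ τ z w) :
    ‖Complex.sinh (τ / 2)‖ ≤ 4 * kernelScale t θ φ * ‖Complex.cosh (τ / 2)‖ := by
  have scale_pos := kernelScale_pos h.time_pos θ φ
  have := Real.cosh_pos (τ / 2).re
  have sinh_re_le : |Real.sinh (τ / 2).re| ≤ kernelScale t θ φ * Real.cosh (τ / 2).re := by
    rcases (kernelScale_le_one t θ φ).lt_or_eq with lt_one | eq_one
    · refine (abs_sinh_le_abs_mul_cosh _).trans ?_
      gcongr
      linarith [h.abs_re_half_le, kernelScale_eq_of_lt_one lt_one, abs_nonneg (θ - φ), h.time_pos]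
    · rw [eq_one, one_mul]
      exact abs_sinh_le_cosh _
  have cosh_le : Real.cosh (τ / 2).re ≤ 2 * ‖Complex.cosh (τ / 2)‖ := by
    linarith [h.cosh_re_div_two_le, Complex.re_le_norm (Complex.cosh (τ / 2))]
  calc ‖Complex.sinh (τ / 2)‖
      ≤ |Real.sinh (τ / 2).re| + Real.cosh (τ / 2).re * |(τ / 2).im| :=
        JacobiPoisson.norm_sinh_le _
    _ ≤ kernelScale t θ φ * Real.cosh (τ / 2).re + Real.cosh (τ / 2).re * kernelScale t θ φ := by
        gcongr
        linarith [h.abs_im_half_le]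
    _ = 2 * kernelScale t θ φ * Real.cosh (τ / 2).re := by ring
    _ ≤ 2 * kernelScale t θ φ * (2 * ‖Complex.cosh (τ / 2)‖) := by gcongr
    _ = 4 * kernelScale t θ φ * ‖Complex.cosh (τ / 2)‖ := by ring

lemma exp_half_div_eight_le (h : NearReal t θ φ τ z w) :
    Real.exp (t / 2) / 8 ≤ ‖Complex.cosh (τ / 2)‖ := by
  have exp_le_cosh : Real.exp (τ / 2).re / 2 ≤ Real.cosh (τ / 2).re := by
    rw [Real.cosh_eq]
    linarith [Real.exp_pos (-(τ / 2).re)]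
  have exp_shift : Real.exp (t / 2) * (1 / 2) ≤ Real.exp (τ / 2).re := by
    calc Real.exp (t / 2) * (1 / 2) ≤ Real.exp (t / 2) * Real.exp (-(1 / 2)) := by
          gcongr
          linarith [Real.add_one_le_exp (-(1 / 2) : ℝ)]
      _ ≤ Real.exp (τ / 2).re := by
          rw [← Real.exp_add, Real.exp_le_exp]
          linarith [neg_abs_le ((τ / 2).re - t / 2), h.abs_re_half_sub_le,
            kernelScale_le_one t θ φ]
  linarith [h.cosh_re_div_two_le, Complex.re_le_norm (Complex.cosh (τ / 2))]

end NearReal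

lemma sq_add_div_mul_le {A A' ρ m s s' : ℝ} (hA : A ∈ Ioo 0 π) (hρ : 0 < ρ)
    (hA' : ρ < 1 → |A - A'| ≤ ρ) (hm₀ : 0 < m) (hm : ρ < 1 → m ≤ 2) (hs₀ : 0 ≤ s) (hs₀' : 0 ≤ s')
    (hs : A / π - ρ / 40 ≤ s) (hs' : A' / π - ρ / 40 ≤ s') :
    (ρ + A) ^ 2 / 10240 * m ≤ ρ ^ 2 / 160 * m + s * s' := by
  have A_pos := hA.1
  have prod_nonneg := mul_nonneg hs₀ hs₀'
  rcases le_or_gt A (7 * ρ) with A_le | lt_A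
  · have sq_le : (ρ + A) ^ 2 ≤ (8 * ρ) ^ 2 := by
      gcongr
      linarith
    have : (ρ + A) ^ 2 / 10240 * m ≤ (8 * ρ) ^ 2 / 10240 * m := by gcongr
    linarith
  · have ρ_lt_one : ρ < 1 := by linarith [Real.pi_lt_d2, hA.2]
    have le_A' : 6 / 7 * A ≤ A' := by linarith [le_abs_self (A - A'), hA' ρ_lt_one]
    have div_four_le {x : ℝ} (hx : 0 ≤ x) : x / 4 ≤ x / π :=
      div_le_div_of_nonneg_left hx Real.pi_pos (by linarith [Real.pi_lt_d2])
    have le_s : A / 5 ≤ s := by linarith [div_four_le A_pos.le]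
    have le_s' : A / 5 ≤ s' := by linarith [div_four_le (by linarith : 0 ≤ A')]
    calc (ρ + A) ^ 2 / 10240 * m ≤ (2 * A) ^ 2 / 10240 * 2 := by
          gcongr
          exacts [by linarith, hm ρ_lt_one]
      _ ≤ A / 5 * (A / 5) := by nlinarith
      _ ≤ s * s' := by gcongr
      _ ≤ ρ ^ 2 / 160 * m + s * s' := le_add_of_nonneg_left (by positivity)

lemma NearReal.sq_scale_add_mul_le_sub_cosProd (h : NearReal t θ φ τ z w) :
    (kernelScale t θ φ + θ) ^ 2 / 10240 * ‖Complex.cosh (τ / 2)‖ ≤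
      ‖Complex.cosh (τ / 2)‖ - cosProd z w := by
  have scale_le : kernelScale t θ φ / 80 ≤ 1 := by linarith [kernelScale_le_one t θ φ]
  have sin_left := abs_le.1 (abs_norm_sin_half_sub_le scale_le h.norm_left_sub_le h.left_mem)
  have sin_right := abs_le.1 (abs_norm_sin_half_sub_le scale_le h.norm_right_sub_le h.right_mem)
  have sq_le := sq_add_div_mul_le h.left_mem (kernelScale_pos h.time_pos θ φ)
    (fun lt_one => by linarith [kernelScale_eq_of_lt_one lt_one, h.time_pos]) h.norm_cosh_pos
    h.norm_cosh_le_two (norm_nonneg (Complex.sin (z / 2))) (norm_nonneg (Complex.sin (w / 2)))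
    (by linarith [div_pi_le_sin_half h.left_mem]) (by linarith [div_pi_le_sin_half h.right_mem])
  have sub_eq := h.scale_sq_mul_le_sub
  unfold sinProd at sub_eq
  linarith

lemma NearReal.sq_scale_add_mul_le_sub_sinProd (h : NearReal t θ φ τ z w) :
    (kernelScale t θ φ + (π - θ)) ^ 2 / 10240 * ‖Complex.cosh (τ / 2)‖ ≤
      ‖Complex.cosh (τ / 2)‖ - sinProd z w := by
  have reflected := h.pi_sub.sq_scale_add_mul_le_sub_cosProd
  rw [kernelScale_pi_sub] at reflected
  convert reflected using 2
  simp only [cosProd, sinProd, sub_div, Complex.cos_pi_div_two_sub]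

lemma rpow_neg_le_of_sq_div_mul_le {A m c k s : ℝ} (hA : 0 < A) (hm : 0 < m) (hk : 0 < k)
    (hs : 0 < s) (h : A ^ 2 / k * m ≤ c) :
    c ^ (-(s + 1 / 2)) ≤ k ^ (s + 1 / 2) * A ^ (-(2 * s + 1)) * m ^ (-(s + 1 / 2)) := by
  calc c ^ (-(s + 1 / 2)) ≤ (A ^ 2 / k * m) ^ (-(s + 1 / 2)) :=
        Real.rpow_le_rpow_of_nonpos (by positivity) h (by linarith)
    _ = k ^ (s + 1 / 2) * A ^ (-(2 * s + 1)) * m ^ (-(s + 1 / 2)) := by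
        have exponent_eq : -(2 * s + 1) = (2 : ℕ) * (-(s + 1 / 2)) := by push_cast; ring
        rw [Real.mul_rpow (by positivity) hm.le, Real.div_rpow (by positivity) hk.le,
          Real.rpow_neg hk.le, div_inv_eq_mul, exponent_eq, Real.rpow_mul hA.le,
          Real.rpow_natCast, mul_comm (k ^ _)]

lemma mul_inv_mul_rpow_le {A B ρ m E sh S C : ℝ} (ha : 0 < a) (hb : 0 < b) (hA : 0 < A)
    (hB : 0 < B) (hρ : 0 < ρ) (hE : 0 < E) (hm : 0 < m) (sh_le : sh ≤ 4 * ρ * m)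
    (le_sub : ρ ^ 2 / 160 * m ≤ m - S - C) (sq_A_le : A ^ 2 / 10240 * m ≤ m - C)
    (sq_B_le : B ^ 2 / 10240 * m ≤ m - S) (E_le : E / 8 ≤ m) :
    sh * ((m - S - C)⁻¹ * ((m - C) ^ (-(a + 1 / 2)) * (m - S) ^ (-(b + 1 / 2)))) ≤
      640 * (10240 ^ (a + 1 / 2) * 10240 ^ (b + 1 / 2) * 8 ^ (a + b + 1)) *
        (E ^ (-(a + b + 1)) * ρ⁻¹ * (A ^ (-(2 * a + 1)) * B ^ (-(2 * b + 1)))) := by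
  have gap_pos : 0 < ρ ^ 2 / 160 * m := by positivity
  have sub_C_pos : 0 < m - C := lt_of_lt_of_le (by positivity) sq_A_le
  have sub_S_pos : 0 < m - S := lt_of_lt_of_le (by positivity) sq_B_le
  have sub_pos : 0 < m - S - C := gap_pos.trans_le le_sub
  have m_rpow_le : m ^ (-(a + b + 1)) ≤ 8 ^ (a + b + 1) * E ^ (-(a + b + 1)) := by
    refine (Real.rpow_le_rpow_of_nonpos (by positivity) E_le (by linarith)).trans_eq ?_
    rw [Real.div_rpow hE.le (by positivity), Real.rpow_neg (by positivity : (0 : ℝ) ≤ 8),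
      div_inv_eq_mul, mul_comm]
  have m_rpow_eq : m ^ (-(a + 1 / 2)) * m ^ (-(b + 1 / 2)) = m ^ (-(a + b + 1)) := by
    rw [← Real.rpow_add hm]
    ring_nf
  calc sh * ((m - S - C)⁻¹ * ((m - C) ^ (-(a + 1 / 2)) * (m - S) ^ (-(b + 1 / 2))))
      ≤ 4 * ρ * m * ((ρ ^ 2 / 160 * m)⁻¹ *
          ((10240 ^ (a + 1 / 2) * A ^ (-(2 * a + 1)) * m ^ (-(a + 1 / 2))) *
            (10240 ^ (b + 1 / 2) * B ^ (-(2 * b + 1)) * m ^ (-(b + 1 / 2))))) := by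
        gcongr
        exacts [rpow_neg_le_of_sq_div_mul_le hA hm (by norm_num) ha sq_A_le,
          rpow_neg_le_of_sq_div_mul_le hB hm (by norm_num) hb sq_B_le]
    _ = 640 * (10240 ^ (a + 1 / 2) * 10240 ^ (b + 1 / 2)) * (m ^ (-(a + b + 1)) * ρ⁻¹ *
          (A ^ (-(2 * a + 1)) * B ^ (-(2 * b + 1)))) := by
        rw [← m_rpow_eq]
        field_simp
        ring
    _ ≤ 640 * (10240 ^ (a + 1 / 2) * 10240 ^ (b + 1 / 2)) *
          (8 ^ (a + b + 1) * E ^ (-(a + b + 1)) * ρ⁻¹ *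
            (A ^ (-(2 * a + 1)) * B ^ (-(2 * b + 1)))) := by gcongr
    _ = _ := by ring

theorem exists_norm_kernelSeries_le_of_nearReal (ha : 0 < a) (hb : 0 < b) :
    ∃ K > 0, ∀ t θ φ τ z w, NearReal t θ φ τ z w →
      ‖kernelSeries a b τ z w‖ ≤ K * (Real.exp (-(t / 2 * (a + b + 1))) * (kernelScale t θ φ)⁻¹ *
        ((kernelScale t θ φ + θ) ^ (-(2 * a + 1)) *
          (kernelScale t θ φ + (π - θ)) ^ (-(2 * b + 1)))) := by
  obtain ⟨K, K_pos, norm_le⟩ := exists_norm_kernelSeries_le ha hb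
  refine ⟨K * (640 * (10240 ^ (a + 1 / 2) * 10240 ^ (b + 1 / 2) * 8 ^ (a + b + 1))),
    by positivity, fun t θ φ τ z w h => ?_⟩
  have scale_pos := kernelScale_pos h.time_pos θ φ
  have left_pos : 0 < kernelScale t θ φ + θ := by linarith [h.left_mem.1]
  have right_pos : 0 < kernelScale t θ φ + (π - θ) := by linarith [h.left_mem.2]
  rw [← mul_neg, Real.exp_mul, mul_assoc K]
  refine (norm_le τ z w h.poissonDomain).trans (mul_le_mul_of_nonneg_left ?_ K_pos.le)
  exact mul_inv_mul_rpow_le ha hb left_pos right_pos scale_pos (Real.exp_pos _) h.norm_cosh_pos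
    h.norm_sinh_le h.scale_sq_mul_le_sub h.sq_scale_add_mul_le_sub_cosProd
    h.sq_scale_add_mul_le_sub_sinProd h.exp_half_div_eight_le

theorem exists_abs_iterate_deriv_jHker_le (ha : 0 < a) (hb : 0 < b) (M N L : ℕ) :
    ∃ K > 0, ∀ t > 0, ∀ θ ∈ Ioo 0 π, ∀ φ ∈ Ioo 0 π,
      |deriv^[L] (fun φ' => deriv^[N] (fun θ' => deriv^[M] (fun s => jHker a b s θ' φ') t) θ) φ| ≤
        K * (Real.exp (-(t / 2 * (a + b + 1))) * (kernelScale t θ φ)⁻¹ ^ (M + N + L + 1) *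
          ((kernelScale t θ φ + θ) ^ (-(2 * a + 1)) *
            (kernelScale t θ φ + (π - θ)) ^ (-(2 * b + 1)))) := by
  obtain ⟨K, K_pos, norm_le⟩ := exists_norm_kernelSeries_le_of_nearReal ha hb
  refine ⟨(2 * 2 ^ (a + b + 1))⁻¹ *
    (L.factorial * N.factorial * M.factorial * 80 ^ (M + N + L) * K), by positivity,
    fun t ht θ hθ φ hφ => ?_⟩
  have scale_pos := kernelScale_pos ht θ φ
  have nearReal : ∀ τ ∈ closedBall (t : ℂ) (kernelScale t θ φ / 80),
      ∀ z ∈ closedBall (θ : ℂ) (kernelScale t θ φ / 80),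
      ∀ w ∈ closedBall (φ : ℂ) (kernelScale t θ φ / 80), NearReal t θ φ τ z w :=
    fun τ hτ z hz w hw => ⟨ht, hθ, hφ, mem_closedBall_iff_norm.1 hτ, mem_closedBall_iff_norm.1 hz,
      mem_closedBall_iff_norm.1 hw⟩
  have cauchy := (locallyNormal_complexTimeFactor ha hb).norm_prodSeries_termwiseDeriv₃_le M N L
    (by positivity) (fun τ hτ z hz w hw => (nearReal τ hτ z hz w hw).poissonDomain)
    (fun τ hτ z hz w hw => norm_le t θ φ τ z w (nearReal τ hτ z hz w hw))
  rw [iterate_deriv_jHker ha hb M N L ht θ φ, abs_mul, abs_of_pos (by positivity), mul_assoc]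
  refine mul_le_mul_of_nonneg_left
    (((Complex.abs_re_le_norm _).trans cauchy).trans_eq ?_) (by positivity)
  rw [pow_succ, pow_add, pow_add, pow_add, pow_add]
  simp only [inv_pow, div_pow]
  field_simp

end PointwiseEstimate

/-! ### Measure of balls -/

section BallMeasure

variable {α β θ d p q x : ℝ}

lemma rpow_le_add_mul_rpow {c₁ c₂ s : ℝ} (hc₁ : 0 < c₁) (hx : 0 < x) (h₁ : c₁ * x ≤ s)
    (h₂ : s ≤ c₂ * x) : s ^ q ≤ (c₁ ^ q + c₂ ^ q) * x ^ q := by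
  have hs : 0 < s := (mul_pos hc₁ hx).trans_le h₁
  have hc₂ : 0 < c₂ := pos_of_mul_pos_left (hs.trans_le h₂) hx.le
  rw [add_mul, ← Real.mul_rpow hc₁.le hx.le, ← Real.mul_rpow hc₂.le hx.le]
  rcases le_total 0 q with hq | hq
  · exact le_add_of_nonneg_of_le (by positivity) (Real.rpow_le_rpow hs.le h₂ hq)
  · exact le_add_of_le_of_nonneg (Real.rpow_le_rpow_of_nonpos (by positivity) h₁ hq) (by positivity)

lemma lintegral_Ioc_rpow {T : ℝ} (hp : -1 < p) (hT : 0 < T) :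
    ∫⁻ x in Ioc 0 T, ENNReal.ofReal (x ^ p) = ENNReal.ofReal (T ^ (p + 1) / (p + 1)) := by
  have hint : IntegrableOn (fun x : ℝ => x ^ p) (Ioc 0 T) :=
    (intervalIntegrable_iff_integrableOn_Ioc_of_le hT.le).1
      (intervalIntegral.intervalIntegrable_rpow' hp)
  have hnonneg : 0 ≤ᵐ[volume.restrict (Ioc 0 T)] fun x : ℝ => x ^ p :=
    (ae_restrict_mem measurableSet_Ioc).mono fun x hx => Real.rpow_nonneg hx.1.le _
  rw [← ofReal_integral_eq_lintegral_ofReal hint hnonneg, ← intervalIntegral.integral_of_le hT.le,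
    integral_rpow (Or.inl hp), Real.zero_rpow (by linarith), sub_zero]

lemma lintegral_Ioo_rpow_le_of_two_mul_le (hd : 0 < d) (h : 2 * d ≤ θ) :
    ∫⁻ x in Ioo (θ - d) (θ + d), ENNReal.ofReal (x ^ p) ≤
      ENNReal.ofReal (2 * ((1 / 3) ^ p + 1 ^ p) * (d * (d + θ) ^ p)) :=
  calc ∫⁻ x in Ioo (θ - d) (θ + d), ENNReal.ofReal (x ^ p)
      ≤ ∫⁻ _ in Ioo (θ - d) (θ + d), ENNReal.ofReal (((1 / 3) ^ p + 1 ^ p) * (d + θ) ^ p) := by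
        refine setLIntegral_mono' measurableSet_Ioo fun x hx => ENNReal.ofReal_le_ofReal ?_
        exact rpow_le_add_mul_rpow (by norm_num) (by linarith) (by linarith [hx.1])
          (by linarith [hx.2])
    _ = ENNReal.ofReal (2 * ((1 / 3) ^ p + 1 ^ p) * (d * (d + θ) ^ p)) := by
        have : 0 < d + θ := by linarith
        rw [setLIntegral_const, Real.volume_Ioo, ← ENNReal.ofReal_mul (by positivity)]
        congr 1
        ring

lemma exists_lintegral_Ioo_rpow_le (hp : -1 < p) : ∃ C > 0, ∀ θ > 0, ∀ d > 0,
    ∫⁻ x in Ioo (θ - d) (θ + d) ∩ Ioi 0, ENNReal.ofReal (x ^ p) ≤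
      ENNReal.ofReal (C * (d * (d + θ) ^ p)) := by
  have hp₁ : 0 < p + 1 := by linarith
  refine ⟨2 * ((1 / 3) ^ p + 1 ^ p) + 3 / (p + 1), by positivity, fun θ hθ d hd => ?_⟩
  have hdθ : 0 < d + θ := by positivity
  rcases le_or_gt (2 * d) θ with h | h
  · refine ((lintegral_mono_set inter_subset_left).trans
      (lintegral_Ioo_rpow_le_of_two_mul_le hd h)).trans (ENNReal.ofReal_le_ofReal ?_)
    gcongr
    exact le_add_of_nonneg_right (by positivity)
  · calc ∫⁻ x in Ioo (θ - d) (θ + d) ∩ Ioi 0, ENNReal.ofReal (x ^ p)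
        ≤ ∫⁻ x in Ioc 0 (d + θ), ENNReal.ofReal (x ^ p) :=
          lintegral_mono_set fun x hx => ⟨hx.2, by linarith [hx.1.2]⟩
      _ = ENNReal.ofReal ((d + θ) ^ p * (d + θ) / (p + 1)) := by
          rw [lintegral_Ioc_rpow hp hdθ, Real.rpow_add_one hdθ.ne']
      _ ≤ ENNReal.ofReal ((d + θ) ^ p * (3 * d) / (p + 1)) := by
          gcongr
          linarith
      _ = ENNReal.ofReal (3 / (p + 1) * (d * (d + θ) ^ p)) := by
          congr 1
          ring
      _ ≤ _ := by
          gcongr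
          exact le_add_of_nonneg_left (by positivity)

lemma lintegral_Ioo_inter_Iio_sub_left (f : ℝ → ℝ≥0∞) (c θ d : ℝ) :
    ∫⁻ x in Ioo (θ - d) (θ + d) ∩ Iio c, f (c - x) =
      ∫⁻ x in Ioo ((c - θ) - d) ((c - θ) + d) ∩ Ioi 0, f x := by
  rw [← lintegral_indicator (measurableSet_Ioo.inter measurableSet_Iio),
    ← lintegral_indicator (measurableSet_Ioo.inter measurableSet_Ioi)]
  conv_rhs => rw [← lintegral_sub_left_eq_self _ c]
  refine lintegral_congr fun x => ?_
  have hmem : c - x ∈ Ioo ((c - θ) - d) ((c - θ) + d) ∩ Ioi 0 ↔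
      x ∈ Ioo (θ - d) (θ + d) ∩ Iio c := by
    simp only [mem_inter_iff, mem_Ioo, mem_Ioi, mem_Iio]
    constructor <;> rintro ⟨⟨h₁, h₂⟩, h₃⟩ <;> refine ⟨⟨?_, ?_⟩, ?_⟩ <;> linarith
  simp only [indicator, hmem]

lemma ballMeasure_eq_lintegral (α β θ d : ℝ) :
    ballMeasure α β θ d =
      ∫⁻ x in Ioo (θ - d) (θ + d) ∩ Ioo 0 π, ENNReal.ofReal (jPsi α β x ^ 2) := by
  rw [ballMeasure, jacobiMeasurePlus_eq_withDensity, withDensity_apply _ measurableSet_Ioo,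
    Measure.restrict_restrict measurableSet_Ioo]

lemma jPsi_sq_pos (hx : x ∈ Ioo 0 π) (α β : ℝ) : 0 < jPsi α β x ^ 2 := by
  have := sin_half_pos hx
  have := cos_half_pos hx
  rw [jPsi_sq hx]
  positivity

lemma ballMeasure_pos (hθ : θ ∈ Ioo 0 π) (hd : 0 < d) (α β : ℝ) : 0 < ballMeasure α β θ d := by
  have hsub : Ioo (θ - d) (θ + d) ∩ Ioo 0 π ⊆
      Function.support fun x => ENNReal.ofReal (jPsi α β x ^ 2) :=
    fun x hx => (ENNReal.ofReal_pos.2 (jPsi_sq_pos hx.2 α β)).ne'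
  rw [ballMeasure_eq_lintegral,
    setLIntegral_pos_iff (((measurable_jPsi α β).pow_const 2).ennreal_ofReal),
    inter_eq_self_of_subset_right hsub]
  exact (isOpen_Ioo.inter isOpen_Ioo).measure_pos volume ⟨θ, ⟨by linarith, by linarith⟩, hθ⟩

lemma sin_half_rpow_le (hx : x ∈ Ioo 0 π) (q : ℝ) :
    Real.sin (x / 2) ^ q ≤ ((1 / π) ^ q + (1 / 2) ^ q) * x ^ q := by
  refine rpow_le_add_mul_rpow (by positivity) hx.1 ?_ ?_
  · simpa only [one_div_mul_eq_div] using div_pi_le_sin_half hx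
  · simpa only [one_div_mul_eq_div] using Real.sin_le (half_pos hx.1).le

lemma cos_half_rpow_le (hx : x ∈ Ioo 0 π) (q : ℝ) :
    Real.cos (x / 2) ^ q ≤ ((1 / π) ^ q + (1 / 2) ^ q) * (π - x) ^ q := by
  simpa only [sub_div, Real.sin_pi_div_two_sub] using sin_half_rpow_le (pi_sub_mem_Ioo hx) q

lemma exists_jPsi_sq_le (α β : ℝ) : ∃ K > 0, ∀ x ∈ Ioo 0 π,
    jPsi α β x ^ 2 ≤ K * (x ^ (2 * α + 1) * (π - x) ^ (2 * β + 1)) := by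
  refine ⟨((1 / π) ^ (2 * α + 1) + (1 / 2) ^ (2 * α + 1)) *
    ((1 / π) ^ (2 * β + 1) + (1 / 2) ^ (2 * β + 1)), by positivity, fun x hx => ?_⟩
  have := hx.1
  have := cos_half_pos hx
  rw [jPsi_sq hx, mul_mul_mul_comm]
  exact mul_le_mul (sin_half_rpow_le hx _) (cos_half_rpow_le hx _) (by positivity) (by positivity)

-- On each half of `(0, π)` one of the two factors is comparable to its value at the centre.
lemma exists_rpow_mul_pi_sub_rpow_le (p q : ℝ) : ∃ K > 0, ∀ θ ∈ Ioo 0 π, ∀ d > 0, d < π →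
    ∀ x ∈ Ioo (θ - d) (θ + d) ∩ Ioo 0 π,
      x ^ p * (π - x) ^ q ≤ K * ((d + (π - θ)) ^ q * x ^ p + (d + θ) ^ p * (π - x) ^ q) := by
  refine ⟨((1 / 4) ^ p + 1 ^ p) + ((1 / 4) ^ q + 1 ^ q), by positivity,
    fun θ hθ d hd hdπ x ⟨hxd, hx⟩ => ?_⟩
  obtain ⟨hθ₀, hθπ⟩ := hθ
  have hx₀ := hx.1
  have hx' : 0 < π - x := sub_pos.2 hx.2
  have : 0 < π - θ := sub_pos.2 hθπ
  rcases le_total x (π / 2) with h | h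
  · have hright : (π - x) ^ q ≤ ((1 / 4) ^ q + 1 ^ q) * (d + (π - θ)) ^ q :=
      rpow_le_add_mul_rpow (by norm_num) (by linarith) (by linarith) (by linarith [hxd.1])
    calc x ^ p * (π - x) ^ q ≤ x ^ p * (((1 / 4) ^ q + 1 ^ q) * (d + (π - θ)) ^ q) := by gcongr
      _ = ((1 / 4) ^ q + 1 ^ q) * ((d + (π - θ)) ^ q * x ^ p) := by ring
      _ ≤ _ := mul_le_mul (le_add_of_nonneg_left (by positivity))
        (le_add_of_nonneg_right (by positivity)) (by positivity) (by positivity)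
  · have hleft : x ^ p ≤ ((1 / 4) ^ p + 1 ^ p) * (d + θ) ^ p :=
      rpow_le_add_mul_rpow (by norm_num) (by linarith) (by linarith) (by linarith [hxd.2])
    calc x ^ p * (π - x) ^ q ≤ ((1 / 4) ^ p + 1 ^ p) * (d + θ) ^ p * (π - x) ^ q := by gcongr
      _ = ((1 / 4) ^ p + 1 ^ p) * ((d + θ) ^ p * (π - x) ^ q) := by ring
      _ ≤ _ := mul_le_mul (le_add_of_nonneg_right (by positivity))
        (le_add_of_nonneg_left (by positivity)) (by positivity) (by positivity)

lemma exists_lintegral_ball_rpow_mul_add_le (hp : -1 < p) (hq : -1 < q) :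
    ∃ C > 0, ∀ θ ∈ Ioo 0 π, ∀ d > 0,
      ∫⁻ x in Ioo (θ - d) (θ + d) ∩ Ioo 0 π, (ENNReal.ofReal ((d + (π - θ)) ^ q * x ^ p) +
          ENNReal.ofReal ((d + θ) ^ p * (π - x) ^ q)) ≤
        ENNReal.ofReal (C * (d * ((d + θ) ^ p * (d + (π - θ)) ^ q))) := by
  obtain ⟨C₁, hC₁, hleft⟩ := exists_lintegral_Ioo_rpow_le hp
  obtain ⟨C₂, hC₂, hright⟩ := exists_lintegral_Ioo_rpow_le hq
  refine ⟨C₁ + C₂, by positivity, fun θ hθ d hd => ?_⟩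
  have hθ₀ := hθ.1
  have hθ' := (pi_sub_mem_Ioo hθ).1
  have hA : 0 ≤ (d + (π - θ)) ^ q := by positivity
  have hB : 0 ≤ (d + θ) ^ p := by positivity
  simp only [ENNReal.ofReal_mul hA, ENNReal.ofReal_mul hB]
  rw [lintegral_add_left (by fun_prop), lintegral_const_mul _ (by fun_prop),
    lintegral_const_mul _ (by fun_prop)]
  calc _ ≤ ENNReal.ofReal ((d + (π - θ)) ^ q) * ENNReal.ofReal (C₁ * (d * (d + θ) ^ p)) +
        ENNReal.ofReal ((d + θ) ^ p) * ENNReal.ofReal (C₂ * (d * (d + (π - θ)) ^ q)) := by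
        gcongr
        · exact (lintegral_mono_set (inter_subset_inter_right _ Ioo_subset_Ioi_self)).trans
            (hleft θ hθ₀ d hd)
        · refine (lintegral_mono_set (inter_subset_inter_right _ Ioo_subset_Iio_self)).trans ?_
          rw [lintegral_Ioo_inter_Iio_sub_left fun x => ENNReal.ofReal (x ^ q)]
          exact hright (π - θ) hθ' d hd
    _ = _ := by
        rw [← ENNReal.ofReal_mul hA, ← ENNReal.ofReal_mul hB,
          ← ENNReal.ofReal_add (by positivity) (by positivity)]
        congr 1
        ring

theorem exists_ballMeasure_le (hα : -1 < α) (hβ : -1 < β) :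
    ∃ C > 0, ∀ θ ∈ Ioo 0 π, ∀ d > 0, d < π → ballMeasure α β θ d ≤
      ENNReal.ofReal (C * (d * ((d + θ) ^ (2 * α + 1) * (d + (π - θ)) ^ (2 * β + 1)))) := by
  obtain ⟨K₁, hK₁, hdensity⟩ := exists_jPsi_sq_le α β
  obtain ⟨K₂, hK₂, hsplit⟩ := exists_rpow_mul_pi_sub_rpow_le (2 * α + 1) (2 * β + 1)
  obtain ⟨C, hC, hint⟩ := exists_lintegral_ball_rpow_mul_add_le
    (p := 2 * α + 1) (q := 2 * β + 1) (by linarith) (by linarith)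
  refine ⟨K₁ * K₂ * C, by positivity, fun θ hθ d hd hdπ => ?_⟩
  rw [ballMeasure_eq_lintegral, mul_assoc (K₁ * K₂), ENNReal.ofReal_mul (by positivity)]
  refine le_trans ?_ (mul_le_mul_right (hint θ hθ d hd) _)
  rw [← lintegral_const_mul _ (by fun_prop)]
  refine setLIntegral_mono' (measurableSet_Ioo.inter measurableSet_Ioo) fun x hx => ?_
  calc ENNReal.ofReal (jPsi α β x ^ 2)
      ≤ ENNReal.ofReal (K₁ * K₂ * ((d + (π - θ)) ^ (2 * β + 1) * x ^ (2 * α + 1) +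
          (d + θ) ^ (2 * α + 1) * (π - x) ^ (2 * β + 1))) := by
        refine ENNReal.ofReal_le_ofReal ((hdensity x hx.2).trans ?_)
        rw [mul_assoc]
        exact mul_le_mul_of_nonneg_left (hsplit θ hθ d hd hdπ x hx) hK₁.le
    _ ≤ _ := by
        rw [ENNReal.ofReal_mul (by positivity)]
        gcongr
        exact ENNReal.ofReal_add_le

end BallMeasure

/-! ### Comparison of the pointwise bounds with the measure of a ball -/

section ScaleComparison

variable {α β θ φ d p q r x y w : ℝ}

lemma add_rpow_mul_rpow_min_le (hd : 0 < d) (hr : 0 < r) (hx : 0 < x) (hdr : d ≤ π * r) :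
    (d + x) ^ p * r ^ min 0 p ≤ π ^ |p| * (d ^ min 0 p * (r + x) ^ p) := by
  have hπ := Real.pi_pos
  have hxπ : x ≤ π * x := le_mul_of_one_le_left hx.le (by linarith [Real.pi_gt_three])
  rcases le_total 0 p with hp | hp
  · rw [min_eq_left hp, abs_of_nonneg hp, Real.rpow_zero, Real.rpow_zero, mul_one, one_mul,
      ← Real.mul_rpow hπ.le (by positivity)]
    exact Real.rpow_le_rpow (by positivity) (by linarith) hp
  · rw [min_eq_right hp, abs_of_nonpos hp, Real.rpow_neg hπ.le, ← Real.inv_rpow hπ.le,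
      ← Real.mul_rpow (by positivity) hr.le, ← Real.mul_rpow hd.le (by positivity),
      ← Real.mul_rpow (by positivity) (by positivity)]
    refine Real.rpow_le_rpow_of_nonpos (by positivity) ?_ hp
    rw [inv_mul_le_iff₀ hπ]
    calc d * (r + x) = d * r + d * x := by ring
      _ ≤ d * r * π + π * r * x :=
        add_le_add (le_mul_of_one_le_right (by positivity) (by linarith [Real.pi_gt_three]))
          (mul_le_mul_of_nonneg_right hdr hx.le)
      _ = π * ((d + x) * r) := by ring

lemma inv_sq_mul_rpow_neg_le (hd : 0 < d) (hr : 0 < r) (hx : 0 < x) (hy : 0 < y)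
    (hdr : d ≤ π * r) :
    (r ^ 2)⁻¹ * ((r + x) ^ (-p) * (r + y) ^ (-q)) ≤
      π ^ |p| * π ^ |q| * (d / r) ^ (2 + min 0 p + min 0 q) *
        (d * (d * ((d + x) ^ p * (d + y) ^ q)))⁻¹ := by
  have hp := add_rpow_mul_rpow_min_le (p := p) hd hr hx hdr
  have hq := add_rpow_mul_rpow_min_le (p := q) hd hr hy hdr
  have hpq := mul_le_mul hp hq (by positivity) (by positivity)
  rw [Real.div_rpow hd.le hr.le, Real.rpow_add hd, Real.rpow_add hd, Real.rpow_add hr,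
    Real.rpow_add hr, Real.rpow_two, Real.rpow_two, Real.rpow_neg (by positivity),
    Real.rpow_neg (by positivity), ← mul_inv, ← mul_inv, mul_div_assoc', ← div_eq_mul_inv, div_div,
    inv_eq_one_div, div_le_div_iff₀ (by positivity) (by positivity)]
  calc _ = d ^ 2 * r ^ 2 * ((d + x) ^ p * r ^ min 0 p * ((d + y) ^ q * r ^ min 0 q)) := by ring
    _ ≤ d ^ 2 * r ^ 2 * (π ^ |p| * (d ^ min 0 p * (r + x) ^ p) *
          (π ^ |q| * (d ^ min 0 q * (r + y) ^ q))) := by gcongr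
    _ = _ := by ring

/-- The power of `|θ - φ| / kernelScale t θ φ` gained when the pointwise bounds of the kernel are
compared with the measure `μ⁺_{α,β}` of the ball `B(θ, |θ - φ|)`. -/
def decayExponent (α β : ℝ) : ℝ := 2 + min 0 (2 * α + 1) + min 0 (2 * β + 1)

lemma decayExponent_pos (hα : -1 < α) (hβ : -1 < β) : 0 < decayExponent α β := by
  have hmin_α : -1 < min 0 (2 * α + 1) := lt_min (by norm_num) (by linarith)
  have hmin_β : -1 < min 0 (2 * β + 1) := lt_min (by norm_num) (by linarith)
  unfold decayExponent
  linarith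

theorem exists_inv_sq_mul_rpow_neg_le_div_ballMeasure (hα : -1 < α) (hβ : -1 < β) :
    ∃ C > 0, ∀ θ ∈ Ioo 0 π, ∀ d > 0, d < π → ∀ r > 0, d ≤ π * r →
      (r ^ 2)⁻¹ * ((r + θ) ^ (-(2 * α + 1)) * (r + (π - θ)) ^ (-(2 * β + 1))) ≤
        C / (d * (ballMeasure α β θ d).toReal) * (d / r) ^ decayExponent α β := by
  obtain ⟨C, hC, hball⟩ := exists_ballMeasure_le hα hβ
  refine ⟨π ^ |2 * α + 1| * π ^ |2 * β + 1| * C, by positivity, fun θ hθ d hd hdπ r hr hdr => ?_⟩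
  have hθ₀ := hθ.1
  have hθ' := (pi_sub_mem_Ioo hθ).1
  set A := (d + θ) ^ (2 * α + 1) * (d + (π - θ)) ^ (2 * β + 1)
  have : 0 < A := by positivity
  have hball_le := hball θ hθ d hd hdπ
  have hball_pos : 0 < (ballMeasure α β θ d).toReal :=
    ENNReal.toReal_pos (ballMeasure_pos hθ hd α β).ne'
      (ne_top_of_le_ne_top ENNReal.ofReal_ne_top hball_le)
  have hinv : (d * (d * A))⁻¹ ≤ C / (d * (ballMeasure α β θ d).toReal) := by
    rw [inv_eq_one_div, div_le_div_iff₀ (by positivity) (by positivity), one_mul, mul_left_comm]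
    exact mul_le_mul_of_nonneg_left (ENNReal.toReal_le_of_le_ofReal (by positivity) hball_le) hd.le
  calc _ ≤ π ^ |2 * α + 1| * π ^ |2 * β + 1| * (d / r) ^ decayExponent α β * (d * (d * A))⁻¹ :=
        inv_sq_mul_rpow_neg_le hd hr hθ₀ hθ' hdr
    _ ≤ π ^ |2 * α + 1| * π ^ |2 * β + 1| * (d / r) ^ decayExponent α β *
          (C / (d * (ballMeasure α β θ d).toReal)) := by gcongr
    _ = _ := by ring

lemma add_min_le_mul (hθ : θ ∈ Ioo 0 π) (hr : 0 < r) :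
    r + min θ (π - θ) ≤ (r + θ) * (r + (π - θ)) := by
  have hπ := Real.pi_gt_three
  obtain ⟨hθ₀, hθπ⟩ := hθ
  rcases le_total θ (π / 2) with h | h
  · exact (add_le_add_right (min_le_left _ _) r).trans
      (le_mul_of_one_le_right (by linarith) (by linarith))
  · exact (add_le_add_right (min_le_right _ _) r).trans
      (le_mul_of_one_le_left (by linarith) (by linarith))

lemma sin_le_min (hθ : θ ∈ Ioo 0 π) : Real.sin θ ≤ min θ (π - θ) :=
  le_min (Real.sin_le hθ.1.le) (Real.sin_pi_sub θ ▸ Real.sin_le (pi_sub_mem_Ioo hθ).1.le)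

lemma sin_le_five_mul (hθ : θ ∈ Ioo 0 π) (hr : 0 < r) (hdr : |θ - φ| ≤ π * r) :
    Real.sin φ ≤ 5 * ((r + θ) * (r + (π - θ))) := by
  have hprod := add_min_le_mul hθ hr
  have hsin := sin_le_min hθ
  have hmin : 0 < min θ (π - θ) := lt_min hθ.1 (pi_sub_mem_Ioo hθ).1
  have hlip : Real.sin φ - Real.sin θ ≤ |θ - φ| :=
    (le_abs_self _).trans (abs_sub_comm θ φ ▸ Real.abs_sin_sub_sin_le φ θ)
  have hπr : π * r ≤ 4 * r := mul_le_mul_of_nonneg_right Real.pi_lt_four.le hr.le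
  linarith

-- The weights `(sin θ)^γ₁ (sin φ)^γ₂` compensate the loss caused by replacing `α, β` with
-- `α + 1, β + 1` in the pointwise bounds.
lemma sin_pow_mul_sin_pow_mul_inv_le {S γ₁ γ₂ : ℕ} (hθ : θ ∈ Ioo 0 π) (hφ : φ ∈ Ioo 0 π)
    (hr : 0 < r) (hr₁ : r ≤ 1) (hdr : |θ - φ| ≤ π * r) (hγ : γ₁ + γ₂ ≤ 2)
    (hw : 1 + (S : ℝ) ≤ w + γ₁ + γ₂) :
    Real.sin θ ^ γ₁ * Real.sin φ ^ γ₂ * r⁻¹ ^ (S + 1) * (((r + θ) * (r + (π - θ))) ^ 2)⁻¹ ≤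
      5 ^ γ₂ * (r ^ (-w) * (r ^ 2)⁻¹) := by
  have hsin_φ := sin_le_five_mul hθ hr hdr
  have hmin : 0 < min θ (π - θ) := lt_min hθ.1 (pi_sub_mem_Ioo hθ).1
  have hprod := add_min_le_mul hθ hr
  set P := (r + θ) * (r + (π - θ))
  have hsin_θ : Real.sin θ ≤ P := by linarith [sin_le_min hθ]
  have hP : 0 < P := by linarith
  have hsin_θ₀ : 0 ≤ Real.sin θ := (Real.sin_pos_of_mem_Ioo hθ).le
  have hsin_φ₀ : 0 ≤ Real.sin φ := (Real.sin_pos_of_mem_Ioo hφ).le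
  obtain ⟨k, hk⟩ := Nat.exists_eq_add_of_le hγ
  have hcancel {s : ℝ} (hs : s ≠ 0) : s ^ (γ₁ + γ₂) * (s ^ 2)⁻¹ = (s ^ k)⁻¹ := by
    rw [hk, pow_add s (γ₁ + γ₂) k, mul_inv, mul_inv_cancel_left₀ (pow_ne_zero _ hs)]
  have hP_le : P ^ (γ₁ + γ₂) * (P ^ 2)⁻¹ ≤ r ^ (γ₁ + γ₂) * (r ^ 2)⁻¹ := by
    rw [hcancel hP.ne', hcancel hr.ne']
    gcongr
    linarith
  have hr_le : r ^ (γ₁ + γ₂) * r⁻¹ ^ (S + 1) ≤ r ^ (-w) := by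
    rw [inv_pow, ← Real.rpow_natCast, ← Real.rpow_natCast, ← Real.rpow_neg hr.le,
      ← Real.rpow_add hr]
    refine Real.rpow_le_rpow_of_exponent_ge hr hr₁ ?_
    push_cast
    linarith
  calc _ ≤ P ^ γ₁ * (5 * P) ^ γ₂ * r⁻¹ ^ (S + 1) * (P ^ 2)⁻¹ := by gcongr
    _ = 5 ^ γ₂ * (P ^ (γ₁ + γ₂) * (P ^ 2)⁻¹) * r⁻¹ ^ (S + 1) := by
        rw [mul_pow 5 P, pow_add]
        ring
    _ ≤ 5 ^ γ₂ * (r ^ (γ₁ + γ₂) * (r ^ 2)⁻¹) * r⁻¹ ^ (S + 1) := by gcongr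
    _ = 5 ^ γ₂ * (r ^ (γ₁ + γ₂) * r⁻¹ ^ (S + 1) * (r ^ 2)⁻¹) := by ring
    _ ≤ _ := by gcongr

lemma rpow_neg_two_mul_add_one_add_one {z : ℝ} (hz : 0 < z) (c : ℝ) :
    z ^ (-(2 * (c + 1) + 1)) = z ^ (-(2 * c + 1)) * (z ^ 2)⁻¹ := by
  rw [← Real.rpow_two, ← Real.rpow_neg hz.le, ← Real.rpow_add hz]
  congr 1
  ring

lemma sin_pow_mul_sin_pow_mul_inv_pow_mul_rpow_le {S γ₁ γ₂ : ℕ} (hθ : θ ∈ Ioo 0 π)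
    (hφ : φ ∈ Ioo 0 π) (hr : 0 < r) (hr₁ : r ≤ 1) (hdr : |θ - φ| ≤ π * r) (hγ : γ₁ + γ₂ ≤ 2)
    (hw : 1 + (S : ℝ) ≤ w + γ₁ + γ₂) (α β : ℝ) :
    Real.sin θ ^ γ₁ * Real.sin φ ^ γ₂ * (r⁻¹ ^ (S + 1) *
        ((r + θ) ^ (-(2 * (α + 1) + 1)) * (r + (π - θ)) ^ (-(2 * (β + 1) + 1)))) ≤
      5 ^ γ₂ * (r ^ (-w) * ((r ^ 2)⁻¹ *
        ((r + θ) ^ (-(2 * α + 1)) * (r + (π - θ)) ^ (-(2 * β + 1))))) := by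
  have hleft : 0 < r + θ := add_pos hr hθ.1
  have hright : 0 < r + (π - θ) := add_pos hr (pi_sub_mem_Ioo hθ).1
  rw [rpow_neg_two_mul_add_one_add_one hleft, rpow_neg_two_mul_add_one_add_one hright]
  set X := (r + θ) ^ (-(2 * α + 1))
  set Y := (r + (π - θ)) ^ (-(2 * β + 1))
  calc _ = X * Y * (Real.sin θ ^ γ₁ * Real.sin φ ^ γ₂ * r⁻¹ ^ (S + 1) *
        (((r + θ) * (r + (π - θ))) ^ 2)⁻¹) := by
        rw [mul_pow, mul_inv]
        ring
    _ ≤ X * Y * (5 ^ γ₂ * (r ^ (-w) * (r ^ 2)⁻¹)) :=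
        mul_le_mul_of_nonneg_left (sin_pow_mul_sin_pow_mul_inv_le hθ hφ hr hr₁ hdr hγ hw)
          (by positivity)
    _ = _ := by ring

end ScaleComparison

/-! ### Integration in time -/

section TimeNorm

variable {lam w e d t W P : ℝ}

/-- The measure `t^{W-1} dt` on `(0, ∞)`. -/
abbrev powerMeasure (W : ℝ) : Measure ℝ :=
  (volume.restrict (Ioi (0 : ℝ))).withDensity fun t => ENNReal.ofReal (t ^ (W - 1))

lemma ae_powerMeasure_of_forall_pos {Q : ℝ → Prop} (W : ℝ) (h : ∀ t > 0, Q t) :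
    ∀ᵐ t ∂powerMeasure W, Q t :=
  (withDensity_absolutelyContinuous _ _).ae_le ((ae_restrict_mem measurableSet_Ioi).mono h)

/-- The function of `t` that dominates the derivatives of the kernel at distance `d` from the
diagonal, with `min (t + d) 1` playing the role of `kernelScale t θ φ` for `|θ - φ| = d`. -/
def scaleMajorant (lam w e d t : ℝ) : ℝ :=
  Real.exp (-(t / 2 * lam)) * (min (t + d) 1 ^ (-w) * (d / min (t + d) 1) ^ e)

lemma min_add_one_pos (hd : 0 < d) (ht : 0 < t) : 0 < min (t + d) 1 :=
  lt_min (by positivity) one_pos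

lemma scaleMajorant_nonneg (hd : 0 < d) (ht : 0 < t) (lam w e : ℝ) :
    0 ≤ scaleMajorant lam w e d t := by
  have := min_add_one_pos hd ht
  unfold scaleMajorant
  positivity

lemma measurable_scaleMajorant (lam w e d : ℝ) : Measurable (scaleMajorant lam w e d) := by
  unfold scaleMajorant
  fun_prop

lemma le_pi_mul_min_add_one (hd : 0 < d) (hdπ : d < π) (ht : 0 < t) :
    d ≤ π * min (t + d) 1 := by
  rw [mul_min_of_nonneg _ _ Real.pi_pos.le, mul_one]
  refine le_min ?_ hdπ.le
  calc d ≤ t + d := by linarith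
    _ ≤ π * (t + d) := le_mul_of_one_le_left (by positivity) (by linarith [Real.pi_gt_three])

lemma scaleMajorant_rpow (hd : 0 < d) (ht : 0 < t) (hP : 0 < P) (lam W e : ℝ) :
    scaleMajorant lam (W / P) e d t ^ P =
      Real.exp (-(lam * P / 2 * t)) *
        (min (t + d) 1 ^ (-W) * (d / min (t + d) 1) ^ (e * P)) := by
  have hmin := min_add_one_pos hd ht
  rw [scaleMajorant, Real.mul_rpow (by positivity) (by positivity),
    Real.mul_rpow (by positivity) (by positivity), ← Real.rpow_mul hmin.le,
    ← Real.rpow_mul (by positivity), ← Real.exp_mul, neg_mul, neg_mul,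
    div_mul_cancel₀ W hP.ne']
  congr 2
  ring

lemma rpow_mul_scaleMajorant_rpow_le (hlam : 0 < lam) (hW : 1 ≤ W) (he : 0 < e) (hd : 0 < d)
    (hdπ : d < π) (ht : 0 < t) (hP : 0 < P) :
    t ^ (W - 1) * scaleMajorant lam (W / P) e d t ^ P ≤
      d ^ (e * P) * (t + d) ^ (-1 - e * P) +
        π ^ (e * P) * (t ^ (W - 1) * Real.exp (-(lam * P / 2 * t))) := by
  have hsum : 0 < t + d := by positivity
  have hexp : Real.exp (-(lam * P / 2 * t)) ≤ 1 :=
    Real.exp_le_one_iff.2 (neg_nonpos.2 (by positivity))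
  rw [scaleMajorant_rpow hd ht hP]
  rcases le_total (t + d) 1 with h | h
  · have hpow : t ^ (W - 1) ≤ (t + d) ^ (W - 1) :=
      Real.rpow_le_rpow ht.le (by linarith) (by linarith)
    have hexponents : (t + d) ^ (-1 - e * P) =
        (t + d) ^ (W - 1) * ((t + d) ^ (-W) * (t + d) ^ (-(e * P))) := by
      rw [← Real.rpow_add hsum, ← Real.rpow_add hsum]
      congr 1
      ring
    rw [min_eq_left h]
    calc _ ≤ (t + d) ^ (W - 1) * (1 * ((t + d) ^ (-W) * (d / (t + d)) ^ (e * P))) := by gcongr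
      _ = d ^ (e * P) * (t + d) ^ (-1 - e * P) := by
        rw [hexponents, Real.div_rpow hd.le hsum.le, Real.rpow_neg hsum.le (e * P)]
        ring
      _ ≤ _ := le_add_of_nonneg_right (by positivity)
  · rw [min_eq_right h, Real.one_rpow, div_one]
    calc _ = d ^ (e * P) * (t ^ (W - 1) * Real.exp (-(lam * P / 2 * t))) := by ring
      _ ≤ π ^ (e * P) * (t ^ (W - 1) * Real.exp (-(lam * P / 2 * t))) := by gcongr
      _ ≤ _ := le_add_of_nonneg_left (by positivity)

lemma lintegral_rpow_mul_add_rpow {η : ℝ} (hη : 0 < η) (hd : 0 < d) :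
    ∫⁻ t in Ioi (0 : ℝ), ENNReal.ofReal (d ^ η * (t + d) ^ (-1 - η)) =
      ENNReal.ofReal (1 / η) := by
  have hlt : -1 - η < -1 := by linarith
  have hint : IntegrableOn (fun t : ℝ => (t + d) ^ (-1 - η)) (Ioi 0) :=
    integrableOn_add_rpow_Ioi_of_lt hlt (by linarith)
  have hnonneg : 0 ≤ᵐ[volume.restrict (Ioi 0)] fun t : ℝ => d ^ η * (t + d) ^ (-1 - η) := by
    refine (ae_restrict_mem measurableSet_Ioi).mono fun t (ht : 0 < t) => ?_
    exact mul_nonneg (by positivity) (Real.rpow_nonneg (by positivity) _)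
  have hshift : ∫ t in Ioi (0 : ℝ), (t + d) ^ (-1 - η) = ∫ t in Ioi d, t ^ (-1 - η) := by
    rw [← (measurePreserving_add_right volume d).setIntegral_preimage_emb
      (measurableEmbedding_addRight d) (fun t : ℝ => t ^ (-1 - η)) (Ioi d), preimage_add_const_Ioi,
      sub_self]
  rw [← ofReal_integral_eq_lintegral_ofReal (hint.const_mul _) hnonneg, integral_const_mul, hshift,
    integral_Ioi_rpow_of_lt hlt hd, show -1 - η + 1 = -η by ring, neg_div_neg_eq, ← mul_div_assoc,
    ← Real.rpow_add hd, add_neg_cancel, Real.rpow_zero]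

lemma lintegral_rpow_mul_exp_neg_mul {b : ℝ} (hW : 0 < W) (hb : 0 < b) :
    ∫⁻ t in Ioi (0 : ℝ), ENNReal.ofReal (t ^ (W - 1) * Real.exp (-(b * t))) =
      ENNReal.ofReal ((1 / b) ^ W * Real.Gamma W) := by
  have hint : IntegrableOn (fun t : ℝ => t ^ (W - 1) * Real.exp (-(b * t))) (Ioi 0) := by
    simpa using integrableOn_rpow_mul_exp_neg_mul_rpow (s := W - 1) (by linarith) one_pos hb
  have hnonneg : 0 ≤ᵐ[volume.restrict (Ioi 0)] fun t : ℝ => t ^ (W - 1) * Real.exp (-(b * t)) := by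
    refine (ae_restrict_mem measurableSet_Ioi).mono fun t (ht : 0 < t) => ?_
    exact mul_nonneg (by positivity) (by positivity)
  rw [← ofReal_integral_eq_lintegral_ofReal hint hnonneg,
    Real.integral_rpow_mul_exp_neg_mul_Ioi hW hb]

lemma eLpNorm_top_scaleMajorant_le (hlam : 0 < lam) (he : 0 < e) (hd : 0 < d) (hdπ : d < π)
    (W : ℝ) : eLpNorm (scaleMajorant lam 0 e d) ∞ (powerMeasure W) ≤ ENNReal.ofReal (π ^ e) := by
  rw [eLpNorm_exponent_top]
  refine eLpNormEssSup_le_of_ae_bound (ae_powerMeasure_of_forall_pos W fun t ht => ?_)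
  have hmin := min_add_one_pos hd ht
  have hexp : Real.exp (-(t / 2 * lam)) ≤ 1 :=
    Real.exp_le_one_iff.2 (neg_nonpos.2 (by positivity))
  have hratio : d / min (t + d) 1 ≤ π := (div_le_iff₀ hmin).2 (le_pi_mul_min_add_one hd hdπ ht)
  rw [Real.norm_of_nonneg (scaleMajorant_nonneg hd ht _ _ _), scaleMajorant, neg_zero,
    Real.rpow_zero, one_mul, ← one_mul (π ^ e)]
  gcongr

lemma lintegral_enorm_scaleMajorant_rpow_le (hlam : 0 < lam) (hW : 1 ≤ W) (he : 0 < e)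
    (hd : 0 < d) (hdπ : d < π) (hP : 0 < P) :
    ∫⁻ t, ‖scaleMajorant lam (W / P) e d t‖ₑ ^ P ∂powerMeasure W ≤
      ENNReal.ofReal (1 / (e * P) + π ^ (e * P) * ((1 / (lam * P / 2)) ^ W * Real.Gamma W)) := by
  have hπ : 0 ≤ π ^ (e * P) := by positivity
  have := Real.Gamma_pos_of_pos (zero_lt_one.trans_le hW)
  have hmeas := measurable_scaleMajorant lam (W / P) e d
  rw [lintegral_withDensity_eq_lintegral_mul _ (by fun_prop) (by fun_prop)]
  calc _ ≤ ∫⁻ t in Ioi (0 : ℝ), (ENNReal.ofReal (d ^ (e * P) * (t + d) ^ (-1 - e * P)) +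
        ENNReal.ofReal (π ^ (e * P)) *
          ENNReal.ofReal (t ^ (W - 1) * Real.exp (-(lam * P / 2 * t)))) := by
        refine setLIntegral_mono' measurableSet_Ioi fun t (ht : 0 < t) => ?_
        have hnonneg := scaleMajorant_nonneg hd ht lam (W / P) e
        rw [Pi.mul_apply, Real.enorm_of_nonneg hnonneg,
          ENNReal.ofReal_rpow_of_nonneg hnonneg hP.le, ← ENNReal.ofReal_mul (by positivity),
          ← ENNReal.ofReal_mul hπ]
        exact (ENNReal.ofReal_le_ofReal
          (rpow_mul_scaleMajorant_rpow_le hlam hW he hd hdπ ht hP)).trans ENNReal.ofReal_add_le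
    _ = _ := by
        rw [lintegral_add_left (by fun_prop), lintegral_const_mul _ (by fun_prop),
          lintegral_rpow_mul_add_rpow (by positivity) hd,
          lintegral_rpow_mul_exp_neg_mul (by linarith) (by positivity), ← ENNReal.ofReal_mul hπ,
          ← ENNReal.ofReal_add (by positivity) (by positivity)]

theorem exists_eLpNorm_scaleMajorant_le (hlam : 0 < lam) (hW : 1 ≤ W) (he : 0 < e) {p : ℝ≥0∞}
    (hp : p ≠ 0) : ∃ C > 0, ∀ d > 0, d < π →
      eLpNorm (scaleMajorant lam (W / p.toReal) e d) p (powerMeasure W) ≤ ENNReal.ofReal C := by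
  rcases eq_or_ne p ∞ with rfl | hp_top
  · refine ⟨π ^ e, by positivity, fun d hd hdπ => ?_⟩
    rw [ENNReal.toReal_top, div_zero]
    exact eLpNorm_top_scaleMajorant_le hlam he hd hdπ W
  · have hP : 0 < p.toReal := ENNReal.toReal_pos hp hp_top
    have := Real.Gamma_pos_of_pos (zero_lt_one.trans_le hW)
    refine ⟨(1 / (e * p.toReal) + π ^ (e * p.toReal) *
      ((1 / (lam * p.toReal / 2)) ^ W * Real.Gamma W)) ^ (1 / p.toReal), by positivity,
      fun d hd hdπ => ?_⟩
    rw [eLpNorm_eq_lintegral_rpow_enorm_toReal hp hp_top,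
      ← ENNReal.ofReal_rpow_of_nonneg (by positivity) (by positivity)]
    gcongr
    exact lintegral_enorm_scaleMajorant_rpow_le hlam hW he hd hdπ hP

end TimeNorm

/-! ### The weighted derivatives of the kernel -/

section WeightedDerivatives

variable {α β : ℝ}

lemma abs_sub_lt_pi {θ φ : ℝ} (hθ : θ ∈ Ioo 0 π) (hφ : φ ∈ Ioo 0 π) : |θ - φ| < π :=
  abs_sub_lt_of_nonneg_of_lt hθ.1.le hθ.2 hφ.1.le hφ.2

theorem exists_sin_pow_mul_abs_iterate_deriv_jHker_le (hα : -1 < α) (hβ : -1 < β)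
    {M N L γ₁ γ₂ : ℕ} {w : ℝ} (hγ : γ₁ + γ₂ ≤ 2)
    (hw : 1 + ((M + N + L : ℕ) : ℝ) ≤ w + γ₁ + γ₂) :
    ∃ C > 0, ∀ θ ∈ Ioo 0 π, ∀ φ ∈ Ioo 0 π, θ ≠ φ → ∀ t > 0,
      Real.sin θ ^ γ₁ * Real.sin φ ^ γ₂ * |deriv^[L] (fun φ' => deriv^[N] (fun θ' =>
          deriv^[M] (fun s => jHker (α + 1) (β + 1) s θ' φ') t) θ) φ| ≤
        C / (|θ - φ| * (ballMeasure α β θ |θ - φ|).toReal) *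
          scaleMajorant (α + 1 + (β + 1) + 1) w (decayExponent α β) |θ - φ| t := by
  obtain ⟨K, hK, hderiv⟩ := exists_abs_iterate_deriv_jHker_le
    (a := α + 1) (b := β + 1) (by linarith) (by linarith) M N L
  obtain ⟨B, hB, hball⟩ := exists_inv_sq_mul_rpow_neg_le_div_ballMeasure hα hβ
  refine ⟨K * 5 ^ γ₂ * B, by positivity, fun θ hθ φ hφ hne t ht => ?_⟩
  have hd : 0 < |θ - φ| := abs_pos.2 (sub_ne_zero.2 hne)
  have hdr : |θ - φ| ≤ π * kernelScale t θ φ :=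
    le_pi_mul_min_add_one hd (abs_sub_lt_pi hθ hφ) ht
  have hr := kernelScale_pos ht θ φ
  have hsin : 0 ≤ Real.sin θ ^ γ₁ * Real.sin φ ^ γ₂ := mul_nonneg
    (pow_nonneg (Real.sin_pos_of_mem_Ioo hθ).le _) (pow_nonneg (Real.sin_pos_of_mem_Ioo hφ).le _)
  have hderiv_le := mul_le_mul_of_nonneg_left (hderiv t ht θ hθ φ hφ) hsin
  have hweight := sin_pow_mul_sin_pow_mul_inv_pow_mul_rpow_le hθ hφ hr (kernelScale_le_one t θ φ)
    hdr hγ hw α β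
  have hcompare := hball θ hθ |θ - φ| hd (abs_sub_lt_pi hθ hφ) _ hr hdr
  change _ ≤ _ * (_ * (kernelScale t θ φ ^ (-w) * (|θ - φ| / kernelScale t θ φ) ^ _))
  set r := kernelScale t θ φ
  set E := Real.exp (-(t / 2 * (α + 1 + (β + 1) + 1)))
  calc _ ≤ _ := hderiv_le
    _ = K * E * (Real.sin θ ^ γ₁ * Real.sin φ ^ γ₂ * (r⁻¹ ^ (M + N + L + 1) *
          ((r + θ) ^ (-(2 * (α + 1) + 1)) * (r + (π - θ)) ^ (-(2 * (β + 1) + 1))))) := by ring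
    _ ≤ K * E * (5 ^ γ₂ * (r ^ (-w) * (B / (|θ - φ| * (ballMeasure α β θ |θ - φ|).toReal) *
          (|θ - φ| / r) ^ decayExponent α β))) := by
        refine mul_le_mul_of_nonneg_left (hweight.trans ?_) (by positivity)
        gcongr
    _ = _ := by ring

lemma ofReal_mul_eLpNorm_le_of_ae_le_mul {Ω : Type*} [MeasurableSpace Ω] {μ : Measure Ω}
    {f g : Ω → ℝ} {s c : ℝ} (hs : 0 ≤ s) (h : ∀ᵐ x ∂μ, s * |f x| ≤ c * g x) (hc : 0 ≤ c)
    (p : ℝ≥0∞) :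
    ENNReal.ofReal s * eLpNorm f p μ ≤ ENNReal.ofReal c * eLpNorm g p μ := by
  rw [← Real.enorm_of_nonneg hs, ← eLpNorm_const_smul]
  refine eLpNorm_le_mul_eLpNorm_of_ae_le_mul (h.mono fun x hx => ?_) p
  rw [Pi.smul_apply, norm_smul, Real.norm_of_nonneg hs]
  exact hx.trans (mul_le_mul_of_nonneg_left (le_abs_self _) hc)

end WeightedDerivatives

end JacobiPoisson

open JacobiPoisson

theorem kernel_smoothness_estimate_general (α β : ℝ) (hα : -1 < α) (hβ : -1 < β)
    (M N L γ₁ γ₂ : ℕ) (hγ : γ₁ + γ₂ ≤ 2) (W : ℝ) (hW : 1 ≤ W) (p : ℝ≥0∞) (hp : p ≠ 0)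
    (hcond : 1 ≤ W / p.toReal + γ₁ + γ₂ - L - N - M) :
    ∃ C : ℝ, 0 < C ∧ ∀ θ ∈ Ioo (0 : ℝ) π, ∀ φ ∈ Ioo (0 : ℝ) π, θ ≠ φ →
      ENNReal.ofReal (Real.sin θ ^ γ₁ * Real.sin φ ^ γ₂) *
          eLpNorm (fun t => deriv^[L] (fun φ' => deriv^[N] (fun θ' =>
              deriv^[M] (fun s => jHker (α + 1) (β + 1) s θ' φ') t) θ) φ) p
            ((volume.restrict (Ioi (0 : ℝ))).withDensity fun t =>
              ENNReal.ofReal (t ^ (W - 1))) ≤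
        ENNReal.ofReal (C / (|θ - φ| * (ballMeasure α β θ |θ - φ|).toReal)) := by
  obtain ⟨K, hK, hpointwise⟩ := exists_sin_pow_mul_abs_iterate_deriv_jHker_le hα hβ
    (M := M) (N := N) (L := L) hγ (w := W / p.toReal) (by push_cast; linarith)
  obtain ⟨J, hJ, hnorm⟩ := exists_eLpNorm_scaleMajorant_le
    (lam := α + 1 + (β + 1) + 1) (by linarith) hW (decayExponent_pos hα hβ) hp
  refine ⟨K * J, by positivity, fun θ hθ φ hφ hne => ?_⟩
  have hsin : 0 ≤ Real.sin θ ^ γ₁ * Real.sin φ ^ γ₂ := mul_nonneg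
    (pow_nonneg (Real.sin_pos_of_mem_Ioo hθ).le _) (pow_nonneg (Real.sin_pos_of_mem_Ioo hφ).le _)
  have hdominated := ofReal_mul_eLpNorm_le_of_ae_le_mul hsin
    (ae_powerMeasure_of_forall_pos W (hpointwise θ hθ φ hφ hne)) (by positivity) p
  have hmajorant := hnorm |θ - φ| (abs_pos.2 (sub_ne_zero.2 hne)) (abs_sub_lt_pi hθ hφ)
  refine (hdominated.trans (mul_le_mul_right hmajorant _)).trans_eq ?_
  rw [← ENNReal.ofReal_mul (by positivity), div_mul_eq_mul_div]

/-- Theorem (smoothness-type estimate, Lemma 4.7 of the paper): weighted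
`L^p((0,∞), t^{W−1}dt)` bounds of mixed derivatives of `H_t^{α+1,β+1}` against
`1/(|θ−φ| μ⁺_{α,β}(B(θ,|θ−φ|)))`. -/
theorem kernel_smoothness_estimate (α β : ℝ) (hα : -1 < α) (hβ : -1 < β)
    (M N L γ₁ γ₂ : ℕ) (hL : L ≤ 1) (hγ₁ : γ₁ ≤ 1) (hγ₂ : γ₂ ≤ 1)
    (W : ℝ) (hW : 1 ≤ W) (p : ℝ≥0∞) (hp : 1 ≤ p)
    (hcond : 1 ≤ W / p.toReal + γ₁ + γ₂ - L - N - M) :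
    ∃ C : ℝ, 0 < C ∧ ∀ θ ∈ Ioo (0 : ℝ) π, ∀ φ ∈ Ioo (0 : ℝ) π, θ ≠ φ →
      ENNReal.ofReal (Real.sin θ ^ γ₁ * Real.sin φ ^ γ₂) *
          eLpNorm (fun t => deriv^[L] (fun φ' => deriv^[N] (fun θ' =>
              deriv^[M] (fun s => jHker (α + 1) (β + 1) s θ' φ') t) θ) φ) p
            ((volume.restrict (Ioi (0 : ℝ))).withDensity fun t =>
              ENNReal.ofReal (t ^ (W - 1))) ≤
        ENNReal.ofReal (C / (|θ - φ| * (ballMeasure α β θ |θ - φ|).toReal)) :=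
  kernel_smoothness_estimate_general α β hα hβ M N L γ₁ γ₂ (add_le_add hγ₁ hγ₂) W hW p
    (zero_lt_one.trans_le hp).ne' hcond

end
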